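/- Let m be an even positive integer and let s₁ and s₂ be integers coprime to m. Let F ∈ ℤ[x] be a polynomial of degree k > 0 with positive leading coefficient, and suppose there is an integer n₀ such that F(n₀) is even and F(n₀) ≡ s₁ + s₂ (mod m). Then there are infinitely many pairs of primes (p₁, p₂) with p₁ ≡ s₁ (mod m) and p₂ ≡ s₂ (mod m) such that p₁ + p₂ = F(n) for some integer n; equivalently, for every M there exist primes p₁, p₂ > M with p₁ ≡ s₁ (mod m), p₂ ≡ s₂ (mod m) and an integer n with p₁ + p₂ = F(n). -/

import Mathlib

/-!
The proof is a circle method modulo a highly divisible `N`. Composing `F` with `m X² + n₀`, we may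
assume `deg F ≥ 2` and `F'(n₀) > 0`. A `W`-trick then writes `pᵢ = bᵢ + V xᵢ`, where `V` absorbs `m`
and the primes up to a constant `w`, and turns `p₁ + p₂ = F(n)` into `x₁ + x₂ = G(t)` for a
polynomial `G` which acts as a translation modulo small primes, so that its exponential sums at
frequencies near `a / q` are negligible unless `q = 1` or `q > w`.

Compare the exponential sum over `H` consecutive values of `G` with its model, in which the mass at
each value is spread evenly up to the next value. If `x₁ + x₂` is never a value of `G`, the model
alone must account for all pairs `(x₁, x₂)`, so the difference of the two, integrated against the
exponential sums over the `xᵢ`, is large. By the inverse form of Weyl's inequality, this difference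
is at most `2H / 2ⁱ` except at frequencies near fractions with denominators in `(w, 2 ^ (iC)]`. On
these arcs the arithmetic large sieve bounds the mean square of the exponential sum over the primes
with a loss of only `Q! / φ(Q!) ≪ (log Q)⁸` for denominators up to `Q`, and the sum of
`(iC)⁸ / 2ⁱ` over the dyadic scales beyond `w` is small once `w` is large.

The argument tolerates the loss of constant factors, so instead of the prime number theorem in
progressions it needs only blocks `[u, u + Y)` in which the `x` with `b + V x` prime have at least a
constant times the expected density. These come from the simple pole behind Dirichlet's theorem by
Karamata's Tauberian argument.
-/

open Finset Polynomial
open scoped FourierTransform ComplexConjugate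

/-! ### The additive character `𝐞 x = exp (2πix)` -/

lemma fourierChar_intCast (n : ℤ) : 𝐞 (n : ℝ) = 1 := by
  ext
  rw [Real.fourierChar_apply, Circle.coe_one, Complex.exp_eq_one_iff]
  exact ⟨n, by push_cast; ring⟩

lemma fourierChar_add_intCast (x : ℝ) (n : ℤ) : 𝐞 (x + n) = 𝐞 x := by
  rw [AddChar.map_add_eq_mul, fourierChar_intCast, mul_one]

lemma coe_fourierChar_neg (x : ℝ) : (𝐞 (-x) : ℂ) = conj (𝐞 x : ℂ) := by
  rw [AddChar.map_neg_eq_inv, Circle.coe_inv_eq_conj]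

lemma norm_fourierChar_sub_one (x : ℝ) : ‖(𝐞 x : ℂ) - 1‖ = 2 * |Real.sin (Real.pi * x)| := by
  rw [Real.fourierChar_apply, mul_comm _ Complex.I, Complex.norm_exp_I_mul_ofReal_sub_one,
    norm_mul, Real.norm_two, Real.norm_eq_abs, mul_assoc, mul_div_cancel_left₀ _ two_ne_zero]

lemma norm_fourierChar_sub_le (x y : ℝ) : ‖(𝐞 x : ℂ) - 𝐞 y‖ ≤ 2 * Real.pi * |x - y| := by
  have hfactor : (𝐞 x : ℂ) - 𝐞 y = 𝐞 y * (𝐞 (x - y) - 1) := by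
    rw [mul_sub, ← Circle.coe_mul, ← AddChar.map_add_eq_mul, add_sub_cancel, mul_one]
  rw [hfactor, norm_mul, Circle.norm_coe, one_mul, norm_fourierChar_sub_one, mul_assoc]
  gcongr
  calc |Real.sin (Real.pi * (x - y))| ≤ |Real.pi * (x - y)| := Real.abs_sin_le_abs
    _ = Real.pi * |x - y| := by rw [abs_mul, abs_of_pos Real.pi_pos]

lemma four_mul_abs_le_norm_fourierChar_sub_one {x : ℝ} (hx : |x| ≤ 1 / 2) :
    4 * |x| ≤ ‖(𝐞 x : ℂ) - 1‖ := by
  have habs : |Real.pi * x| = Real.pi * |x| := by rw [abs_mul, abs_of_pos Real.pi_pos]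
  have hjordan : 2 / Real.pi * |Real.pi * x| ≤ |Real.sin (Real.pi * x)| :=
    Real.mul_abs_le_abs_sin (by rw [habs]; nlinarith [Real.pi_pos])
  rw [norm_fourierChar_sub_one]
  calc 4 * |x| = 2 * (2 / Real.pi * |Real.pi * x|) := by
        rw [habs, ← mul_assoc (2 / Real.pi), div_mul_cancel₀ _ Real.pi_ne_zero]; ring
    _ ≤ _ := by gcongr

lemma fourierChar_eq_one_iff {x : ℝ} : 𝐞 x = 1 ↔ ∃ n : ℤ, x = n := by
  refine ⟨fun h ↦ ?_, fun ⟨n, hn⟩ ↦ hn ▸ fourierChar_intCast n⟩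
  have hx : x = (x - round x) + round x := by ring
  have hlower := four_mul_abs_le_norm_fourierChar_sub_one (abs_sub_round x)
  rw [hx, fourierChar_add_intCast] at h
  rw [h, Circle.coe_one, sub_self, norm_zero] at hlower
  exact ⟨round x, sub_eq_zero.mp (abs_eq_zero.mp (by linarith [abs_nonneg (x - round x)]))⟩

lemma coe_fourierChar_mul_natCast (x : ℝ) (n : ℕ) : (𝐞 (x * n) : ℂ) = (𝐞 x : ℂ) ^ n := by
  rw [mul_comm, ← nsmul_eq_mul, AddChar.map_nsmul_eq_pow, Circle.coe_pow]

lemma norm_sum_fourierChar_linear_mul_abs_sub_round_le (c θ : ℝ) (H : ℕ) :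
    ‖∑ s ∈ range H, (𝐞 (c + θ * s) : ℂ)‖ * |θ - round θ| ≤ 1 / 2 := by
  set y := θ - round θ with hy
  have hterm (s : ℕ) : (𝐞 (c + θ * s) : ℂ) = 𝐞 c * (𝐞 y : ℂ) ^ s := by
    have : c + θ * s = c + y * s + ((round θ * s : ℤ) : ℝ) := by rw [hy]; push_cast; ring
    rw [this, fourierChar_add_intCast, AddChar.map_add_eq_mul, Circle.coe_mul,
      coe_fourierChar_mul_natCast]
  have hgeom : ‖∑ s ∈ range H, (𝐞 y : ℂ) ^ s‖ * ‖(𝐞 y : ℂ) - 1‖ ≤ 2 := by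
    rw [← norm_mul, geom_sum_mul]
    calc ‖(𝐞 y : ℂ) ^ H - 1‖ ≤ ‖(𝐞 y : ℂ) ^ H‖ + ‖(1 : ℂ)‖ := norm_sub_le _ _
      _ = 2 := by rw [norm_pow, Circle.norm_coe, one_pow, norm_one]; norm_num
  simp_rw [hterm]
  rw [← mul_sum, norm_mul, Circle.norm_coe, one_mul]
  nlinarith [norm_nonneg (∑ s ∈ range H, (𝐞 y : ℂ) ^ s),
    four_mul_abs_le_norm_fourierChar_sub_one (abs_sub_round θ)]

/-! ### Weyl sums -/

lemma sum_mul_conj_sum_eq (z : ℕ → ℂ) (H : ℕ) :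
    (∑ s ∈ range H, z s) * conj (∑ s ∈ range H, z s) =
      (∑ s ∈ range H, ∑ t ∈ range (s + 1), z s * conj (z t)) +
        conj (∑ s ∈ range H, ∑ t ∈ range (s + 1), z s * conj (z t)) -
        ∑ s ∈ range H, z s * conj (z s) := by
  induction H with
  | zero => simp
  | succ n ih =>
    have hlast : ∑ t ∈ range (n + 1), z n * conj (z t) =
        z n * conj (∑ s ∈ range n, z s) + z n * conj (z n) := by
      rw [← mul_sum, sum_range_succ, map_sum, mul_add]
    rw [sum_range_succ z, sum_range_succ (fun s ↦ ∑ t ∈ range (s + 1), z s * conj (z t)), hlast,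
      sum_range_succ (fun s ↦ z s * conj (z s))]
    simp only [map_add, map_mul, Complex.conj_conj]
    linear_combination ih

theorem norm_sum_sq_le_two_mul_sum_norm_sum_mul_conj (z : ℕ → ℂ) (H : ℕ) :
    ‖∑ s ∈ range H, z s‖ ^ 2 ≤
      2 * ∑ h ∈ range H, ‖∑ s ∈ range (H - h), z (s + h) * conj (z s)‖ := by
  set T : ℂ := ∑ s ∈ range H, ∑ t ∈ range (s + 1), z s * conj (z t) with hT
  have hsq : ‖∑ s ∈ range H, z s‖ ^ 2 ≤ 2 * ‖T‖ := by
    have hexpand := congrArg Complex.re (sum_mul_conj_sum_eq z H)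
    rw [Complex.mul_conj, Complex.normSq_eq_norm_sq, ← hT] at hexpand
    simp only [Complex.ofReal_re, Complex.sub_re, Complex.add_re, Complex.conj_re] at hexpand
    have hdiag : 0 ≤ (∑ s ∈ range H, z s * conj (z s)).re := by
      rw [Complex.re_sum]
      refine sum_nonneg fun s _ ↦ ?_
      rw [Complex.mul_conj, Complex.ofReal_re]
      exact Complex.normSq_nonneg _
    linarith [Complex.re_le_norm T]
  have hreindex : T = ∑ h ∈ range H, ∑ s ∈ range (H - h), z (s + h) * conj (z s) := by
    rw [← sum_range_diag_flip H (fun h s ↦ z (s + h) * conj (z s)), hT]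
    refine sum_congr rfl fun s _ ↦ ?_
    rw [← sum_range_reflect]
    refine sum_congr rfl fun t ht ↦ ?_
    have : s - t + t = s := Nat.sub_add_cancel (Nat.le_of_lt_succ (mem_range.mp ht))
    rw [Nat.add_sub_cancel, this]
  calc ‖∑ s ∈ range H, z s‖ ^ 2 ≤ 2 * ‖T‖ := hsq
    _ ≤ _ := by rw [hreindex]; gcongr; exact norm_sum_le _ _

section Taylor

variable {R : Type*} [CommRing R] {g : R[X]} {k : ℕ}

lemma natDegree_taylor_sub_self_le (hg : g.natDegree ≤ k + 1) (h : R) :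
    (taylor h g - g).natDegree ≤ k := by
  refine natDegree_le_iff_coeff_eq_zero.mpr fun N hN ↦ ?_
  rw [coeff_sub, taylor_coeff]
  have hconst : hasseDeriv N g = C (g.coeff N) := by
    ext n
    rw [hasseDeriv_coeff, coeff_C]
    split_ifs with hn
    · simp [hn]
    · rw [coeff_eq_zero_of_natDegree_lt (by omega), mul_zero]
  rw [hconst, eval_C, sub_self]

lemma coeff_taylor_sub_self (hg : g.natDegree ≤ k + 1) (h : R) :
    (taylor h g - g).coeff k = (k + 1) * h * g.coeff (k + 1) := by
  have hlinear : hasseDeriv k g = C (g.coeff k) + C ((k + 1) * g.coeff (k + 1)) * X := by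
    ext n
    rw [hasseDeriv_coeff, coeff_add, coeff_C, coeff_C_mul, coeff_X]
    rcases n with _ | _ | n
    · simp
    · simp [add_comm 1 k]
    · rw [coeff_eq_zero_of_natDegree_lt (by omega)]; simp
  rw [coeff_sub, taylor_coeff, hlinear]
  simp only [eval_add, eval_mul, eval_C, eval_X]
  ring

end Taylor

lemma exists_mem_card_le_succ {B : Finset ℕ} (hB : B.Nonempty) : ∃ h ∈ B, #B ≤ h + 1 :=
  ⟨B.max' hB, B.max'_mem hB, by
    simpa using card_le_card fun h hh ↦ mem_range.mpr (Nat.lt_succ_of_le (B.le_max' h hh))⟩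

lemma card_le_of_abs_mul_sub_mul_le {a : ℤ} {d H R : ℕ} (hcop : IsCoprime a d)
    {B : Finset ℕ} (hB : B ⊆ range H) {c : ℕ → ℤ} (hc : ∀ h ∈ B, |h * a - d * c h| ≤ R) :
    #B ≤ (H / d + 1) * (2 * R + 1) := by
  have hcard : #(range (H / d + 1) ×ˢ Icc (-(R : ℤ)) R) = (H / d + 1) * (2 * R + 1) := by
    rw [card_product, card_range, Int.card_Icc]
    congr 1
    omega
  rw [← hcard]
  refine card_le_card_of_injOn (fun h ↦ (h / d, (h * a - d * c h : ℤ))) (fun h hh ↦ ?_) ?_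
  · simp only [coe_product, Set.mem_prod, mem_coe, mem_range, mem_Icc]
    exact ⟨Nat.lt_succ_of_le (Nat.div_le_div_right (mem_range.mp (hB hh)).le), abs_le.mp (hc h hh)⟩
  · intro h _ h' _ heq
    obtain ⟨hquot, hres⟩ := Prod.mk.inj heq
    have hdvd : (d : ℤ) ∣ (h - h') * a := ⟨c h - c h', by linarith⟩
    have hmod : h % d = h' % d := (Int.natCast_modEq_iff.mp
      (Int.modEq_iff_dvd.mpr (hcop.symm.dvd_of_dvd_mul_right hdvd))).symm
    rw [← Nat.div_add_mod h d, ← Nat.div_add_mod h' d, hquot, hmod]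

lemma exists_rat_den_le_and_abs_sub_mul_le (φ : ℝ) {H : ℕ} (hH : 0 < H) :
    ∃ r : ℚ, (r.den : ℝ) ≤ 2 * H ∧ |φ - r| * (2 * H * r.den) ≤ 1 := by
  obtain ⟨r, hr, hden⟩ := Real.exists_rat_abs_sub_le_and_den_le φ (n := 2 * H) (by omega)
  refine ⟨r, by exact_mod_cast hden, ?_⟩
  have hpos : (0 : ℝ) < r.den := by exact_mod_cast r.den_pos
  rw [le_div_iff₀ (by positivity)] at hr
  refine le_trans ?_ hr
  push_cast
  gcongr
  linarith

section Recurrence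

variable {φ ε T : ℝ} {H : ℕ} {B : Finset ℕ}

lemma abs_mul_num_sub_den_mul_le {r : ℚ} (hr : |φ - r| * (2 * H * r.den) ≤ 1) {h : ℕ}
    (hh : h ≤ H) {a : ℤ} (ha : |h * φ - a| ≤ ε) :
    |((h * r.num - r.den * a : ℤ) : ℝ)| ≤ r.den * ε + 1 / 2 := by
  have hpos : (0 : ℝ) < r.den := by exact_mod_cast r.den_pos
  have hsplit : ((h * r.num - r.den * a : ℤ) : ℝ) = r.den * ((h * φ - a) - h * (φ - r)) := by
    rw [Rat.cast_def r]; push_cast; field_simp; ring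
  rw [hsplit, abs_mul, abs_of_pos hpos]
  have htriangle : |h * φ - a - h * (φ - r)| ≤ ε + H * |φ - r| := by
    refine (abs_sub _ _).trans ?_
    rw [abs_mul, Nat.abs_cast]
    gcongr
  nlinarith

lemma den_le_of_recurrence {r : ℚ} (hr : |φ - r| * (2 * H * r.den) ≤ 1)
    (hden : (r.den : ℝ) ≤ 2 * H) (hB : B ⊆ range H) (hcard : H ≤ T * #B) (hH : 0 < H)
    (hT : 0 < T) (hε : 0 ≤ ε) (hεT : 24 * ε * T < 1) {a : ℕ → ℤ}
    (ha : ∀ h ∈ B, |h * φ - a h| ≤ ε) : r.den ≤ 12 * T := by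
  have hpos : (0 : ℝ) < r.den := by exact_mod_cast r.den_pos
  have hHpos : (0 : ℝ) < H := by exact_mod_cast hH
  have hcount := card_le_of_abs_mul_sub_mul_le (Int.isCoprime_iff_gcd_eq_one.mpr r.reduced) hB
    (c := a) (R := ⌊r.den * ε + 1 / 2⌋₊) fun h hh ↦ by
      have := abs_mul_num_sub_den_mul_le hr (mem_range.mp (hB hh)).le (ha h hh)
      rw [Int.abs_eq_natAbs, Nat.cast_le]
      exact Nat.le_floor (by rw [Nat.cast_natAbs]; push_cast at this ⊢; exact this)
  have hcount' : (#B : ℝ) ≤ 3 * H / r.den * (2 * (r.den * ε + 1 / 2) + 1) := by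
    calc (#B : ℝ) ≤ ((H / r.den : ℕ) + 1) * (2 * ⌊r.den * ε + 1 / 2⌋₊ + 1) := by
          exact_mod_cast hcount
      _ ≤ (H / r.den + 1) * (2 * (r.den * ε + 1 / 2) + 1) := by
          gcongr
          exacts [Nat.cast_div_le, Nat.floor_le (by positivity)]
      _ ≤ _ := by
          gcongr
          rw [div_add_one hpos.ne']
          gcongr
          linarith
  have hprod : H * 1 ≤ H * (T * (6 * ε + 6 / r.den)) := by
    calc (H : ℝ) * 1 ≤ T * #B := by linarith
      _ ≤ T * (3 * H / r.den * (2 * (r.den * ε + 1 / 2) + 1)) := by gcongr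
      _ = _ := by field_simp; ring
  have hone : 1 - 6 * ε * T ≤ 6 * T / r.den := by
    have := le_of_mul_le_mul_left hprod hHpos
    linarith [show T * (6 * ε + 6 / r.den) = 6 * ε * T + 6 * T / r.den by ring]
  have hhalf : 1 / 2 ≤ 6 * T / r.den := by linarith
  rw [le_div_iff₀ hpos] at hhalf
  linarith

/-- Vinogradov's lemma. -/
theorem exists_approx_of_recurrence (hB : B ⊆ range H) (hcard : H ≤ T * #B) (hT : 0 < T)
    (hTH : 2 * T ≤ H) (hεT : 24 * ε * T < 1) (happrox : ∀ h ∈ B, ∃ a : ℤ, |h * φ - a| ≤ ε) :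
    ∃ q : ℕ, ∃ a : ℤ, 1 ≤ q ∧ q ≤ 12 * T ∧ |q * φ - a| * H ≤ 24 * ε * T ^ 2 := by
  choose! a ha using happrox
  have hHpos : (0 : ℝ) < H := by linarith
  have hH : 0 < H := by exact_mod_cast hHpos
  have htwo : (2 : ℝ) ≤ #B := le_of_mul_le_mul_left (by linarith) hT
  obtain ⟨h, hh, hlarge⟩ := exists_mem_card_le_succ (B := B)
    (card_pos.mp (by exact_mod_cast two_pos.trans_le htwo))
  have hε : 0 ≤ ε := (abs_nonneg _).trans (ha h hh)
  obtain ⟨r, hden, hr⟩ := exists_rat_den_le_and_abs_sub_mul_le φ hH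
  have hpos : (0 : ℝ) < r.den := by exact_mod_cast r.den_pos
  have hdenT := den_le_of_recurrence hr hden hB hcard hH hT hε hεT ha
  have hexact : h * r.num - r.den * a h = 0 := by
    rw [← Int.abs_lt_one_iff]
    have := abs_mul_num_sub_den_mul_le hr (mem_range.mp (hB hh)).le (ha h hh)
    have hlt : |((h * r.num - r.den * a h : ℤ) : ℝ)| < 1 := by nlinarith
    exact_mod_cast hlt
  have hβ : h * |φ - r| ≤ ε := by
    have hcast : (h : ℝ) * r.num = r.den * a h := by exact_mod_cast sub_eq_zero.mp hexact
    have : h * φ - a h = h * (φ - r) := by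
      rw [Rat.cast_def r, mul_sub, mul_div_assoc', hcast, mul_div_cancel_left₀ _ hpos.ne']
    rw [← Nat.abs_cast h, ← abs_mul, ← this]
    exact ha h hh
  have hlarge' : (H : ℝ) ≤ 2 * T * h := by
    have : (#B : ℝ) ≤ h + 1 := by exact_mod_cast hlarge
    nlinarith
  refine ⟨r.den, r.num, r.den_pos, hdenT, ?_⟩
  have hfactor : (r.den : ℝ) * φ - r.num = r.den * (φ - r) := by
    rw [Rat.cast_def r]; field_simp
  rw [hfactor, abs_mul, abs_of_pos hpos]
  calc r.den * |φ - r| * H ≤ 12 * T * |φ - r| * (2 * T * h) := by gcongr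
    _ = 24 * T ^ 2 * (h * |φ - r|) := by ring
    _ ≤ 24 * T ^ 2 * ε := by gcongr
    _ = _ := by ring

end Recurrence

section Pigeonhole

variable {ι : Type*} {s : Finset ι}

lemma card_mul_le_card_filter_mul {f : ι → ℝ} {t X : ℝ} (hX : 0 ≤ X) (hf : ∀ i ∈ s, f i ≤ X)
    (hsum : 2 * (#s * t) ≤ ∑ i ∈ s, f i) : #s * t ≤ #{i ∈ s | t ≤ f i} * X := by
  have hsplit : ∑ i ∈ s, f i ≤ #{i ∈ s | t ≤ f i} * X + #{i ∈ s | ¬ t ≤ f i} * t := by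
    rw [← sum_filter_add_sum_filter_not s (fun i ↦ t ≤ f i), ← nsmul_eq_mul, ← nsmul_eq_mul]
    exact add_le_add (sum_le_card_nsmul _ _ _ fun i hi ↦ hf i (mem_filter.mp hi).1)
      (sum_le_card_nsmul _ _ _ fun i hi ↦ (not_le.mp (mem_filter.mp hi).2).le)
  rcases le_total t 0 with ht | ht
  · exact (mul_nonpos_of_nonneg_of_nonpos (by positivity) ht).trans (by positivity)
  · have : (#{i ∈ s | ¬ t ≤ f i} : ℝ) * t ≤ #s * t := by gcongr; exact filter_subset _ _
    linarith

lemma exists_card_le_mul_card_fiber (hs : s.Nonempty) {q : ι → ℕ} {X : ℝ}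
    (hq : ∀ i ∈ s, 1 ≤ q i ∧ (q i : ℝ) ≤ X) :
    ∃ n : ℕ, 1 ≤ n ∧ n ≤ X ∧ #s ≤ X * #{i ∈ s | q i = n} := by
  have hmaps : ∀ i ∈ s, q i ∈ Icc 1 ⌊X⌋₊ := fun i hi ↦
    mem_Icc.mpr ⟨(hq i hi).1, Nat.le_floor (hq i hi).2⟩
  obtain ⟨i₀, hi₀⟩ := hs
  have hX : 0 ≤ X := (Nat.cast_nonneg _).trans (hq i₀ hi₀).2
  have hpos : 0 < ⌊X⌋₊ := (mem_Icc.mp (hmaps i₀ hi₀)).1.trans (mem_Icc.mp (hmaps i₀ hi₀)).2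
  have hne : (⌊X⌋₊ : ℝ) ≠ 0 := by positivity
  obtain ⟨n, hn, hcard⟩ := exists_le_card_fiber_of_nsmul_le_card_of_maps_to
    (b := (#s : ℝ) / ⌊X⌋₊) hmaps ⟨_, hmaps i₀ hi₀⟩
    (by rw [Nat.card_Icc, Nat.add_sub_cancel, nsmul_eq_mul, mul_div_cancel₀ _ hne])
  rw [mem_Icc] at hn
  rw [div_le_iff₀ (by positivity)] at hcard
  refine ⟨n, hn.1, (Nat.cast_le.mpr hn.2).trans (Nat.floor_le hX), hcard.trans ?_⟩
  rw [mul_comm]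
  gcongr
  exact Nat.floor_le hX

end Pigeonhole

/-- The Weyl sum of a real polynomial over the first `H` natural numbers. -/
noncomputable def weylSum (g : ℝ[X]) (H : ℕ) : ℂ := ∑ s ∈ range H, (𝐞 (g.eval (s : ℝ)) : ℂ)

lemma norm_weylSum_le (g : ℝ[X]) (H : ℕ) : ‖weylSum g H‖ ≤ H := by
  refine (norm_sum_le _ _).trans_eq ?_
  simp_rw [Circle.norm_coe, sum_const, card_range, nsmul_eq_mul, mul_one]

lemma norm_weylSum_sq_le (g : ℝ[X]) (H : ℕ) :
    ‖weylSum g H‖ ^ 2 ≤ 2 * ∑ h ∈ range H, ‖weylSum (taylor (h : ℝ) g - g) (H - h)‖ := by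
  refine (norm_sum_sq_le_two_mul_sum_norm_sum_mul_conj _ H).trans_eq ?_
  simp only [weylSum, ← coe_fourierChar_neg, ← Circle.coe_mul, ← AddChar.map_add_eq_mul, eval_sub,
    taylor_eval, Nat.cast_add, ← sub_eq_add_neg]

/-- The shifts `h < H` at which the Weyl sum of the difference polynomial `g(x + h) - g(x)` has size
at least `H / D ^ 4`. -/
noncomputable def popularShifts (g : ℝ[X]) (H : ℕ) (D : ℝ) : Finset ℕ :=
  (range H).filter fun h ↦ H / D ^ 4 ≤ ‖weylSum (taylor (h : ℝ) g - g) (H - h)‖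

/-- The inverse form of Weyl's inequality in degree `k` with exponent `C`: a Weyl sum of length `H`
and size at least `H / D` forces the degree `k` coefficient to be within `D ^ C / H ^ k` of a
rational number with denominator at most `D ^ C` (the error being multiplied by the denominator). -/
def WeylInverse (k C : ℕ) : Prop :=
  ∀ g : ℝ[X], g.natDegree ≤ k → ∀ (H : ℕ) (D : ℝ), 1 ≤ H → 2 ≤ D → H ≤ D * ‖weylSum g H‖ →
    ∃ q : ℕ, ∃ a : ℤ, 1 ≤ q ∧ q ≤ D ^ C ∧ |q * g.coeff k - a| * H ^ k ≤ D ^ C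

lemma weylInverse_one : WeylInverse 1 1 := by
  intro g hg H D _ hD hS
  refine ⟨1, round (g.coeff 1), le_rfl, by push_cast; linarith, ?_⟩
  have hsum : weylSum g H = ∑ s ∈ range H, (𝐞 (g.coeff 0 + g.coeff 1 * s) : ℂ) := by
    refine sum_congr rfl fun s _ ↦ ?_
    conv_lhs => rw [eq_X_add_C_of_natDegree_le_one hg]
    simp [add_comm]
  rw [hsum] at hS
  rw [Nat.cast_one, one_mul, pow_one, pow_one]
  calc |g.coeff 1 - round (g.coeff 1)| * H
      ≤ |g.coeff 1 - round (g.coeff 1)| *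
          (D * ‖∑ s ∈ range H, (𝐞 (g.coeff 0 + g.coeff 1 * s) : ℂ)‖) := by gcongr
    _ = D * (‖∑ s ∈ range H, (𝐞 (g.coeff 0 + g.coeff 1 * s) : ℂ)‖ *
          |g.coeff 1 - round (g.coeff 1)|) := by ring
    _ ≤ D * (1 / 2) := by
        gcongr
        exact norm_sum_fourierChar_linear_mul_abs_sub_round_le _ _ _
    _ ≤ D := by linarith

section WeylStep

variable {k C H : ℕ} {g : ℝ[X]} {D : ℝ}

lemma le_pow_mul_card_popularShifts (hH : 1 ≤ H) (hD : 2 ≤ D) (hS : H ≤ D * ‖weylSum g H‖) :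
    H ≤ D ^ 4 * #(popularShifts g H D) := by
  have hHpos : (0 : ℝ) < H := by exact_mod_cast hH
  have hDsq : 4 ≤ D ^ 2 := by nlinarith
  have hsum : (H : ℝ) ^ 2 ≤
      2 * D ^ 2 * ∑ h ∈ range H, ‖weylSum (taylor (h : ℝ) g - g) (H - h)‖ := by
    calc (H : ℝ) ^ 2 ≤ (D * ‖weylSum g H‖) ^ 2 := by gcongr
      _ = D ^ 2 * ‖weylSum g H‖ ^ 2 := by ring
      _ ≤ D ^ 2 * (2 * ∑ h ∈ range H, ‖weylSum (taylor (h : ℝ) g - g) (H - h)‖) := by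
          gcongr; exact norm_weylSum_sq_le g H
      _ = _ := by ring
  have hpopular := card_mul_le_card_filter_mul (s := range H) (t := H / D ^ 4) hHpos.le
    (fun h _ ↦ (norm_weylSum_le (taylor (h : ℝ) g - g) _).trans
      (Nat.cast_le.mpr (Nat.sub_le H h))) (by
      rw [card_range]
      calc 2 * (H * (H / D ^ 4)) = 2 * (H : ℝ) ^ 2 / D ^ 4 := by ring
        _ ≤ 2 * (2 * D ^ 2 * ∑ h ∈ range H, ‖weylSum (taylor (h : ℝ) g - g) (H - h)‖) / D ^ 4 := by
            gcongr
        _ = 4 / D ^ 2 * ∑ h ∈ range H, ‖weylSum (taylor (h : ℝ) g - g) (H - h)‖ := by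
            field_simp; ring
        _ ≤ 1 * ∑ h ∈ range H, ‖weylSum (taylor (h : ℝ) g - g) (H - h)‖ := by
            gcongr; rw [div_le_one (by positivity)]; exact hDsq
        _ = _ := one_mul _)
  rw [card_range, mul_comm, mul_le_mul_iff_left₀ hHpos, div_le_iff₀ (by positivity)] at hpopular
  rwa [mul_comm]

lemma WeylInverse.exists_approx_of_le_weylSum_taylor_sub (hC : WeylInverse k C)
    (hg : g.natDegree ≤ k + 1) (hD : 2 ≤ D) {h : ℕ} (hh : h < H)
    (hS : H / D ^ 4 ≤ ‖weylSum (taylor (h : ℝ) g - g) (H - h)‖) :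
    ∃ q : ℕ, ∃ a : ℤ, 1 ≤ q ∧ q ≤ D ^ (4 * C) ∧
      |q * ((k + 1) * h * g.coeff (k + 1)) - a| * H ^ k ≤ D ^ (4 * C + 4 * k) := by
  rw [div_le_iff₀' (by positivity)] at hS
  have hsub : ((H - h : ℕ) : ℝ) ≤ H := by exact_mod_cast Nat.sub_le H h
  obtain ⟨q, a, hq, hqle, happrox⟩ := hC _ (natDegree_taylor_sub_self_le hg (h : ℝ)) (H - h) (D ^ 4)
    (by omega) (by nlinarith [pow_le_pow_left₀ zero_le_two hD 4]) (hsub.trans hS)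
  rw [coeff_taylor_sub_self hg] at happrox
  rw [← pow_mul] at hqle happrox
  refine ⟨q, a, hq, hqle, ?_⟩
  set δ := |q * ((k + 1) * h * g.coeff (k + 1)) - a|
  calc δ * H ^ k ≤ δ * (D ^ 4 * (H - h : ℕ)) ^ k := by
        gcongr
        exact hS.trans (by gcongr; exact norm_weylSum_le _ _)
    _ = (δ * (H - h : ℕ) ^ k) * D ^ (4 * k) := by rw [mul_pow, ← pow_mul]; ring
    _ ≤ D ^ (4 * C) * D ^ (4 * k) := by gcongr
    _ = _ := (pow_add _ _ _).symm

lemma WeylInverse.exists_recurrence (hC : WeylInverse k C) (hg : g.natDegree ≤ k + 1) (hH : 1 ≤ H)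
    (hD : 2 ≤ D) (hS : H ≤ D * ‖weylSum g H‖) :
    ∃ q : ℕ, 1 ≤ q ∧ q ≤ D ^ (4 * C) ∧ ∃ B ⊆ range H, H ≤ D ^ (4 * C + 4) * #B ∧
      ∀ h ∈ B, ∃ a : ℤ,
        |h * (q * (k + 1) * g.coeff (k + 1)) - a| ≤ D ^ (4 * C + 4 * k) / H ^ k := by
  have hHpos : (0 : ℝ) < H := by exact_mod_cast hH
  have hcard := le_pow_mul_card_popularShifts hH hD hS
  set B := popularShifts g H D
  have hB : B.Nonempty := by
    rw [nonempty_iff_ne_empty]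
    rintro h
    rw [h, card_empty, Nat.cast_zero, mul_zero] at hcard
    linarith
  have hstep : ∀ h ∈ B, ∃ q : ℕ, ∃ a : ℤ, 1 ≤ q ∧ q ≤ D ^ (4 * C) ∧
      |q * ((k + 1) * h * g.coeff (k + 1)) - a| * H ^ k ≤ D ^ (4 * C + 4 * k) := fun h hh ↦
    hC.exists_approx_of_le_weylSum_taylor_sub hg hD (mem_range.mp (mem_filter.mp hh).1)
      (mem_filter.mp hh).2
  choose! q a hq hqle ha using hstep
  obtain ⟨n, hn, hnle, hfiber⟩ := exists_card_le_mul_card_fiber hB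
    fun h hh ↦ ⟨hq h hh, hqle h hh⟩
  refine ⟨n, hn, hnle, {h ∈ B | q h = n}, (filter_subset _ _).trans (filter_subset _ _), ?_, ?_⟩
  · calc (H : ℝ) ≤ D ^ 4 * #B := hcard
      _ ≤ D ^ 4 * (D ^ (4 * C) * #{h ∈ B | q h = n}) := by gcongr
      _ = _ := by rw [pow_add]; ring
  · rintro h hh
    obtain ⟨hhB, rfl⟩ := mem_filter.mp hh
    refine ⟨a h, ?_⟩
    rw [le_div_iff₀ (by positivity)]
    rw [show (h : ℝ) * (q h * (k + 1) * g.coeff (k + 1)) = q h * ((k + 1) * h * g.coeff (k + 1)) by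
      ring]
    exact ha h hhB

lemma WeylInverse.exists_approx_of_pow_lt (hC : WeylInverse k C) (hk : 1 ≤ k)
    (hg : g.natDegree ≤ k + 1) (hH : 1 ≤ H) (hD : 2 ≤ D) (hS : H ≤ D * ‖weylSum g H‖)
    (hlarge : D ^ (8 * C + 4 * k + 12) < H) :
    ∃ q : ℕ, ∃ a : ℤ, 1 ≤ q ∧ q ≤ D ^ (12 * C + 4 * k + 13) ∧
      |q * g.coeff (k + 1) - a| * H ^ (k + 1) ≤ D ^ (12 * C + 4 * k + 13) := by
  have : (0 : ℝ) < H := by exact_mod_cast hH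
  have hD1 : 1 ≤ D := by linarith
  have hD5 : (24 : ℝ) ≤ D ^ 5 := le_trans (by norm_num) (pow_le_pow_left₀ zero_le_two hD 5)
  have hHk : (H : ℝ) ≤ H ^ k := le_self_pow₀ (by exact_mod_cast hH) (by omega)
  obtain ⟨q, hq, hqle, B, hB, hcard, hrec⟩ := hC.exists_recurrence hg hH hD hS
  obtain ⟨q', a, hq', hq'le, ha⟩ := exists_approx_of_recurrence hB hcard (by positivity)
    (by
      calc 2 * D ^ (4 * C + 4) ≤ D * D ^ (4 * C + 4) := by gcongr
        _ = D ^ (4 * C + 5) := by ring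
        _ ≤ D ^ (8 * C + 4 * k + 12) := pow_le_pow_right₀ hD1 (by omega)
        _ ≤ H := hlarge.le)
    (by
      rw [← mul_div_assoc, div_mul_eq_mul_div, div_lt_one (by positivity)]
      calc 24 * D ^ (4 * C + 4 * k) * D ^ (4 * C + 4)
          ≤ D ^ 5 * D ^ (4 * C + 4 * k) * D ^ (4 * C + 4) := by gcongr
        _ = D ^ (8 * C + 4 * k + 9) := by ring
        _ ≤ D ^ (8 * C + 4 * k + 12) := pow_le_pow_right₀ hD1 (by omega)
        _ < H ^ k := hlarge.trans_le hHk) hrec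
  have hk1 : (k : ℝ) + 1 ≤ D ^ k := by
    calc (k : ℝ) + 1 ≤ 2 ^ k := by exact_mod_cast (Nat.lt_two_pow_self : k < 2 ^ k)
      _ ≤ D ^ k := by gcongr
  refine ⟨q' * (q * (k + 1)), a, Nat.mul_pos hq' (Nat.mul_pos hq k.succ_pos), ?_, ?_⟩
  · push_cast
    calc (q' : ℝ) * (q * (k + 1)) ≤ (D ^ 5 * D ^ (4 * C + 4)) * (D ^ (4 * C) * D ^ k) := by
          gcongr; exact hq'le.trans (by gcongr; linarith)
      _ = D ^ (8 * C + k + 9) := by ring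
      _ ≤ _ := pow_le_pow_right₀ hD1 (by omega)
  · have hassoc : ((q' * (q * (k + 1)) : ℕ) : ℝ) * g.coeff (k + 1) =
        q' * (q * (k + 1) * g.coeff (k + 1)) := by push_cast; ring
    rw [hassoc, pow_succ', ← mul_assoc]
    refine (mul_le_mul_of_nonneg_right ha (by positivity)).trans ?_
    calc 24 * (D ^ (4 * C + 4 * k) / H ^ k) * (D ^ (4 * C + 4)) ^ 2 * H ^ k
        = 24 * D ^ (4 * C + 4 * k) * (D ^ (4 * C + 4)) ^ 2 := by field_simp
      _ ≤ D ^ 5 * D ^ (4 * C + 4 * k) * (D ^ (4 * C + 4)) ^ 2 := by gcongr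
      _ = D ^ (12 * C + 4 * k + 13) := by ring

end WeylStep

lemma WeylInverse.succ {k C : ℕ} (hC : WeylInverse k C) (hk : 1 ≤ k) :
    WeylInverse (k + 1) ((8 * C + 4 * k + 12) * (k + 1) + (12 * C + 4 * k + 13)) := by
  intro g hg H D hH hD hS
  have hD1 : 1 ≤ D := by linarith
  rcases le_or_gt (H : ℝ) (D ^ (8 * C + 4 * k + 12)) with hsmall | hlarge
  · refine ⟨1, round (g.coeff (k + 1)), le_rfl, by exact_mod_cast one_le_pow₀ hD1, ?_⟩
    rw [Nat.cast_one, one_mul]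
    calc |g.coeff (k + 1) - round (g.coeff (k + 1))| * H ^ (k + 1)
        ≤ 1 * (D ^ (8 * C + 4 * k + 12)) ^ (k + 1) := by
          gcongr
          exact (abs_sub_round _).trans (by norm_num)
      _ = D ^ ((8 * C + 4 * k + 12) * (k + 1)) := by rw [one_mul, ← pow_mul]
      _ ≤ _ := pow_le_pow_right₀ hD1 (by omega)
  · obtain ⟨q, a, hq, hqle, ha⟩ := hC.exists_approx_of_pow_lt hk hg hH hD hS hlarge
    have hexp := pow_le_pow_right₀ hD1 (Nat.le_add_left (12 * C + 4 * k + 13)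
      ((8 * C + 4 * k + 12) * (k + 1)))
    exact ⟨q, a, hq, hqle.trans hexp, ha.trans hexp⟩

theorem exists_weylInverse {k : ℕ} (hk : 1 ≤ k) : ∃ C, WeylInverse k C := by
  induction k, hk using Nat.le_induction with
  | base => exact ⟨1, weylInverse_one⟩
  | succ k hk ih =>
    obtain ⟨C, hC⟩ := ih
    exact ⟨_, hC.succ hk⟩

/-! ### Exponential sums over finite sets -/

lemma sum_fourierChar_div_mul {N : ℕ} (hN : 0 < N) (n : ℤ) :
    ∑ r ∈ range N, (𝐞 (r / N * n) : ℂ) = if (N : ℤ) ∣ n then (N : ℂ) else 0 := by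
  have hN0 : (N : ℝ) ≠ 0 := by positivity
  have hpow (r : ℕ) : (𝐞 (r / N * n) : ℂ) = (𝐞 (n / N) : ℂ) ^ r := by
    rw [← coe_fourierChar_mul_natCast, div_mul_comm, mul_comm_div]
  have hone : (𝐞 (n / N : ℝ)) = 1 ↔ (N : ℤ) ∣ n := by
    refine fourierChar_eq_one_iff.trans (exists_congr fun m ↦ ?_)
    rw [div_eq_iff hN0, mul_comm]
    exact_mod_cast Iff.rfl
  simp_rw [hpow]
  split_ifs with h
  · rw [hone.mpr h]
    simp
  · have hne : (𝐞 (n / N) : ℂ) ≠ 1 := fun h' ↦ h (hone.mp (Circle.ext h'))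
    rw [geom_sum_eq hne, ← coe_fourierChar_mul_natCast, div_mul_cancel₀ _ hN0,
      fourierChar_intCast, Circle.coe_one, sub_self, zero_div]

/-- The exponential sum over a finite set of natural numbers, the Fourier transform of its
indicator function. -/
noncomputable def expSum (A : Finset ℕ) (α : ℝ) : ℂ := ∑ x ∈ A, (𝐞 (α * x) : ℂ)

lemma expSum_add_intCast (A : Finset ℕ) (α : ℝ) (n : ℤ) : expSum A (α + n) = expSum A α := by
  refine sum_congr rfl fun x _ ↦ ?_
  rw [show (α + n) * x = α * x + ((n * x : ℤ) : ℝ) by push_cast; ring, fourierChar_add_intCast]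

lemma ofReal_norm_expSum_sq (A : Finset ℕ) (α : ℝ) :
    ((‖expSum A α‖ ^ 2 : ℝ) : ℂ) = ∑ x ∈ A, ∑ y ∈ A, (𝐞 (α * ((x - y : ℤ) : ℝ)) : ℂ) := by
  rw [← Complex.normSq_eq_norm_sq, ← Complex.mul_conj, expSum, map_sum, sum_mul_sum]
  refine sum_congr rfl fun x _ ↦ sum_congr rfl fun y _ ↦ ?_
  rw [← coe_fourierChar_neg, ← Circle.coe_mul, ← AddChar.map_add_eq_mul]
  congr 3
  push_cast
  ring

lemma sum_norm_expSum_sq {A : Finset ℕ} {N u : ℕ} (hN : 0 < N) (hA : A ⊆ Ico u (u + N)) :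
    ∑ r ∈ range N, ‖expSum A (r / N)‖ ^ 2 = N * #A := by
  have hdiag (x : ℕ) (hx : x ∈ A) :
      ∑ y ∈ A, ∑ r ∈ range N, (𝐞 (r / N * ((x - y : ℤ) : ℝ)) : ℂ) = N := by
    simp_rw [sum_fourierChar_div_mul hN]
    rw [sum_eq_single_of_mem x hx, if_pos (by simp)]
    intro y hy hne
    refine if_neg fun hdvd ↦ hne ?_
    have hx' := mem_Ico.mp (hA hx)
    have hy' := mem_Ico.mp (hA hy)
    have := Int.eq_zero_of_abs_lt_dvd hdvd (by rw [abs_lt]; omega)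
    omega
  have hcomplex : ((∑ r ∈ range N, ‖expSum A (r / N)‖ ^ 2 : ℝ) : ℂ) = N * #A := by
    calc ((∑ r ∈ range N, ‖expSum A (r / N)‖ ^ 2 : ℝ) : ℂ)
        = ∑ r ∈ range N, ∑ x ∈ A, ∑ y ∈ A, (𝐞 (r / N * ((x - y : ℤ) : ℝ)) : ℂ) := by
          rw [Complex.ofReal_sum]
          exact sum_congr rfl fun r _ ↦ ofReal_norm_expSum_sq A _
      _ = ∑ x ∈ A, ∑ y ∈ A, ∑ r ∈ range N, (𝐞 (r / N * ((x - y : ℤ) : ℝ)) : ℂ) := by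
          rw [sum_comm]
          exact sum_congr rfl fun x _ ↦ sum_comm
      _ = N * #A := by rw [sum_congr rfl hdiag, sum_const, nsmul_eq_mul, mul_comm]
  exact_mod_cast hcomplex

/-! ### The arithmetic large sieve on major arcs -/

/-- The residues modulo `l` coprime to `l`, represented in `[0, l)`. -/
def reducedResidues (l : ℕ) : Finset ℕ := {j ∈ range l | l.Coprime j}

lemma card_reducedResidues (l : ℕ) : #(reducedResidues l) = l.totient :=
  (Nat.totient_eq_card_coprime l).symm

lemma sum_nthRootsFinset_one {l : ℕ} (hl : 0 < l) :
    ∑ z ∈ nthRootsFinset l (1 : ℂ), z = if l = 1 then 1 else 0 := by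
  have hζ := Complex.isPrimitiveRoot_exp l hl.ne'
  have hpow : ∑ z ∈ nthRootsFinset l (1 : ℂ), z =
      ∑ i ∈ range l, Complex.exp (2 * Real.pi * Complex.I / l) ^ i := by
    refine (sum_bij (fun i _ ↦ _ ^ i) (fun i _ ↦ ?_) (fun i hi j hj ↦ ?_) (fun z hz ↦ ?_)
      fun _ _ ↦ rfl).symm
    · rw [mem_nthRootsFinset hl, pow_right_comm, hζ.pow_eq_one, one_pow]
    · exact hζ.pow_inj (mem_range.mp hi) (mem_range.mp hj)
    · have : NeZero l := ⟨hl.ne'⟩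
      obtain ⟨i, hi, hz⟩ := hζ.eq_pow_of_pow_eq_one ((mem_nthRootsFinset hl _).mp hz)
      exact ⟨i, mem_range.mpr hi, hz⟩
  rw [hpow]
  split_ifs with h
  · subst h
    simp
  · exact hζ.geom_sum_eq_zero (by omega)

lemma sum_primitiveRoots {l : ℕ} (hl : 0 < l) :
    ∑ z ∈ primitiveRoots l ℂ, z = (ArithmeticFunction.moebius l : ℂ) := by
  have hdivisors : ∀ n > 0, ∑ d ∈ n.divisors, ∑ z ∈ primitiveRoots d ℂ, z =
      if n = 1 then 1 else 0 := by
    intro n hn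
    have : NeZero n := ⟨hn.ne'⟩
    rw [← sum_nthRootsFinset_one hn, IsPrimitiveRoot.nthRoots_one_eq_biUnion_primitiveRoots,
      sum_biUnion fun _ _ _ _ hne ↦ IsPrimitiveRoot.disjoint hne]
  rw [← ArithmeticFunction.sum_eq_iff_sum_mul_moebius_eq.mp hdivisors l hl,
    sum_eq_single_of_mem (l, 1) (by simp [hl.ne'])]
  · simp
  · rintro ⟨d, e⟩ hde hne
    rw [Nat.mem_divisorsAntidiagonal] at hde
    have : e ≠ 1 := by
      rintro rfl
      exact hne (by rw [← hde.1, mul_one])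
    simp [this]

lemma sum_reducedResidues_pow {R : Type*} [CommRing R] [IsDomain R] {ζ : R} {l : ℕ}
    (hl : 0 < l) (hζ : IsPrimitiveRoot ζ l) :
    ∑ j ∈ reducedResidues l, ζ ^ j = ∑ z ∈ primitiveRoots l R, z := by
  have : NeZero l := ⟨hl.ne'⟩
  refine sum_bij (fun j _ ↦ ζ ^ j) (fun j hj ↦ ?_) (fun i hi j hj ↦ ?_) (fun z hz ↦ ?_)
    fun _ _ ↦ rfl
  · exact (mem_primitiveRoots hl).mpr (hζ.pow_of_coprime j (mem_filter.mp hj).2.symm)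
  · exact hζ.pow_inj (mem_range.mp (mem_filter.mp hi).1) (mem_range.mp (mem_filter.mp hj).1)
  · obtain ⟨j, hj, hcop, hz⟩ := hζ.isPrimitiveRoot_iff.mp ((mem_primitiveRoots hl).mp hz)
    exact ⟨j, mem_filter.mpr ⟨mem_range.mpr hj, hcop.symm⟩, hz⟩

lemma sum_reducedResidues_fourierChar {l n : ℕ} (hl : 0 < l) (hn : n.Coprime l) :
    ∑ j ∈ reducedResidues l, (𝐞 (j / l * n) : ℂ) = ArithmeticFunction.moebius l := by
  have hζ : IsPrimitiveRoot (𝐞 (n / l) : ℂ) l := by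
    rw [Real.fourierChar_apply]
    convert Complex.isPrimitiveRoot_exp_of_coprime n l hl.ne' hn using 2
    push_cast
    ring
  rw [← sum_primitiveRoots hl, ← sum_reducedResidues_pow hl hζ]
  refine sum_congr rfl fun j _ ↦ ?_
  rw [← coe_fourierChar_mul_natCast, div_mul_comm, mul_comm_div]

-- The Ramanujan sum detects that `A` avoids the residue class `-u` modulo each prime factor of `l`.
lemma norm_expSum_sq_le_totient_mul {A : Finset ℕ} {l u : ℕ} (hl : Squarefree l)
    (hA : ∀ x ∈ A, (x + u).Coprime l) (α : ℝ) :
    ‖expSum A α‖ ^ 2 ≤ l.totient * ∑ j ∈ reducedResidues l, ‖expSum A (α + j / l)‖ ^ 2 := by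
  have hramanujan : (ArithmeticFunction.moebius l : ℂ) * expSum A α =
      ∑ j ∈ reducedResidues l, (𝐞 (j / l * u) : ℂ) * expSum A (α + j / l) := by
    simp_rw [expSum, mul_sum]
    rw [sum_comm]
    refine sum_congr rfl fun x hx ↦ ?_
    rw [← sum_reducedResidues_fourierChar hl.ne_zero.bot_lt (hA x hx), sum_mul]
    refine sum_congr rfl fun j _ ↦ ?_
    simp_rw [← Circle.coe_mul, ← AddChar.map_add_eq_mul]
    congr 2
    push_cast
    ring
  have hmoebius : ‖(ArithmeticFunction.moebius l : ℂ)‖ = 1 := by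
    rw [Complex.norm_intCast]
    exact_mod_cast ArithmeticFunction.abs_moebius_eq_one_of_squarefree hl
  have hnorm : ‖expSum A α‖ ≤ ∑ j ∈ reducedResidues l, ‖expSum A (α + j / l)‖ := by
    calc ‖expSum A α‖ = ‖(ArithmeticFunction.moebius l : ℂ) * expSum A α‖ := by
          rw [norm_mul, hmoebius, one_mul]
      _ ≤ ∑ j ∈ reducedResidues l, ‖(𝐞 (j / l * u) : ℂ) * expSum A (α + j / l)‖ := by
          rw [hramanujan]
          exact norm_sum_le _ _
      _ = _ := by simp_rw [norm_mul, Circle.norm_coe, one_mul]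
  rw [← card_reducedResidues]
  exact (pow_le_pow_left₀ (norm_nonneg _) hnorm 2).trans sq_sum_le_card_mul_sum_sq

/-- The point `x` lies on a major arc: within `τ` of a fraction with denominator at most `Q`. -/
def NearRational (Q : ℕ) (τ x : ℝ) : Prop :=
  ∃ q : ℕ, ∃ a : ℤ, 1 ≤ q ∧ q ≤ Q ∧ |x - a / q| ≤ τ

lemma dvd_of_fraction_eq {b k j j' l l' : ℤ} (hj : IsCoprime l j) (hk : IsCoprime l k)
    (h : b * (l * l') + k * (j * l' - j' * l) = 0) : l ∣ l' :=
  (hk.mul_right hj).dvd_of_dvd_mul_left ⟨k * j' - b * l', by linear_combination h⟩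

lemma eq_of_fraction_eq {b : ℤ} {k j j' l l' : ℕ} (hj : j ∈ reducedResidues l)
    (hj' : j' ∈ reducedResidues l') (hk : k.Coprime l) (hk' : k.Coprime l')
    (h : b * (l * l') + k * (j * l' - j' * l : ℤ) = 0) : l = l' ∧ j = j' := by
  obtain ⟨hjl, hjcop⟩ := mem_filter.mp hj
  obtain ⟨hjl', hjcop'⟩ := mem_filter.mp hj'
  rw [mem_range] at hjl hjl'
  have hdvd : (l : ℤ) ∣ l' := dvd_of_fraction_eq (Nat.isCoprime_iff_coprime.mpr hjcop)
    (Nat.isCoprime_iff_coprime.mpr hk.symm) h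
  have hdvd' : (l' : ℤ) ∣ l := dvd_of_fraction_eq (b := -b) (j' := (j : ℤ))
    (Nat.isCoprime_iff_coprime.mpr hjcop') (Nat.isCoprime_iff_coprime.mpr hk'.symm)
    (by linear_combination -h)
  obtain rfl : l = l' := Nat.dvd_antisymm (by exact_mod_cast hdvd) (by exact_mod_cast hdvd')
  have hl : (l : ℤ) ≠ 0 := by omega
  have hdvd_sub : (l : ℤ) ∣ k * (j - j') :=
    ⟨-b, mul_left_cancel₀ hl (by linear_combination h)⟩
  have hzero := Int.eq_zero_of_abs_lt_dvd
    ((Nat.isCoprime_iff_coprime.mpr hk.symm).dvd_of_dvd_mul_left hdvd_sub) (by rw [abs_lt]; omega)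
  exact ⟨rfl, by omega⟩

section LargeSieve

variable {Q L : ℕ} {τ : ℝ}

-- Translates of major arcs by reduced fractions with distinct denominators coprime to `Q!` are
-- disjoint modulo one.
lemma NearRational.eq_of_add_div_sub_add_div {x x' : ℝ} {l l' j j' : ℕ} {m : ℤ}
    (hτ : 2 * τ * (Q ^ 2 * L ^ 2) < 1) (hx : NearRational Q τ x) (hx' : NearRational Q τ x')
    (hlL : l ≤ L) (hlL' : l' ≤ L) (hQ : Q.factorial.Coprime l) (hQ' : Q.factorial.Coprime l')
    (hj : j ∈ reducedResidues l) (hj' : j' ∈ reducedResidues l')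
    (hm : x + j / l - (x' + j' / l') = m) : l = l' ∧ j = j' := by
  obtain ⟨q, a, hq, hqQ, ha⟩ := hx
  obtain ⟨q', a', hq', hqQ', ha'⟩ := hx'
  have hl : 0 < l := by have := mem_range.mp (mem_filter.mp hj).1; omega
  have hl' : 0 < l' := by have := mem_range.mp (mem_filter.mp hj').1; omega
  have hcoprime {n : ℕ} (h : Q.factorial.Coprime n) : (q * q').Coprime n :=
    .mul_left (h.of_dvd_left (Nat.dvd_factorial hq hqQ))
      (h.of_dvd_left (Nat.dvd_factorial hq' hqQ'))
  refine eq_of_fraction_eq (b := a * q' - a' * q - m * (q * q')) hj hj' (hcoprime hQ) (hcoprime hQ')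
    (Int.abs_lt_one_iff.mp ?_)
  have hclose : |(a : ℝ) / q + j / l - (a' / q' + j' / l') - m| ≤ 2 * τ := by
    calc |(a : ℝ) / q + j / l - (a' / q' + j' / l') - m| = |(x' - a' / q') - (x - a / q)| := by
          rw [← hm]
          ring_nf
      _ ≤ 2 * τ := (abs_sub _ _).trans (by linarith)
  have hτ0 : 0 ≤ 2 * τ := (abs_nonneg _).trans hclose
  rw [← Int.cast_lt (R := ℝ), Int.cast_abs]
  calc |(((a * q' - a' * q - m * (q * q')) * (l * l') +
        (q * q' : ℕ) * (j * l' - j' * l : ℤ) : ℤ) : ℝ)|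
      = |(a : ℝ) / q + j / l - (a' / q' + j' / l') - m| * ((q * q') * (l * l')) := by
        rw [← abs_of_pos (show (0 : ℝ) < (q * q') * (l * l') by positivity), ← abs_mul]
        congr 1
        push_cast
        field_simp
        ring
    _ ≤ 2 * τ * ((Q * Q) * (L * L)) := by gcongr
    _ < (1 : ℤ) := by rw [Int.cast_one]; linarith

lemma expSum_div_add_div (A : Finset ℕ) {N l : ℕ} (hN : 0 < N) (hlN : l ∣ N) (r j : ℕ) :
    expSum A (r / N + j / l) = expSum A (((r + j * (N / l)) % N : ℕ) / N) := by
  have hl : 0 < l := Nat.pos_of_dvd_of_pos hlN hN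
  have hcast : ((N / l : ℕ) : ℝ) = N / l := Nat.cast_div hlN (by positivity)
  have hmod : ((r + j * (N / l) : ℕ) : ℝ) =
      N * ((r + j * (N / l)) / N : ℕ) + ((r + j * (N / l)) % N : ℕ) := by
    exact_mod_cast (Nat.div_add_mod _ _).symm
  rw [← expSum_add_intCast A (((r + j * (N / l)) % N : ℕ) / N) ((r + j * (N / l)) / N : ℕ),
    Int.cast_natCast]
  congr 1
  rw [← mul_right_inj' (show (N : ℝ) ≠ 0 by positivity)]
  rw [mul_add, mul_add, mul_div_cancel₀ _ (by positivity), mul_div_cancel₀ _ (by positivity),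
    add_comm (_ % _ : ℕ).cast, ← hmod, Nat.cast_add, Nat.cast_mul, hcast]
  ring

lemma injOn_translate_of_nearRational {N : ℕ} {M S : Finset ℕ} (hN : 0 < N)
    (hτ : 2 * τ * (Q ^ 2 * L ^ 2) < 1) (hM : M ⊆ range N)
    (hMQ : ∀ r ∈ M, NearRational Q τ (r / N))
    (hS : ∀ l ∈ S, l ≤ L ∧ l ∣ N ∧ Q.factorial.Coprime l) :
    Set.InjOn (fun i : (_ : ℕ) × ℕ × ℕ ↦ (i.2.2 + i.2.1 * (N / i.1)) % N)
      (S.sigma fun l ↦ reducedResidues l ×ˢ M) := by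
  rintro ⟨l, j, r⟩ hi ⟨l', j', r'⟩ hi' heq
  simp only [coe_sigma, Set.mem_sigma_iff, mem_coe, mem_product] at hi hi'
  obtain ⟨hl, hj, hr⟩ := hi
  obtain ⟨hl', hj', hr'⟩ := hi'
  obtain ⟨hlL, hlN, hQ⟩ := hS l hl
  obtain ⟨hlL', hlN', hQ'⟩ := hS l' hl'
  have hpos : 0 < l := Nat.pos_of_dvd_of_pos hlN hN
  have hpos' : 0 < l' := Nat.pos_of_dvd_of_pos hlN' hN
  have hmod : ((r + j * (N / l) : ℕ) : ℤ) ≡ ((r' + j' * (N / l') : ℕ) : ℤ) [ZMOD N] :=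
    Int.natCast_modEq_iff.mpr heq
  obtain ⟨m, hm⟩ := hmod.symm.dvd
  have hdiff : (r : ℝ) / N + j / l - (r' / N + j' / l') = m := by
    have hm' : ((r + j * (N / l) : ℕ) : ℝ) - (r' + j' * (N / l') : ℕ) = N * m := by
      exact_mod_cast hm
    rw [Nat.cast_add, Nat.cast_mul, Nat.cast_add, Nat.cast_mul, Nat.cast_div hlN (by positivity),
      Nat.cast_div hlN' (by positivity)] at hm'
    rw [← mul_right_inj' (show (N : ℝ) ≠ 0 by positivity), ← hm']
    field_simp
  obtain ⟨rfl, rfl⟩ := (hMQ r hr).eq_of_add_div_sub_add_div hτ (hMQ r' hr') hlL hlL' hQ hQ' hj hj'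
    hdiff
  have hrr : r ≡ r' [MOD N] := Nat.ModEq.add_right_cancel' _ heq
  rw [hrr.eq_of_lt_of_lt (mem_range.mp (hM hr)) (mem_range.mp (hM hr'))]

theorem sum_inv_totient_mul_sum_norm_expSum_sq_le {A M S : Finset ℕ} {N u : ℕ} (hN : 0 < N)
    (hA : A ⊆ Ico u (u + N)) (hτ : 2 * τ * (Q ^ 2 * L ^ 2) < 1) (hM : M ⊆ range N)
    (hMQ : ∀ r ∈ M, NearRational Q τ (r / N))
    (hS : ∀ l ∈ S, l ≤ L ∧ l ∣ N ∧ Q.factorial.Coprime l)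
    (hSA : ∀ l ∈ S, Squarefree l ∧ ∃ v, ∀ x ∈ A, (x + v).Coprime l) :
    (∑ l ∈ S, (l.totient : ℝ)⁻¹) * ∑ r ∈ M, ‖expSum A (r / N)‖ ^ 2 ≤ N * #A := by
  have hsieve (l : ℕ) (hl : l ∈ S) (r : ℕ) : (l.totient : ℝ)⁻¹ * ‖expSum A (r / N)‖ ^ 2 ≤
      ∑ j ∈ reducedResidues l, ‖expSum A (((r + j * (N / l)) % N : ℕ) / N)‖ ^ 2 := by
    obtain ⟨hsq, v, hv⟩ := hSA l hl
    have hφ : (0 : ℝ) < l.totient := by exact_mod_cast Nat.totient_pos.mpr hsq.ne_zero.bot_lt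
    rw [inv_mul_le_iff₀ hφ]
    simp_rw [← expSum_div_add_div A hN (hS l hl).2.1]
    exact norm_expSum_sq_le_totient_mul hsq hv _
  calc (∑ l ∈ S, (l.totient : ℝ)⁻¹) * ∑ r ∈ M, ‖expSum A (r / N)‖ ^ 2
      ≤ ∑ l ∈ S, ∑ r ∈ M, ∑ j ∈ reducedResidues l,
          ‖expSum A (((r + j * (N / l)) % N : ℕ) / N)‖ ^ 2 := by
        rw [sum_mul_sum]
        exact sum_le_sum fun l hl ↦ sum_le_sum fun r _ ↦ hsieve l hl r
    _ = ∑ i ∈ S.sigma fun l ↦ reducedResidues l ×ˢ M,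
          ‖expSum A (((i.2.2 + i.2.1 * (N / i.1)) % N : ℕ) / N)‖ ^ 2 := by
        rw [sum_sigma]
        exact sum_congr rfl fun l _ ↦ by rw [sum_product_right]
    _ = ∑ r ∈ (S.sigma fun l ↦ reducedResidues l ×ˢ M).image
          fun i ↦ (i.2.2 + i.2.1 * (N / i.1)) % N, ‖expSum A (r / N)‖ ^ 2 :=
        (sum_image (f := fun r : ℕ ↦ ‖expSum A (r / N)‖ ^ 2)
          (injOn_translate_of_nearRational hN hτ hM hMQ hS)).symm
    _ ≤ ∑ r ∈ range N, ‖expSum A (r / N)‖ ^ 2 :=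
        sum_le_sum_of_subset_of_nonneg
          (image_subset_iff.mpr fun i _ ↦ mem_range.mpr (Nat.mod_lt _ hN)) fun _ _ _ ↦ by positivity
    _ = N * #A := sum_norm_expSum_sq hN hA

end LargeSieve

/-! ### The ratio `n / φ(n)` -/

/-- The ratio `n / φ(n)`: the factor by which the primes are denser in a reduced residue class
modulo `n` than among all integers. -/
noncomputable def totientRatio (n : ℕ) : ℝ := n / n.totient

lemma totientRatio_pos {n : ℕ} (hn : 0 < n) : 0 < totientRatio n :=
  div_pos (by exact_mod_cast hn) (by exact_mod_cast Nat.totient_pos.mpr hn)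

lemma one_sub_inv_inv_nonneg {x : ℝ} (hx : 1 < x) : 0 ≤ (1 - x⁻¹)⁻¹ :=
  inv_nonneg.mpr (sub_nonneg.mpr (inv_le_one_of_one_le₀ hx.le))

lemma one_le_totientRatio {n : ℕ} (hn : 0 < n) : 1 ≤ totientRatio n :=
  (one_le_div₀ (by exact_mod_cast Nat.totient_pos.mpr hn)).mpr (by exact_mod_cast n.totient_le)

lemma totientRatio_eq_prod {n : ℕ} (hn : 0 < n) :
    totientRatio n = ∏ p ∈ n.primeFactors, (1 - (p : ℝ)⁻¹)⁻¹ := by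
  have htotient : (n.totient : ℝ) = n * ∏ p ∈ n.primeFactors, (1 - (p : ℝ)⁻¹) := by
    have := congrArg (Rat.cast : ℚ → ℝ) (Nat.totient_eq_mul_prod_factors n)
    push_cast at this
    exact this
  rw [totientRatio, prod_inv_distrib, htotient, div_mul_cancel_left₀ (by positivity)]

lemma totientRatio_mul_le {a b : ℕ} (ha : 0 < a) (hb : 0 < b) :
    totientRatio (a * b) ≤ totientRatio a * totientRatio b := by
  have := Nat.totient_pos.mpr ha
  have := Nat.totient_pos.mpr hb
  rw [totientRatio, totientRatio, totientRatio, div_mul_div_comm, Nat.cast_mul]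
  gcongr
  exact_mod_cast Nat.totient_super_multiplicative a b

lemma sum_inv_le_totientRatio {K : ℕ} (hK : 0 < K) {T : Finset ℕ}
    (hT : ∀ n ∈ T, n ∈ Nat.factoredNumbers K.primeFactors) :
    ∑ n ∈ T, (n : ℝ)⁻¹ ≤ totientRatio K := by
  let f : ℕ →* ℝ := (invMonoidWithZeroHom : ℝ →*₀ ℝ).toMonoidHom.comp (Nat.castRingHom ℝ)
  have hf (n : ℕ) : f n = (n : ℝ)⁻¹ := rfl
  have hnorm {p : ℕ} (hp : p.Prime) : ‖f p‖ < 1 := by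
    rw [hf, norm_inv, Real.norm_natCast]
    exact inv_lt_one_of_one_lt₀ (by exact_mod_cast hp.one_lt)
  have hsum :=
    (EulerProduct.summable_and_hasSum_factoredNumbers_prod_filter_prime_geometric hnorm
      K.primeFactors).2
  rw [filter_true_of_mem fun p ↦ Nat.prime_of_mem_primeFactors] at hsum
  rw [totientRatio_eq_prod hK, ← sum_subtype_of_mem _ hT]
  refine (hsum.summable.sum_le_tsum (T.subtype _) fun n _ ↦ ?_).trans_eq hsum.tsum_eq
  rw [hf]
  positivity

/-- The squarefree integers in `[1, L]` coprime to `D`, the moduli of the large sieve. -/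
def sieveModuli (L D : ℕ) : Finset ℕ := {l ∈ Icc 1 L | Squarefree l ∧ l.Coprime D}

lemma exists_squarefree_coprime_mul {n D : ℕ} (hn : 0 < n) (hD : 0 < D) :
    ∃ l c : ℕ, l * c = n ∧ Squarefree l ∧ l.Coprime D ∧
      c ∈ Nat.factoredNumbers (D * l).primeFactors := by
  set l := ∏ p ∈ n.primeFactors \ D.primeFactors, p
  have hrad : l ∣ UniqueFactorizationMonoid.radical n := by
    rw [Nat.radical_eq_prod_primeFactors]
    exact prod_dvd_prod_of_subset _ _ _ sdiff_subset
  obtain ⟨c, hc⟩ := hrad.trans UniqueFactorizationMonoid.radical_dvd_self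
  have hl0 : 0 < l := Nat.pos_of_dvd_of_pos ⟨c, hc⟩ hn
  refine ⟨l, c, hc.symm, UniqueFactorizationMonoid.squarefree_radical.squarefree_of_dvd hrad,
    Nat.Coprime.prod_left fun p hp ↦ ?_, ?_⟩
  · obtain ⟨hpn, hpD⟩ := mem_sdiff.mp hp
    have hprime := Nat.prime_of_mem_primeFactors hpn
    exact (hprime.coprime_iff_not_dvd).mpr
      fun hdvd ↦ hpD (Nat.mem_primeFactors.mpr ⟨hprime, hdvd, hD.ne'⟩)
  · rw [Nat.mem_factoredNumbers']
    intro p hp hpc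
    refine Nat.mem_primeFactors.mpr ⟨hp, ?_, by positivity⟩
    by_cases hpD : p ∣ D
    · exact hpD.mul_right l
    · refine Dvd.dvd.mul_left (dvd_prod_of_mem _ (mem_sdiff.mpr ⟨?_, ?_⟩)) D
      · exact Nat.mem_primeFactors.mpr ⟨hp, hc ▸ hpc.mul_left l, hn.ne'⟩
      · exact fun h ↦ hpD (Nat.dvd_of_mem_primeFactors h)

lemma log_le_totientRatio_mul_sum_inv_totient (L : ℕ) {D : ℕ} (hD : 0 < D) :
    Real.log L ≤ totientRatio D * ∑ l ∈ sieveModuli L D, (l.totient : ℝ)⁻¹ := by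
  classical
  have hharmonic : Real.log L ≤ ∑ n ∈ Icc 1 L, (n : ℝ)⁻¹ := by
    rcases L.eq_zero_or_pos with rfl | hL
    · simp
    · have := log_add_one_le_harmonic L
      rw [harmonic_eq_sum_Icc] at this
      push_cast at this
      exact (Real.log_le_log (by positivity) (by linarith)).trans this
  let cofactors (l : ℕ) : Finset ℕ :=
    {c ∈ Icc 1 L | c ∈ Nat.factoredNumbers (D * l).primeFactors}
  have hcover : Icc 1 L ⊆ ((sieveModuli L D).sigma cofactors).image fun i ↦ i.1 * i.2 := by
    intro n hn
    rw [mem_Icc] at hn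
    obtain ⟨l, c, rfl, hsq, hcop, hc⟩ := exists_squarefree_coprime_mul hn.1 hD
    obtain ⟨hl, hc0⟩ := CanonicallyOrderedAdd.mul_pos.mp (Nat.succ_le_iff.mp hn.1)
    refine mem_image.mpr ⟨⟨l, c⟩, mem_sigma.mpr ⟨mem_filter.mpr ⟨mem_Icc.mpr ⟨hl, ?_⟩, hsq, hcop⟩,
      mem_filter.mpr ⟨mem_Icc.mpr ⟨hc0, ?_⟩, hc⟩⟩, rfl⟩
    · exact (Nat.le_mul_of_pos_right l hc0).trans hn.2
    · exact (Nat.le_mul_of_pos_left c hl).trans hn.2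
  have hmodulus (l : ℕ) (hl : l ∈ sieveModuli L D) :
      (l : ℝ)⁻¹ * ∑ c ∈ cofactors l, (c : ℝ)⁻¹ ≤ totientRatio D * (l.totient : ℝ)⁻¹ := by
    obtain ⟨hlL, -, hcop⟩ := mem_filter.mp hl
    have hl0 : 0 < l := (mem_Icc.mp hlL).1
    calc (l : ℝ)⁻¹ * ∑ c ∈ cofactors l, (c : ℝ)⁻¹ ≤ (l : ℝ)⁻¹ * totientRatio (D * l) := by
          gcongr
          exact sum_inv_le_totientRatio (by positivity) fun c hc ↦ (mem_filter.mp hc).2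
      _ = totientRatio D * (l.totient : ℝ)⁻¹ := by
          rw [totientRatio, totientRatio, Nat.totient_mul hcop.symm, Nat.cast_mul, Nat.cast_mul]
          field_simp
  calc Real.log L ≤ ∑ n ∈ Icc 1 L, (n : ℝ)⁻¹ := hharmonic
    _ ≤ ∑ i ∈ (sieveModuli L D).sigma cofactors, ((i.1 * i.2 : ℕ) : ℝ)⁻¹ :=
        (sum_le_sum_of_subset_of_nonneg hcover fun _ _ _ ↦ by positivity).trans
          (sum_image_le_of_nonneg fun _ _ ↦ by positivity)
    _ = ∑ l ∈ sieveModuli L D, (l : ℝ)⁻¹ * ∑ c ∈ cofactors l, (c : ℝ)⁻¹ := by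
        simp_rw [sum_sigma, Nat.cast_mul, mul_inv, mul_sum]
    _ ≤ totientRatio D * ∑ l ∈ sieveModuli L D, (l.totient : ℝ)⁻¹ := by
        rw [mul_sum]
        exact sum_le_sum hmodulus

lemma primeFactors_factorial (n : ℕ) : n.factorial.primeFactors = Nat.primesLE n := by
  ext p
  rw [Nat.mem_primeFactors, Nat.mem_primesLE]
  exact ⟨fun ⟨hp, h, _⟩ ↦ ⟨hp.dvd_factorial.mp h, hp⟩,
    fun ⟨h, hp⟩ ↦ ⟨hp, hp.dvd_factorial.mpr h, n.factorial_ne_zero⟩⟩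

lemma card_primesLE_sdiff_mul_le (I : ℕ) :
    #(Nat.primesLE (2 ^ (I + 1)) \ Nat.primesLE (2 ^ I)) * (I : ℝ) ≤ 4 * 2 ^ I := by
  have hlog2 : 0 < Real.log 2 := Real.log_pos one_lt_two
  have hlog4 : Real.log 4 = 2 * Real.log 2 := by
    rw [show (4 : ℝ) = 2 ^ 2 by norm_num, Real.log_pow, Nat.cast_two]
  refine le_of_mul_le_mul_right ?_ hlog2
  calc #(Nat.primesLE (2 ^ (I + 1)) \ Nat.primesLE (2 ^ I)) * (I : ℝ) * Real.log 2
      = ∑ p ∈ Nat.primesLE (2 ^ (I + 1)) \ Nat.primesLE (2 ^ I), Real.log (2 ^ I) := by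
        rw [sum_const, nsmul_eq_mul, Real.log_pow, mul_assoc]
    _ ≤ ∑ p ∈ Nat.primesLE (2 ^ (I + 1)) \ Nat.primesLE (2 ^ I), Real.log p := by
        refine sum_le_sum fun p hp ↦ Real.log_le_log (by positivity) ?_
        rw [mem_sdiff, Nat.mem_primesLE, Nat.mem_primesLE] at hp
        exact_mod_cast (not_le.mp fun h ↦ hp.2 ⟨h, hp.1.2⟩).le
    _ ≤ Chebyshev.theta (2 ^ (I + 1) : ℕ) := by
        rw [Chebyshev.theta_eq_sum_primesLE_log]
        exact sum_le_sum_of_subset_of_nonneg sdiff_subset fun p _ _ ↦ Real.log_natCast_nonneg p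
    _ ≤ Real.log 4 * (2 ^ (I + 1) : ℕ) := Chebyshev.theta_le_log4_mul_x (by positivity)
    _ = 4 * 2 ^ I * Real.log 2 := by rw [hlog4]; push_cast; ring

lemma one_sub_inv_inv_le_exp {x y : ℝ} (hy : 0 < y) (hyx : y + 1 ≤ x) :
    (1 - x⁻¹)⁻¹ ≤ Real.exp (1 / y) := by
  have hx : (1 - x⁻¹)⁻¹ = 1 / (x - 1) + 1 := by
    have : x - 1 ≠ 0 := by linarith
    have : x ≠ 0 := by linarith
    field_simp
    ring
  calc (1 - x⁻¹)⁻¹ ≤ 1 / y + 1 := by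
        rw [hx]
        gcongr
        linarith
    _ ≤ Real.exp (1 / y) := Real.add_one_le_exp _

lemma totientRatio_factorial_two_pow_succ_le {I : ℕ} (hI : 1 ≤ I) :
    totientRatio (2 ^ (I + 1)).factorial ≤
      totientRatio (2 ^ I).factorial * Real.exp (4 / I) := by
  have hone_lt {n p : ℕ} (hp : p ∈ Nat.primesLE n) : (1 : ℝ) < p := by
    exact_mod_cast Nat.one_lt_of_mem_primesLE hp
  rw [totientRatio_eq_prod (Nat.factorial_pos _), totientRatio_eq_prod (Nat.factorial_pos _),
    primeFactors_factorial, primeFactors_factorial, mul_comm,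
    ← prod_sdiff (Nat.primesLE_mono (pow_le_pow_right₀ one_le_two I.le_succ))]
  refine mul_le_mul_of_nonneg_right ?_
    (prod_nonneg fun p hp ↦ one_sub_inv_inv_nonneg (hone_lt hp))
  calc ∏ p ∈ Nat.primesLE (2 ^ (I + 1)) \ Nat.primesLE (2 ^ I), (1 - (p : ℝ)⁻¹)⁻¹
      ≤ ∏ p ∈ Nat.primesLE (2 ^ (I + 1)) \ Nat.primesLE (2 ^ I), Real.exp (1 / 2 ^ I) := by
        refine prod_le_prod (fun p hp ↦ one_sub_inv_inv_nonneg (hone_lt (mem_sdiff.mp hp).1))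
          fun p hp ↦ one_sub_inv_inv_le_exp (by positivity) ?_
        rw [mem_sdiff, Nat.mem_primesLE, Nat.mem_primesLE] at hp
        exact_mod_cast not_le.mp fun h ↦ hp.2 ⟨h, hp.1.2⟩
    _ = Real.exp (#(Nat.primesLE (2 ^ (I + 1)) \ Nat.primesLE (2 ^ I)) * (1 / 2 ^ I)) := by
        rw [prod_const, Real.exp_nat_mul]
    _ ≤ Real.exp (4 / I) := by
        gcongr
        rw [mul_one_div, div_le_div_iff₀ (by positivity) (by exact_mod_cast hI)]
        exact card_primesLE_sdiff_mul_le I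

lemma exp_four_div_le {I : ℕ} (hI : 1 ≤ I) : Real.exp (4 / I) ≤ ((I + 1) / I : ℝ) ^ 8 := by
  have hI' : (1 : ℝ) ≤ I := by exact_mod_cast hI
  rw [← Real.le_log_iff_exp_le (by positivity), Real.log_pow]
  calc 4 / (I : ℝ) = 8 * (1 / (2 * I)) := by field_simp; norm_num
    _ ≤ 8 * (1 / (I + 1)) := by gcongr; linarith
    _ = 8 * (1 - ((I + 1) / I : ℝ)⁻¹) := by congr 1; field_simp; ring
    _ ≤ (8 : ℕ) * Real.log ((I + 1) / I) := by
        push_cast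
        gcongr
        exact Real.one_sub_inv_le_log_of_pos (by positivity)

lemma totientRatio_factorial_two_pow_le {I : ℕ} (hI : 1 ≤ I) :
    totientRatio (2 ^ I).factorial ≤ 2 * (I : ℝ) ^ 8 := by
  induction I, hI using Nat.le_induction with
  | base => norm_num [totientRatio, Nat.factorial]
  | succ I hI ih =>
    have : (0 : ℝ) < I := by exact_mod_cast hI
    calc totientRatio (2 ^ (I + 1)).factorial
        ≤ totientRatio (2 ^ I).factorial * Real.exp (4 / I) :=
          totientRatio_factorial_two_pow_succ_le hI
      _ ≤ (2 * (I : ℝ) ^ 8) * ((I + 1) / I) ^ 8 := by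
          gcongr
          exact exp_four_div_le hI
      _ = 2 * ((I + 1 : ℕ) : ℝ) ^ 8 := by push_cast; field_simp

/-! ### A Tauberian lower bound on windows -/

section Tauberian

open Filter Topology Asymptotics

/-- The Dirichlet series `∑ aₙ n⁻ᵋ` converges for `ε > 0` and equals `ρ / ε + O(1)` as `ε → 0⁺`:
it behaves at `0` as if it had a simple pole with residue `ρ`. -/
def HasSimplePole (a : ℕ → ℝ) (ρ : ℝ) : Prop :=
  (∀ ε : ℝ, 0 < ε → Summable fun n : ℕ ↦ a n * (n : ℝ) ^ (-ε)) ∧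
    (fun ε : ℝ ↦ ∑' n : ℕ, a n * (n : ℝ) ^ (-ε) - ρ / ε) =O[𝓝[>] 0] fun _ ↦ (1 : ℝ)

variable {a a' : ℕ → ℝ} {ρ ρ' ε : ℝ}

lemma HasSimplePole.sub (h : HasSimplePole a ρ) (h' : HasSimplePole a' ρ') :
    HasSimplePole (fun n ↦ a n - a' n) (ρ - ρ') := by
  refine ⟨fun ε hε ↦ by simpa only [sub_mul] using (h.1 ε hε).sub (h'.1 ε hε), ?_⟩
  refine (h.2.sub h'.2).congr' ?_ EventuallyEq.rfl
  filter_upwards [self_mem_nhdsWithin] with ε hε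
  simp only [sub_mul, (h.1 ε hε).tsum_sub (h'.1 ε hε)]
  ring

lemma natCast_rpow_neg_le_one (n : ℕ) (hε : 0 < ε) : (n : ℝ) ^ (-ε) ≤ 1 := by
  rcases n.eq_zero_or_pos with rfl | hn
  · simp [Real.zero_rpow (neg_ne_zero.mpr hε.ne')]
  · exact Real.rpow_le_one_of_one_le_of_nonpos (by exact_mod_cast hn) (by linarith)

lemma natCast_rpow_neg_succ_mul (n j : ℕ) (ε : ℝ) :
    (n : ℝ) ^ (-((j + 1) * ε)) = (n : ℝ) ^ (-ε) * ((n : ℝ) ^ (-ε)) ^ j := by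
  rw [← pow_succ', ← Real.rpow_natCast, ← Real.rpow_mul n.cast_nonneg]
  congr 1
  push_cast
  ring

lemma hasSimplePole_zero_of_summable (ha : ∀ n, 0 ≤ a n) (hs : Summable a) :
    HasSimplePole a 0 := by
  have hle (ε : ℝ) (hε : 0 < ε) (n : ℕ) : a n * (n : ℝ) ^ (-ε) ≤ a n :=
    mul_le_of_le_one_right (ha n) (natCast_rpow_neg_le_one n hε)
  have hnonneg (ε : ℝ) (n : ℕ) : 0 ≤ a n * (n : ℝ) ^ (-ε) := mul_nonneg (ha n) (by positivity)
  have hsum (ε : ℝ) (hε : 0 < ε) : Summable fun n : ℕ ↦ a n * (n : ℝ) ^ (-ε) :=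
    .of_nonneg_of_le (hnonneg ε) (hle ε hε) hs
  refine ⟨hsum, IsBigO.of_bound (∑' n, a n) ?_⟩
  filter_upwards [self_mem_nhdsWithin] with ε hε
  rw [zero_div, sub_zero, norm_one, mul_one, Real.norm_of_nonneg (tsum_nonneg (hnonneg ε))]
  exact (hsum ε hε).tsum_le_tsum (hle ε hε) hs

lemma tendsto_const_mul_nhdsGT_zero {c : ℝ} (hc : 0 < c) :
    Tendsto (fun ε : ℝ ↦ c * ε) (𝓝[>] 0) (𝓝[>] 0) := by
  refine tendsto_nhdsWithin_iff.mpr ⟨?_, ?_⟩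
  · simpa using ((continuous_const_mul c).tendsto 0).mono_left nhdsWithin_le_nhds
  · filter_upwards [self_mem_nhdsWithin] with ε hε using mul_pos hc hε

-- Karamata's device: substituting `n⁻ᵋ` into a polynomial integrates it over `[0, 1]`.
lemma HasSimplePole.polynomial (h : HasSimplePole a ρ) (q : ℝ[X]) :
    (∀ ε : ℝ, 0 < ε →
      Summable fun n : ℕ ↦ a n * ((n : ℝ) ^ (-ε) * q.eval ((n : ℝ) ^ (-ε)))) ∧
    (fun ε : ℝ ↦ ∑' n : ℕ, a n * ((n : ℝ) ^ (-ε) * q.eval ((n : ℝ) ^ (-ε))) -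
      ρ * (∫ x in (0 : ℝ)..1, q.eval x) / ε) =O[𝓝[>] 0] fun _ ↦ (1 : ℝ) := by
  induction q using Polynomial.induction_on' with
  | add p q hp hq =>
    have hexpand (ε : ℝ) (n : ℕ) :
        a n * ((n : ℝ) ^ (-ε) * (p + q).eval ((n : ℝ) ^ (-ε))) =
          a n * ((n : ℝ) ^ (-ε) * p.eval ((n : ℝ) ^ (-ε))) +
          a n * ((n : ℝ) ^ (-ε) * q.eval ((n : ℝ) ^ (-ε))) := by
      rw [eval_add]; ring
    refine ⟨fun ε hε ↦ by simpa only [hexpand] using (hp.1 ε hε).add (hq.1 ε hε), ?_⟩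
    refine (hp.2.add hq.2).congr' ?_ EventuallyEq.rfl
    filter_upwards [self_mem_nhdsWithin] with ε hε
    simp only [hexpand, (hp.1 ε hε).tsum_add (hq.1 ε hε)]
    simp only [eval_add]
    rw [intervalIntegral.integral_add (p.continuous.intervalIntegrable _ _)
      (q.continuous.intervalIntegrable _ _)]
    ring
  | monomial j c =>
    have hexpand (ε : ℝ) (n : ℕ) :
        a n * ((n : ℝ) ^ (-ε) * (monomial j c).eval ((n : ℝ) ^ (-ε))) =
          c * (a n * (n : ℝ) ^ (-((j + 1) * ε))) := by
      rw [natCast_rpow_neg_succ_mul, eval_monomial]; ring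
    simp only [hexpand, tsum_mul_left]
    refine ⟨fun ε hε ↦ (h.1 _ (by positivity)).mul_left c, ?_⟩
    refine ((h.2.comp_tendsto
      (tendsto_const_mul_nhdsGT_zero j.cast_add_one_pos)).const_mul_left c).congr_left fun ε ↦ ?_
    have hintegral : ∫ x in (0 : ℝ)..1, (monomial j c).eval x = c / (j + 1) := by
      simp [eval_monomial, integral_pow, div_eq_mul_inv]
    rw [hintegral]
    simp only [Function.comp_apply]
    field_simp

lemma HasSimplePole.eventually_le_tsum_polynomial (h : HasSimplePole a ρ) (hρ : 0 < ρ)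
    {q : ℝ[X]} (hq : 0 < ∫ x in (0 : ℝ)..1, q.eval x) :
    ∀ᶠ ε : ℝ in 𝓝[>] 0, ρ * (∫ x in (0 : ℝ)..1, q.eval x) / (2 * ε) ≤
      ∑' n : ℕ, a n * ((n : ℝ) ^ (-ε) * q.eval ((n : ℝ) ^ (-ε))) := by
  obtain ⟨C, hC⟩ := (h.polynomial q).2.bound
  set κ := ∫ x in (0 : ℝ)..1, q.eval x
  have hlarge := (tendsto_inv_nhdsGT_zero.const_mul_atTop
    (by positivity : 0 < ρ * κ / 2)).eventually_ge_atTop C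
  filter_upwards [hC, hlarge] with ε hε hlarge
  rw [norm_one, mul_one] at hε
  have hhalf : ρ * κ / ε = 2 * (ρ * κ / 2 * ε⁻¹) := by ring
  have hgoal : ρ * κ / (2 * ε) = ρ * κ / 2 * ε⁻¹ := by rw [← div_div]; ring
  linarith [(abs_le.mp hε).1]

lemma le_integral_four_mul_mul_one_sub_pow {δ : ℝ} (h₀ : 0 < δ) (h₁ : δ ≤ 1 / 2) (K : ℕ) :
    δ * (1 - δ ^ 2) ^ K ≤ ∫ x in (0 : ℝ)..1, (4 * x * (1 - x)) ^ K := by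
  have hint (s t : ℝ) : IntervalIntegrable (fun x : ℝ ↦ (4 * x * (1 - x)) ^ K)
      MeasureTheory.volume s t :=
    Continuous.intervalIntegrable (by fun_prop) _ _
  calc δ * (1 - δ ^ 2) ^ K = ∫ _ in (1 / 2 - δ / 2)..(1 / 2 + δ / 2), (1 - δ ^ 2) ^ K := by
        rw [intervalIntegral.integral_const, smul_eq_mul]; ring
    _ ≤ ∫ x in (1 / 2 - δ / 2)..(1 / 2 + δ / 2), (4 * x * (1 - x)) ^ K := by
        refine intervalIntegral.integral_mono_on (by linarith) (by simp) (hint _ _) fun x hx ↦ ?_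
        exact pow_le_pow_left₀ (by nlinarith) (by nlinarith [hx.1, hx.2]) K
    _ ≤ ∫ x in (0 : ℝ)..1, (4 * x * (1 - x)) ^ K := by
        refine intervalIntegral.integral_mono_interval (by linarith) (by linarith) (by linarith)
          ?_ (hint _ _)
        rw [EventuallyLE, MeasureTheory.ae_restrict_iff' measurableSet_Ioc]
        refine Eventually.of_forall fun x hx ↦ pow_nonneg ?_ K
        nlinarith [hx.1, hx.2]

lemma exists_window_polynomial {s t : ℝ} (hs : s < 1 / 2) (ht : 1 / 2 < t) :
    ∃ q : ℝ[X], (∀ x ∈ Set.Icc (0 : ℝ) 1, q.eval x ≤ 1) ∧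
      (∀ x ∈ Set.Icc (0 : ℝ) 1, x ≤ s ∨ t ≤ x → q.eval x ≤ 0) ∧
      0 < ∫ x in (0 : ℝ)..1, q.eval x := by
  obtain ⟨δ, ⟨h₀, h₁⟩, hδs, hδt⟩ :
      ∃ δ : ℝ, (0 < δ ∧ δ ≤ 1 / 2) ∧ s ≤ 1 / 2 - δ ∧ 1 / 2 + δ ≤ t :=
    ⟨min (1 / 2) (min (1 / 2 - s) (t - 1 / 2)), by grind, by grind, by grind⟩
  have hpos : 0 < 1 - δ ^ 2 := by nlinarith
  have hnonneg : 0 ≤ 1 - 4 * δ ^ 2 := by nlinarith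
  obtain ⟨K, hK⟩ : ∃ K : ℕ, (1 - 4 * δ ^ 2) ^ K < δ * (1 - δ ^ 2) ^ K := by
    obtain ⟨K, hK⟩ := exists_pow_lt_of_lt_one h₀
      ((div_lt_one hpos).mpr (by nlinarith) : (1 - 4 * δ ^ 2) / (1 - δ ^ 2) < 1)
    exact ⟨K, by rwa [div_pow, div_lt_iff₀ (by positivity)] at hK⟩
  refine ⟨(C 4 * X * (1 - X)) ^ K - C ((1 - 4 * δ ^ 2) ^ K), fun x hx ↦ ?_, fun x hx hxst ↦ ?_,
    ?_⟩ <;> simp only [eval_sub, eval_pow, eval_mul, eval_C, eval_X, eval_one]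
  · have : (4 * x * (1 - x)) ^ K ≤ 1 :=
      pow_le_one₀ (by nlinarith [hx.1, hx.2]) (by nlinarith [sq_nonneg (x - 1 / 2)])
    have : 0 ≤ (1 - 4 * δ ^ 2) ^ K := pow_nonneg hnonneg K
    linarith
  · refine sub_nonpos.mpr (pow_le_pow_left₀ (by nlinarith [hx.1, hx.2]) ?_ K)
    rcases hxst with hxs | hxt <;> nlinarith
  · rw [intervalIntegral.integral_sub (Continuous.intervalIntegrable (by fun_prop) _ _) (by simp),
      intervalIntegral.integral_const, sub_zero, one_smul, sub_pos]
    exact hK.trans_le (le_integral_four_mul_mul_one_sub_pow h₀ h₁ K)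

lemma tsum_mul_eval_le_sum (ha : ∀ n, 0 ≤ a n) (hε : 0 < ε) {q : ℝ[X]}
    (hq : ∀ x ∈ Set.Icc (0 : ℝ) 1, q.eval x ≤ 1)
    (hsum : Summable fun n : ℕ ↦ a n * ((n : ℝ) ^ (-ε) * q.eval ((n : ℝ) ^ (-ε)))) {s : Finset ℕ}
    (hs : ∀ n ∉ s, n ≠ 0 → q.eval ((n : ℝ) ^ (-ε)) ≤ 0) :
    ∑' n : ℕ, a n * ((n : ℝ) ^ (-ε) * q.eval ((n : ℝ) ^ (-ε))) ≤ ∑ n ∈ s, a n := by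
  have hnonneg (n : ℕ) : 0 ≤ (n : ℝ) ^ (-ε) := by positivity
  have hone (n : ℕ) := natCast_rpow_neg_le_one n hε
  have hcompl : ∑' n : {n // n ∉ s}, a n * ((n : ℝ) ^ (-ε) * q.eval ((n : ℝ) ^ (-ε))) ≤ 0 := by
    refine tsum_nonpos fun ⟨n, hn⟩ ↦ mul_nonpos_of_nonneg_of_nonpos (ha n) ?_
    rcases eq_or_ne n 0 with rfl | hn₀
    · simp [Real.zero_rpow (neg_ne_zero.mpr hε.ne')]
    · exact mul_nonpos_of_nonneg_of_nonpos (hnonneg n) (hs n hn hn₀)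
  have hmem : ∑ n ∈ s, a n * ((n : ℝ) ^ (-ε) * q.eval ((n : ℝ) ^ (-ε))) ≤ ∑ n ∈ s, a n := by
    refine sum_le_sum fun n _ ↦ mul_le_of_le_one_right (ha n) ?_
    exact (mul_le_of_le_one_right (hnonneg n) (hq _ ⟨hnonneg n, hone n⟩)).trans (hone n)
  rw [← hsum.sum_add_tsum_subtype_compl s]
  linarith

lemma tendsto_log_two_div_mul_log {M : ℕ} (hM : 0 < M) :
    Tendsto (fun Z : ℕ ↦ Real.log 2 / (M * Real.log Z)) atTop (𝓝[>] 0) := by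
  have hM' : (0 : ℝ) < M := by exact_mod_cast hM
  have hlog : Tendsto (fun Z : ℕ ↦ (M : ℝ) * Real.log Z) atTop atTop :=
    (Real.tendsto_log_atTop.comp tendsto_natCast_atTop_atTop).const_mul_atTop hM'
  refine tendsto_nhdsWithin_iff.mpr ⟨hlog.const_div_atTop _, ?_⟩
  filter_upwards [hlog.eventually_gt_atTop 0] with Z hZ
  exact div_pos (Real.log_pos one_lt_two) hZ

section Window

variable {M Z n : ℕ}

lemma natCast_rpow_neg_le_of_pow_lt (hM : 0 < M) (hZ : 0 < Real.log Z) (hn : Z ^ (M + 1) < n) :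
    (n : ℝ) ^ (-(Real.log 2 / (M * Real.log Z))) ≤ 2 ^ (-(1 + 1 / (M : ℝ))) := by
  have hZ' : 0 < (Z : ℝ) := by
    rcases Z.eq_zero_or_pos with rfl | h
    · simp at hZ
    · exact_mod_cast h
  have hn' : (0 : ℝ) < n := by exact_mod_cast (Nat.zero_le _).trans_lt hn
  have hlog : (M + 1) * Real.log Z ≤ Real.log n := by
    have := Real.log_le_log (by positivity) (by exact_mod_cast hn.le : (Z : ℝ) ^ (M + 1) ≤ n)
    rwa [Real.log_pow, Nat.cast_add_one] at this
  have : 0 < Real.log 2 := Real.log_pos one_lt_two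
  rw [Real.rpow_def_of_pos hn', Real.rpow_def_of_pos two_pos, Real.exp_le_exp, mul_neg, mul_neg,
    neg_le_neg_iff]
  calc Real.log 2 * (1 + 1 / M)
      = (M + 1) * Real.log Z * (Real.log 2 / (M * Real.log Z)) := by field_simp
    _ ≤ _ := by gcongr

lemma le_natCast_rpow_neg_of_lt_mul_pow {B : ℕ} (hM : 0 < M) (hn₀ : n ≠ 0)
    (hB : 2 * Real.log B ≤ Real.log Z) (hZ : 0 < Real.log Z) (hn : n < B * Z ^ (M - 1)) :
    2 ^ (-(1 - 1 / (2 * M : ℝ))) ≤ (n : ℝ) ^ (-(Real.log 2 / (M * Real.log Z))) := by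
  have hn' : (0 : ℝ) < n := by exact_mod_cast Nat.pos_of_ne_zero hn₀
  have hBZ : B ≠ 0 ∧ Z ^ (M - 1) ≠ 0 := by
    rw [← mul_ne_zero_iff]; omega
  have hlog : Real.log n ≤ (M - 1 / 2) * Real.log Z := by
    have := Real.log_le_log hn' (by exact_mod_cast hn.le : (n : ℝ) ≤ B * (Z : ℝ) ^ (M - 1))
    rw [Real.log_mul (by exact_mod_cast hBZ.1) (by exact_mod_cast hBZ.2), Real.log_pow,
      Nat.cast_sub hM, Nat.cast_one] at this
    linarith
  have : 0 < Real.log 2 := Real.log_pos one_lt_two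
  rw [Real.rpow_def_of_pos hn', Real.rpow_def_of_pos two_pos, Real.exp_le_exp, mul_neg, mul_neg,
    neg_le_neg_iff]
  calc Real.log n * (Real.log 2 / (M * Real.log Z))
      ≤ (M - 1 / 2) * Real.log Z * (Real.log 2 / (M * Real.log Z)) := by gcongr
    _ = _ := by field_simp

end Window

lemma exists_window_constant {M : ℕ} (hM : 0 < M) :
    ∃ κ : ℝ, 0 < κ ∧ ∀ (a : ℕ → ℝ) (ρ : ℝ), (∀ n, 0 ≤ a n) → 0 < ρ → HasSimplePole a ρ →
      ∀ B : ℕ, ∀ᶠ Z : ℕ in atTop,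
        κ * ρ * Real.log Z ≤ ∑ n ∈ Icc (B * Z ^ (M - 1)) (Z ^ (M + 1)), a n := by
  have hM' : (0 : ℝ) < M := by exact_mod_cast hM
  have hhalf : (1 / 2 : ℝ) = 2 ^ (-1 : ℝ) := by rw [Real.rpow_neg_one, one_div]
  have hlower : (2 : ℝ) ^ (-(1 + 1 / (M : ℝ))) < 1 / 2 := by
    rw [hhalf, Real.rpow_lt_rpow_left_iff one_lt_two, neg_lt_neg_iff]
    linarith [one_div_pos.mpr hM']
  have hupper : 1 / 2 < (2 : ℝ) ^ (-(1 - 1 / (2 * M : ℝ))) := by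
    rw [hhalf, Real.rpow_lt_rpow_left_iff one_lt_two, neg_lt_neg_iff]
    linarith [one_div_pos.mpr (mul_pos two_pos hM')]
  obtain ⟨q, hq₁, hq₀, hq⟩ := exists_window_polynomial hlower hupper
  have : 0 < Real.log 2 := Real.log_pos one_lt_two
  refine ⟨(∫ x in (0 : ℝ)..1, q.eval x) * M / (2 * Real.log 2), by positivity,
    fun a ρ ha hρ hpole B ↦ ?_⟩
  have hlog : Tendsto (fun Z : ℕ ↦ Real.log Z) atTop atTop :=
    Real.tendsto_log_atTop.comp tendsto_natCast_atTop_atTop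
  filter_upwards [(tendsto_log_two_div_mul_log hM).eventually
    (hpole.eventually_le_tsum_polynomial hρ hq), hlog.eventually_gt_atTop 0,
    hlog.eventually_ge_atTop (2 * Real.log B)] with Z hmain hZ hB
  have hε : 0 < Real.log 2 / (M * Real.log Z) := by positivity
  refine le_trans (le_of_eq ?_) (hmain.trans (tsum_mul_eval_le_sum ha hε hq₁
    ((hpole.polynomial q).1 _ hε) fun n hn hn₀ ↦ ?_))
  · field_simp
  · refine hq₀ _ ⟨by positivity, natCast_rpow_neg_le_one n hε⟩ ?_
    rw [mem_Icc, not_and_or, not_le, not_le] at hn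
    exact hn.symm.imp (natCast_rpow_neg_le_of_pow_lt hM hZ)
      (le_natCast_rpow_neg_of_lt_mul_pow hM hn₀ hB hZ)

end Tauberian

/-! ### Primes in arithmetic progressions in short blocks -/

section PrimeBlocks

open Filter Topology Asymptotics ArithmeticFunction vonMangoldt LSeries

/-- The weight `log p / p` on the primes `p ≡ b (mod V)`. -/
noncomputable def primeWeight (V b n : ℕ) : ℝ :=
  if n.Prime ∧ (n : ZMod V) = b then Real.log n / n else 0

lemma primeWeight_nonneg (V b n : ℕ) : 0 ≤ primeWeight V b n := by
  unfold primeWeight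
  split_ifs
  · exact div_nonneg (Real.log_natCast_nonneg n) n.cast_nonneg
  · rfl

lemma tsum_residueClass_div_rpow {q : ℕ} [NeZero q] {a : ZMod q} (ha : IsUnit a) {x : ℝ}
    (hx : 1 < x) :
    ∑' n, residueClass a n / (n : ℝ) ^ x =
      (LFunctionResidueClassAux a x).re + (q.totient : ℝ)⁻¹ / (x - 1) := by
  refine Complex.ofReal_injective ?_
  simp only [Complex.ofReal_tsum, Complex.ofReal_div, Complex.ofReal_cpow (Nat.cast_nonneg _),
    Complex.ofReal_natCast, Complex.ofReal_add, Complex.ofReal_inv, Complex.ofReal_sub,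
    Complex.ofReal_one]
  simp_rw [← LFunctionResidueClassAux_real ha hx,
    eqOn_LFunctionResidueClassAux ha <| Set.mem_ofPred.mpr (Complex.ofReal_re x ▸ hx),
    sub_add_cancel, LSeries, term]
  refine tsum_congr fun n ↦ ?_
  split_ifs with hn
  · simp only [hn, residueClass_apply_zero, Complex.ofReal_zero, zero_div]
  · rfl

lemma div_mul_natCast_rpow_neg (c : ℝ) (n : ℕ) {ε : ℝ} (hε : 0 < ε) :
    c / n * (n : ℝ) ^ (-ε) = c / (n : ℝ) ^ (1 + ε) := by
  rw [Real.rpow_add_of_nonneg n.cast_nonneg zero_le_one hε.le, Real.rpow_one,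
    Real.rpow_neg n.cast_nonneg, ← div_eq_mul_inv, div_div]

lemma hasSimplePole_residueClass {q : ℕ} [NeZero q] {a : ZMod q} (ha : IsUnit a) :
    HasSimplePole (fun n ↦ residueClass a n / n) (q.totient : ℝ)⁻¹ := by
  refine ⟨fun ε hε ↦ ?_, ?_⟩
  · simp only [div_mul_natCast_rpow_neg _ _ hε]
    exact summable_real_of_abscissaOfAbsConv_lt <|
      (abscissaOfAbsConv_residueClass_le_one a).trans_lt <| by
        exact_mod_cast lt_add_of_pos_right 1 hε
  · have hcont : ContinuousWithinAt (fun ε : ℝ ↦ (LFunctionResidueClassAux a ↑(1 + ε)).re)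
        (Set.Ioi 0) 0 := by
      refine Complex.continuous_re.continuousAt.comp_continuousWithinAt
        (ContinuousWithinAt.comp (g := LFunctionResidueClassAux a) (t := {s : ℂ | 1 ≤ s.re})
          (continuousOn_LFunctionResidueClassAux a _ (by simp))
          (by fun_prop : Continuous fun ε : ℝ ↦ ((1 + ε : ℝ) : ℂ)).continuousWithinAt
          fun ε hε ↦ ?_)
      simpa using le_of_lt (Set.mem_Ioi.mp hε)
    refine (hcont.tendsto.isBigO_one ℝ).congr' ?_ EventuallyEq.rfl
    filter_upwards [self_mem_nhdsWithin] with ε hε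
    simp only [div_mul_natCast_rpow_neg _ _ hε]
    rw [tsum_residueClass_div_rpow ha (lt_add_of_pos_right 1 hε), add_sub_cancel_left,
      add_sub_cancel_right]

lemma primeWeight_eq_sub (V b n : ℕ) :
    primeWeight V b n = residueClass (b : ZMod V) n / n -
      (if n.Prime then 0 else residueClass (b : ZMod V) n) / n := by
  unfold primeWeight
  by_cases hp : n.Prime <;> by_cases hb : (n : ZMod V) = b <;>
    simp [hp, hb, residueClass, vonMangoldt_apply_prime]

lemma hasSimplePole_primeWeight {V b : ℕ} (hV : 0 < V) (hb : b.Coprime V) :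
    HasSimplePole (primeWeight V b) (V.totient : ℝ)⁻¹ := by
  have : NeZero V := ⟨hV.ne'⟩
  have hunit : IsUnit (b : ZMod V) := (ZMod.isUnit_iff_coprime b V).mpr hb
  have hnonprime : HasSimplePole
      (fun n ↦ (if n.Prime then 0 else residueClass (b : ZMod V) n) / n) 0 := by
    refine hasSimplePole_zero_of_summable (fun n ↦ div_nonneg ?_ n.cast_nonneg)
      (summable_residueClass_non_primes_div (b : ZMod V))
    split_ifs
    exacts [le_rfl, residueClass_nonneg _ _]
  simpa only [← primeWeight_eq_sub, sub_zero] using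
    (hasSimplePole_residueClass hunit).sub hnonprime

lemma sum_inv_filter_div_eq_le (s : Finset ℕ) {Y j : ℕ} (hY : 0 < Y) (hj : 0 < j) :
    ∑ x ∈ s with x / Y = j, (x : ℝ)⁻¹ ≤ #{x ∈ s | x / Y = j} / Y * (j : ℝ)⁻¹ := by
  have hterm : ∀ x ∈ s.filter (· / Y = j), (x : ℝ)⁻¹ ≤ ((Y : ℝ) * j)⁻¹ := fun x hx ↦ by
    gcongr
    exact_mod_cast (mem_filter.mp hx).2 ▸ Nat.mul_div_le x Y
  calc ∑ x ∈ s with x / Y = j, (x : ℝ)⁻¹ ≤ #{x ∈ s | x / Y = j} * ((Y : ℝ) * j)⁻¹ := by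
        simpa only [nsmul_eq_mul] using sum_le_card_nsmul _ _ _ hterm
    _ = #{x ∈ s | x / Y = j} / Y * (j : ℝ)⁻¹ := by field_simp

lemma sum_inv_le_of_card_block_le {s : Finset ℕ} {W U Y : ℕ} {R : ℝ} (hY : 0 < Y) (hYW : Y ≤ W)
    (hR : 0 ≤ R) (hs : s ⊆ Icc (2 * W) U)
    (hblock : ∀ u, W ≤ u → u ≤ U → (#{x ∈ s | x ∈ Ico u (u + Y)} : ℝ) ≤ R) :
    ∑ x ∈ s, (x : ℝ)⁻¹ ≤ R / Y * (1 + Real.log (U / Y : ℕ)) := by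
  have hmod (x : ℕ) : Y * (x / Y) ≤ x ∧ x < Y * (x / Y) + Y := by
    have := Nat.div_add_mod x Y
    have := Nat.mod_lt x hY
    omega
  have hmaps : ∀ x ∈ s, x / Y ∈ Icc 1 (U / Y) := fun x hx ↦ by
    have hx := mem_Icc.mp (hs hx)
    exact mem_Icc.mpr ⟨(Nat.one_le_div_iff hY).mpr (by omega), Nat.div_le_div_right hx.2⟩
  have hcard (j : ℕ) : (#{x ∈ s | x / Y = j} : ℝ) ≤ R := by
    rcases eq_empty_or_nonempty (s.filter (· / Y = j)) with h | ⟨x, hx⟩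
    · simpa [h] using hR
    obtain ⟨hxs, rfl⟩ := mem_filter.mp hx
    have hxW := mem_Icc.mp (hs hxs)
    have hWx : W ≤ Y * (x / Y) := by have := hmod x; omega
    refine le_trans ?_ (hblock (Y * (x / Y)) hWx ((hmod x).1.trans hxW.2))
    refine Nat.cast_le.mpr (card_le_card fun y hy ↦ ?_)
    rw [mem_filter] at hy ⊢
    exact ⟨hy.1, mem_Ico.mpr (hy.2 ▸ hmod y)⟩
  have hharmonic : ∑ j ∈ Icc 1 (U / Y), (j : ℝ)⁻¹ ≤ 1 + Real.log (U / Y : ℕ) := by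
    simpa [harmonic_eq_sum_Icc] using harmonic_le_one_add_log (U / Y)
  calc ∑ x ∈ s, (x : ℝ)⁻¹ = ∑ j ∈ Icc 1 (U / Y), ∑ x ∈ s with x / Y = j, (x : ℝ)⁻¹ :=
        (sum_fiberwise_of_maps_to hmaps _).symm
    _ ≤ ∑ j ∈ Icc 1 (U / Y), R / Y * (j : ℝ)⁻¹ := sum_le_sum fun j hj ↦ by
        refine (sum_inv_filter_div_eq_le s hY (mem_Icc.mp hj).1).trans ?_
        gcongr
        exact hcard j
    _ ≤ R / Y * (1 + Real.log (U / Y : ℕ)) := by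
        rw [← mul_sum]
        gcongr

lemma sum_primeWeight_le {V b W : ℕ} (hV : 0 < V) (hb : b < V) (hW : 0 < W) (U : ℕ) :
    ∑ n ∈ Icc (2 * V * W) U, primeWeight V b n ≤
      Real.log U / V * ∑ x ∈ Icc (2 * W) U with (b + V * x).Prime, (x : ℝ)⁻¹ := by
  set P := (Icc (2 * V * W) U).filter fun n : ℕ ↦ n.Prime ∧ (n : ZMod V) = b with hP
  have hmem {n : ℕ} (hn : n ∈ P) : n.Prime ∧ b + V * (n / V) = n ∧ 2 * W ≤ n / V ∧ n ≤ U := by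
    obtain ⟨hn, hprime, hmod⟩ := mem_filter.mp hn
    have hmod := (ZMod.natCast_eq_natCast_iff' n b V).mp hmod
    rw [Nat.mod_eq_of_lt hb] at hmod
    refine ⟨hprime, by rw [← hmod, Nat.mod_add_div], ?_, (mem_Icc.mp hn).2⟩
    exact (Nat.le_div_iff_mul_le hV).mpr (le_of_eq_of_le (by ring) (mem_Icc.mp hn).1)
  have hinj : Set.InjOn (fun n ↦ n / V) P := fun n hn n' hn' (h : n / V = n' / V) ↦ by
    rw [← (hmem hn).2.1, h, (hmem hn').2.1]
  have hterm : ∀ n ∈ P, Real.log n / n ≤ Real.log U / V * ((n / V : ℕ) : ℝ)⁻¹ := fun n hn ↦ by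
    obtain ⟨hprime, -, hW', hU⟩ := hmem hn
    have hpos : (0 : ℝ) < n := by exact_mod_cast hprime.pos
    have hdiv : (0 : ℝ) < (n / V : ℕ) := by exact_mod_cast (by omega : 0 < n / V)
    have hle : (V : ℝ) * (n / V : ℕ) ≤ n := by exact_mod_cast Nat.mul_div_le n V
    rw [← div_eq_mul_inv, div_div]
    gcongr
  calc ∑ n ∈ Icc (2 * V * W) U, primeWeight V b n = ∑ n ∈ P, Real.log n / n := by
        simp only [primeWeight, hP, sum_filter]
    _ ≤ ∑ n ∈ P, Real.log U / V * ((n / V : ℕ) : ℝ)⁻¹ := sum_le_sum hterm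
    _ = Real.log U / V * ∑ x ∈ P.image (· / V), (x : ℝ)⁻¹ := by
        rw [sum_image hinj, mul_sum]
    _ ≤ _ := by
        gcongr
        intro x hx
        obtain ⟨n, hn, rfl⟩ := mem_image.mp hx
        obtain ⟨hprime, hn, hW', hU⟩ := hmem hn
        exact mem_filter.mpr
          ⟨mem_Icc.mpr ⟨hW', (Nat.div_le_self n V).trans hU⟩, hn.symm ▸ hprime⟩

lemma sum_primeWeight_le_of_card_block_le {V b W Y U : ℕ} {R : ℝ} (hV : 0 < V) (hb : b < V)
    (hY : 0 < Y) (hYW : Y ≤ W) (hR : 0 ≤ R)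
    (hblock : ∀ u, W ≤ u → u ≤ U → (#{x ∈ Ico u (u + Y) | (b + V * x).Prime} : ℝ) ≤ R) :
    ∑ n ∈ Icc (2 * V * W) U, primeWeight V b n ≤
      Real.log U / V * (R / Y * (1 + Real.log (U / Y : ℕ))) := by
  refine (sum_primeWeight_le hV hb (by omega) U).trans
    (mul_le_mul_of_nonneg_left ?_ (by positivity))
  refine sum_inv_le_of_card_block_le hY hYW hR (filter_subset _ _) fun u hu hu' ↦ ?_
  refine (Nat.cast_le.mpr (card_le_card fun x hx ↦ ?_)).trans (hblock u hu hu')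
  simp only [mem_filter] at hx ⊢
  exact ⟨hx.2, hx.1.2⟩

lemma exists_prime_block_constant {M : ℕ} (hM : 4 ≤ M) :
    ∃ c : ℝ, 0 < c ∧ ∀ V b : ℕ, 0 < V → b < V → b.Coprime V → ∀ᶠ Z : ℕ in atTop,
      ∃ u, Z ^ (M - 1) ≤ u ∧ u ≤ Z ^ (M + 1) ∧
        c * totientRatio V * (Z : ℝ) ^ (M - 4) / Real.log Z ≤
          #{x ∈ Ico u (u + Z ^ (M - 4)) | (b + V * x).Prime} := by
  obtain ⟨κ, hκ, hwindow⟩ := exists_window_constant (by omega : 0 < M)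
  refine ⟨κ / (6 * (M + 1) + 1), by positivity, fun V b hV hbV hb ↦ ?_⟩
  have hφ : (0 : ℝ) < V.totient := by exact_mod_cast Nat.totient_pos.mpr hV
  filter_upwards [hwindow _ _ (primeWeight_nonneg V b) (inv_pos.mpr hφ)
    (hasSimplePole_primeWeight hV hb) (2 * V), eventually_ge_atTop 3] with Z hlower hZ
  have hZ' : (3 : ℝ) ≤ Z := by exact_mod_cast hZ
  have hlog : 1 ≤ Real.log Z := by
    rw [Real.le_log_iff_exp_le (by linarith)]
    linarith [Real.exp_one_lt_d9]
  by_contra! hcon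
  set R := κ / (6 * (M + 1) + 1) * totientRatio V * (Z : ℝ) ^ (M - 4) / Real.log Z with hR
  have hR₀ : 0 ≤ R := by have := totientRatio_pos hV; positivity
  have hupper := sum_primeWeight_le_of_card_block_le hV hbV (by positivity)
    (Nat.pow_le_pow_right (by omega) (by omega)) hR₀ fun u hu hu' ↦ (hcon u hu hu').le
  have hvalue : Real.log (Z ^ (M + 1) : ℕ) / V * (R / (Z ^ (M - 4) : ℕ) *
      (1 + Real.log (Z ^ (M + 1) / Z ^ (M - 4) : ℕ))) =
        κ / (6 * (M + 1) + 1) * (M + 1) * (1 + 5 * Real.log Z) / V.totient := by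
    have : (0 : ℝ) < V := by exact_mod_cast hV
    rw [Nat.pow_div (by omega) (by omega), (by omega : M + 1 - (M - 4) = 5), hR, totientRatio]
    push_cast [Real.log_pow]
    field_simp
  have hbound := hlower.trans (hupper.trans_eq hvalue)
  rw [mul_right_comm, ← div_eq_mul_inv, div_le_div_iff_of_pos_right hφ, div_mul_eq_mul_div,
    div_mul_eq_mul_div, le_div_iff₀ (by positivity)] at hbound
  nlinarith [mul_pos hκ (by linarith : 0 < Real.log Z), mul_nonneg hκ.le M.cast_nonneg (α := ℝ)]

end PrimeBlocks

/-! ### Exponential sums over a sparse sequence and their smoothed model -/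

/-- The exponential sum of the first `H` terms of the integer sequence `g` at frequency `α`. -/
noncomputable def sequenceSum (g : ℕ → ℤ) (H : ℕ) (α : ℝ) : ℂ :=
  ∑ s ∈ range H, (𝐞 (α * g s) : ℂ)

/-- The model of `sequenceSum g H α` in which the unit mass at `g s` is spread evenly over the
integers of `[g s, g (s + 1))`; it keeps only the main term of the circle method. -/
noncomputable def smoothedSum (g : ℕ → ℤ) (H : ℕ) (α : ℝ) : ℂ :=
  ∑ s ∈ range H, (((g (s + 1) - g s : ℤ) : ℝ)⁻¹ : ℂ) *
    ∑ y ∈ Ico (g s) (g (s + 1)), (𝐞 (α * y) : ℂ)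

lemma fourierChar_mul_intCast_sub_round (α : ℝ) (n : ℤ) : 𝐞 ((α - round α) * n) = 𝐞 (α * n) := by
  rw [← fourierChar_add_intCast ((α - round α) * n) (round α * n)]
  congr 1
  push_cast
  ring

lemma four_mul_abs_sub_round_le_norm_fourierChar_sub_one (α : ℝ) :
    4 * |α - round α| ≤ ‖(𝐞 α : ℂ) - 1‖ := by
  have hchar := fourierChar_mul_intCast_sub_round α 1
  rw [Int.cast_one, mul_one, mul_one] at hchar
  exact hchar ▸ four_mul_abs_le_norm_fourierChar_sub_one (abs_sub_round α)

lemma sum_Ico_fourierChar_mul_sub_one (α : ℝ) {a b : ℤ} (hab : a ≤ b) :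
    (∑ y ∈ Ico a b, (𝐞 (α * y) : ℂ)) * (𝐞 α - 1) = 𝐞 (α * b) - 𝐞 (α * a) := by
  induction b, hab using Int.leInduction with
  | base => simp
  | succ b hab ih =>
    have hstep : (𝐞 (α * (b + 1 : ℤ)) : ℂ) = 𝐞 (α * b) * 𝐞 α := by
      rw [← Circle.coe_mul, ← AddChar.map_add_eq_mul]
      congr 3
      push_cast
      ring
    rw [← insert_Ico_right_eq_Ico_add_one hab, sum_insert right_notMem_Ico, add_mul, ih, hstep]
    ring

lemma norm_sum_mul_sub_le_of_antitone {w : ℕ → ℝ} {z : ℕ → ℂ} (hz : ∀ s, ‖z s‖ ≤ 1)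
    (hw : ∀ s, 0 ≤ w s) (hanti : Antitone w) (n : ℕ) :
    ‖∑ s ∈ range n, (w s : ℂ) * (z (s + 1) - z s)‖ ≤ 2 * w 0 := by
  have hnorm (a : ℝ) (ha : 0 ≤ a) (s : ℕ) : ‖(a : ℂ) * z s‖ ≤ a := by
    rw [norm_mul, Complex.norm_of_nonneg ha]
    exact mul_le_of_le_one_right ha (hz s)
  have hboundary : ‖∑ s ∈ range n, (w s : ℂ) * (z (s + 1) - z s) - w n * z n‖ ≤
      2 * w 0 - w n := by
    induction n with
    | zero => simpa [two_mul] using hnorm (w 0) (hw 0) 0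
    | succ n ih =>
      have hsplit : ∑ s ∈ range (n + 1), (w s : ℂ) * (z (s + 1) - z s) - w (n + 1) * z (n + 1) =
          (∑ s ∈ range n, (w s : ℂ) * (z (s + 1) - z s) - w n * z n) +
            ((w n - w (n + 1) : ℝ) : ℂ) * z (n + 1) := by
        rw [sum_range_succ]; push_cast; ring
      rw [hsplit]
      linarith [norm_add_le (∑ s ∈ range n, (w s : ℂ) * (z (s + 1) - z s) - w n * z n)
        (((w n - w (n + 1) : ℝ) : ℂ) * z (n + 1)),
        hnorm _ (sub_nonneg.mpr (hanti n.le_succ)) (n + 1)]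
  linarith [norm_le_norm_sub_add (∑ s ∈ range n, (w s : ℂ) * (z (s + 1) - z s)) (w n * z n),
    hnorm _ (hw n) n]

section
variable {g : ℕ → ℤ}

lemma norm_smoothedSum_mul_abs_sub_round_le {δ : ℝ} (hδ : 0 < δ)
    (hstep : ∀ s, δ ≤ ((g (s + 1) - g s : ℤ) : ℝ))
    (hconvex : Monotone fun s ↦ g (s + 1) - g s) (H : ℕ) (α : ℝ) :
    ‖smoothedSum g H α‖ * |α - round α| ≤ 1 / (2 * δ) := by
  have hpos (s : ℕ) : 0 < ((g (s + 1) - g s : ℤ) : ℝ) := hδ.trans_le (hstep s)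
  have htele : smoothedSum g H α * (𝐞 α - 1) = ∑ s ∈ range H,
      ((((g (s + 1) - g s : ℤ) : ℝ)⁻¹ : ℝ) : ℂ) * (𝐞 (α * g (s + 1)) - 𝐞 (α * g s)) := by
    rw [smoothedSum, sum_mul]
    refine sum_congr rfl fun s _ ↦ ?_
    have hle : g s ≤ g (s + 1) := sub_nonneg.mp (by exact_mod_cast (hpos s).le)
    rw [mul_assoc, sum_Ico_fourierChar_mul_sub_one α hle, Complex.ofReal_inv]
  have habel := norm_sum_mul_sub_le_of_antitone (z := fun s ↦ (𝐞 (α * g s) : ℂ))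
    (fun s ↦ (Circle.norm_coe _).le) (fun s ↦ (inv_pos.mpr (hpos s)).le)
    (fun s t hst ↦ inv_anti₀ (hpos s) (by exact_mod_cast hconvex hst)) H
  rw [← htele, norm_mul] at habel
  have hfirst : (((g (0 + 1) - g 0 : ℤ) : ℝ))⁻¹ ≤ δ⁻¹ := inv_anti₀ hδ (hstep 0)
  have hscaled : ‖smoothedSum g H α‖ * (4 * |α - round α|) ≤ 2 * δ⁻¹ :=
    (mul_le_mul_of_nonneg_left (four_mul_abs_sub_round_le_norm_fourierChar_sub_one α)
      (norm_nonneg _)).trans (habel.trans (by linarith))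
  rw [one_div, mul_inv]
  linarith

lemma norm_fourierChar_sub_average_le {a b : ℤ} (hab : a < b) (α : ℝ) :
    ‖(𝐞 (α * a) : ℂ) - (((b - a : ℤ) : ℝ)⁻¹ : ℂ) * ∑ y ∈ Ico a b, (𝐞 (α * y) : ℂ)‖ ≤
      2 * Real.pi * |α - round α| * ((b - a : ℤ) : ℝ) := by
  set d : ℝ := ((b - a : ℤ) : ℝ) with hd
  have hdpos : 0 < d := Int.cast_pos.mpr (sub_pos.mpr hab)
  have hcard : (#(Ico a b) : ℝ) = d := by
    rw [Int.card_Ico, hd]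
    exact_mod_cast Int.toNat_of_nonneg (sub_nonneg.mpr hab.le)
  have hcardC : (#(Ico a b) : ℂ) = d := by exact_mod_cast congrArg Complex.ofReal hcard
  have haverage : (𝐞 (α * a) : ℂ) - ((d : ℝ)⁻¹ : ℂ) * ∑ y ∈ Ico a b, (𝐞 (α * y) : ℂ) =
      ((d⁻¹ : ℝ) : ℂ) * ∑ y ∈ Ico a b, ((𝐞 (α * a) : ℂ) - 𝐞 (α * y)) := by
    rw [sum_sub_distrib, sum_const, nsmul_eq_mul, hcardC, mul_sub, ← mul_assoc, Complex.ofReal_inv,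
      inv_mul_cancel₀ (Complex.ofReal_ne_zero.mpr hdpos.ne'), one_mul]
  have hterm (y : ℤ) (hy : y ∈ Ico a b) :
      ‖(𝐞 (α * a) : ℂ) - 𝐞 (α * y)‖ ≤ 2 * Real.pi * |α - round α| * d := by
    obtain ⟨hay, hyb⟩ := mem_Ico.mp hy
    have hdist : |(a : ℝ) - y| ≤ d := by
      rw [abs_sub_comm, abs_of_nonneg (by exact_mod_cast sub_nonneg.mpr hay)]
      rw [hd]
      exact_mod_cast sub_le_sub_right hyb.le a
    rw [← fourierChar_mul_intCast_sub_round, ← fourierChar_mul_intCast_sub_round α y]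
    calc _ ≤ 2 * Real.pi * |(α - round α) * a - (α - round α) * y| := norm_fourierChar_sub_le _ _
      _ = 2 * Real.pi * |α - round α| * |(a : ℝ) - y| := by rw [← mul_sub, abs_mul, mul_assoc _ |_|]
      _ ≤ _ := by gcongr
  rw [haverage, norm_mul, Complex.norm_of_nonneg (inv_pos.mpr hdpos).le, inv_mul_le_iff₀ hdpos]
  calc _ ≤ #(Ico a b) • (2 * Real.pi * |α - round α| * d) :=
        (norm_sum_le_of_le _ hterm).trans (sum_const _).le
    _ = _ := by rw [nsmul_eq_mul, hcard]

lemma norm_sequenceSum_sub_smoothedSum_le (hg : StrictMono g) {H : ℕ} {Δ : ℝ}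
    (hΔ : ∀ s < H, ((g (s + 1) - g s : ℤ) : ℝ) ≤ Δ) (α : ℝ) :
    ‖sequenceSum g H α - smoothedSum g H α‖ ≤ 2 * Real.pi * |α - round α| * Δ * H := by
  rw [sequenceSum, smoothedSum, ← sum_sub_distrib]
  calc _ ≤ ∑ _s ∈ range H, 2 * Real.pi * |α - round α| * Δ := norm_sum_le_of_le _ fun s hs ↦
        (norm_fourierChar_sub_average_le (hg s.lt_succ_self) α).trans
          (mul_le_mul_of_nonneg_left (hΔ s (mem_range.mp hs)) (by positivity))
    _ = _ := by rw [sum_const, card_range, nsmul_eq_mul, mul_comm]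

/-! ### Cancellation at moduli where the sequence behaves like a translation -/

lemma norm_sum_range_shift_sub_le {f : ℕ → ℂ} (hf : ∀ s, ‖f s‖ ≤ 1) (H q : ℕ) :
    ‖∑ s ∈ range H, f (s + q) - ∑ s ∈ range H, f s‖ ≤ 2 * q := by
  have hends : ∑ s ∈ range H, f (s + q) - ∑ s ∈ range H, f s =
      ∑ s ∈ range q, f (H + s) - ∑ s ∈ range q, f s := by
    have hH := sum_range_add f q H
    have hq := sum_range_add f H q
    rw [add_comm q H, hq] at hH
    simp only [add_comm _ q]
    linear_combination -hH
  have hbound (i : ℕ) : ‖∑ s ∈ range q, f (i + s)‖ ≤ q := by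
    simpa using norm_sum_le_of_le (range q) fun s _ ↦ hf (i + s)
  calc _ ≤ ‖∑ s ∈ range q, f (H + s)‖ + ‖∑ s ∈ range q, f s‖ := by rw [hends]; exact norm_sub_le _ _
    _ ≤ _ := by linarith [hbound H, by simpa using hbound 0]

lemma norm_sub_one_mul_norm_sum_le {f : ℕ → ℂ} (hf : ∀ s, ‖f s‖ ≤ 1) {H q : ℕ} {ζ : ℂ} {ε : ℝ}
    (hshift : ∀ s < H, ‖f (s + q) - ζ * f s‖ ≤ ε) :
    ‖ζ - 1‖ * ‖∑ s ∈ range H, f s‖ ≤ 2 * q + H * ε := by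
  have htwisted : ‖∑ s ∈ range H, f (s + q) - ζ * ∑ s ∈ range H, f s‖ ≤ H * ε := by
    rw [mul_sum, ← sum_sub_distrib]
    simpa using norm_sum_le_of_le (range H) fun s hs ↦ hshift s (mem_range.mp hs)
  have hsplit : (ζ - 1) * ∑ s ∈ range H, f s =
      (∑ s ∈ range H, f (s + q) - ∑ s ∈ range H, f s) -
        (∑ s ∈ range H, f (s + q) - ζ * ∑ s ∈ range H, f s) := by ring
  rw [← norm_mul, hsplit]
  linarith [norm_sub_le (∑ s ∈ range H, f (s + q) - ∑ s ∈ range H, f s)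
    (∑ s ∈ range H, f (s + q) - ζ * ∑ s ∈ range H, f s), norm_sum_range_shift_sub_le hf H q]

lemma sub_le_mul_of_step_le {N : ℕ} {Δ : ℝ} (hΔ : ∀ s < N, ((g (s + 1) - g s : ℤ) : ℝ) ≤ Δ)
    {s q : ℕ} (hsq : s + q ≤ N) : (g (s + q) : ℝ) - g s ≤ q * Δ := by
  induction q with
  | zero => simp
  | succ q ih =>
    have hlast := hΔ (s + q) (by omega)
    push_cast at hlast
    rw [← add_assoc]
    push_cast
    linarith [ih (by omega)]

lemma four_div_le_norm_fourierChar_div_sub_one {a : ℤ} {p : ℕ} (hp : 0 < p) (hpa : ¬ (p : ℤ) ∣ a) :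
    4 / (p : ℝ) ≤ ‖(𝐞 (a / p) : ℂ) - 1‖ := by
  have hp' : (0 : ℝ) < p := by exact_mod_cast hp
  have hne : a - p * round ((a : ℝ) / p) ≠ 0 := fun h ↦ hpa ⟨_, sub_eq_zero.mp h⟩
  have hone : (1 : ℝ) ≤ |((a - p * round ((a : ℝ) / p) : ℤ) : ℝ)| := by
    exact_mod_cast Int.one_le_abs hne
  refine le_trans ?_ (four_mul_abs_sub_round_le_norm_fourierChar_sub_one _)
  have hfrac : (a : ℝ) / p - round ((a : ℝ) / p) = ((a - p * round ((a : ℝ) / p) : ℤ) : ℝ) / p := by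
    push_cast
    field_simp
  rw [hfrac, abs_div, abs_of_pos hp', mul_div_assoc']
  gcongr
  linarith

lemma norm_fourierChar_shift_sub_le {α β : ℝ} {a x y : ℤ} {p q : ℕ} (hp : 0 < p) (hq : 0 < q)
    (hα : α = a / (p * q) + β) (hxy : (p * q : ℤ) ∣ y - x - q) :
    ‖(𝐞 (α * y) : ℂ) - 𝐞 (a / p) * 𝐞 (α * x)‖ ≤ 2 * Real.pi * (|β| * |(y : ℝ) - x|) := by
  have hp' : (p : ℝ) ≠ 0 := by exact_mod_cast hp.ne'
  have hq' : (q : ℝ) ≠ 0 := by exact_mod_cast hq.ne'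
  obtain ⟨m, hm⟩ := hxy
  have hy : (y : ℝ) = x + q + p * q * m := by
    have : (y : ℝ) - x - q = p * q * m := by exact_mod_cast hm
    linarith
  have hphase_y : α * y = (a / p + a / (p * q) * x + β * y) + ((a * m : ℤ) : ℝ) := by
    rw [hα, add_mul]
    nth_rewrite 1 [hy]
    push_cast
    field_simp
    ring
  have hphase_x : a / p + α * x = (a / p + a / (p * q) * x) + β * x := by rw [hα]; ring
  rw [← Circle.coe_mul, ← AddChar.map_add_eq_mul, hphase_x, hphase_y, fourierChar_add_intCast]
  refine (norm_fourierChar_sub_le _ _).trans_eq ?_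
  rw [add_sub_add_left_eq_sub, ← mul_sub, abs_mul]

lemma norm_sequenceSum_le_of_translation (hg : StrictMono g) {H p q : ℕ} {α β Δ : ℝ} {a : ℤ}
    (hp : 0 < p) (hq : 0 < q) (hpa : ¬ (p : ℤ) ∣ a) (hα : α = a / (p * q) + β)
    (htrans : ∀ s, (p * q : ℤ) ∣ g (s + q) - g s - q)
    (hΔ : ∀ s < H + q, ((g (s + 1) - g s : ℤ) : ℝ) ≤ Δ) :
    ‖sequenceSum g H α‖ ≤ p * q + 2 * |β| * H * (p * q) * Δ := by
  have hp' : (0 : ℝ) < p := by exact_mod_cast hp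
  have : 0 ≤ Δ := le_trans
    (by exact_mod_cast sub_nonneg.mpr (hg.monotone (zero_le_one (α := ℕ)))) (hΔ 0 (by omega))
  have hterm (s : ℕ) (hs : s < H) : ‖(𝐞 (α * g (s + q)) : ℂ) - 𝐞 (a / p) * 𝐞 (α * g s)‖ ≤
      2 * 4 * (|β| * (q * Δ)) := by
    have hincrement : |(g (s + q) : ℝ) - g s| ≤ q * Δ := by
      rw [abs_of_nonneg (by exact_mod_cast sub_nonneg.mpr (hg.monotone (s.le_add_right q)))]
      exact sub_le_mul_of_step_le hΔ (by omega)
    refine (norm_fourierChar_shift_sub_le hp hq hα (htrans s)).trans ?_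
    gcongr
    exact Real.pi_le_four
  have hsum := norm_sub_one_mul_norm_sum_le (f := fun s ↦ (𝐞 (α * g s) : ℂ))
    (fun s ↦ (Circle.norm_coe _).le) hterm
  have hlower : 4 / (p : ℝ) * ‖sequenceSum g H α‖ ≤ 2 * q + H * (2 * 4 * (|β| * (q * Δ))) :=
    (mul_le_mul_of_nonneg_right (four_div_le_norm_fourierChar_div_sub_one hp hpa)
      (norm_nonneg _)).trans hsum
  rw [div_mul_eq_mul_div, div_le_iff₀ hp'] at hlower
  have : (0 : ℝ) ≤ p * q := by positivity
  linarith

end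

/-! ### The Weyl dichotomy for polynomial sequences -/

/-- The values of `G` at `t`, `t + 1`, `t + 2`, … -/
def valuesFrom (G : ℤ[X]) (t : ℤ) (s : ℕ) : ℤ := G.eval (t + s)

/-- `G` acts like a translation at the primes `p ≤ w` and at those dividing its leading
coefficient: the increment of `G` along `q` agrees with `q` modulo `p * q`. Frequencies whose
denominator is divisible by such a prime then give exponential sums with full cancellation. -/
def TranslationAtSmallPrimes (G : ℤ[X]) (w : ℕ) : Prop :=
  ∀ p : ℕ, p.Prime → p ≤ w ∨ (p : ℤ) ∣ G.leadingCoeff →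
    ∀ (q : ℕ) (t : ℤ), (p * q : ℤ) ∣ G.eval (t + q) - G.eval t - q

/-- The interval `[t, t + H)` is a window for `G` at scale `Z`: there the values of `G` increase
convexly with steps between `δ` and `Δ`, and `H` is so long that frequencies within
`Z / H ^ G.natDegree` of fractions with denominators up to `Z` are well separated and under
control. -/
structure IsWindow (G : ℤ[X]) (Z : ℝ) (t : ℤ) (H : ℕ) (δ Δ : ℝ) : Prop where
  length_pos : 0 < H
  step_pos : 0 < δ
  le_step : ∀ s, δ ≤ ((valuesFrom G t (s + 1) - valuesFrom G t s : ℤ) : ℝ)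
  monotone_step : Monotone fun s ↦ valuesFrom G t (s + 1) - valuesFrom G t s
  step_le : ∀ s < 2 * H, ((valuesFrom G t (s + 1) - valuesFrom G t s : ℤ) : ℝ) ≤ Δ
  leadingCoeff_mul_le : G.leadingCoeff * Z ≤ H
  sq_mul_le_step : 7 * Z ^ 2 * Δ ≤ 2 * δ * H
  sq_mul_le_pow : 7 * Z ^ 2 * Δ ≤ (H : ℝ) ^ G.natDegree
  translation_bound : G.leadingCoeff * Z +
    2 * (Z / (H : ℝ) ^ G.natDegree) * H * (G.leadingCoeff * Z) * Δ < H / Z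
  pow_five_lt : 2 * Z ^ 5 < (H : ℝ) ^ G.natDegree

namespace IsWindow
variable {G : ℤ[X]} {Z δ Δ : ℝ} {t : ℤ} {H : ℕ} (hwin : IsWindow G Z t H δ Δ)
include hwin

lemma strictMono : StrictMono (valuesFrom G t) :=
  strictMono_nat_of_lt_succ fun s ↦ sub_pos.mp
    (by exact_mod_cast hwin.step_pos.trans_le (hwin.le_step s))

lemma maxStep_pos : 0 < Δ :=
  hwin.step_pos.trans_le ((hwin.le_step 0).trans (hwin.step_le 0 (by linarith [hwin.length_pos])))

lemma norm_sub_le_of_near_integer {D α : ℝ} (hD : 0 < D)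
    (hα : |α - round α| ≤ 1 / (7 * D * Δ)) :
    ‖sequenceSum (valuesFrom G t) H α - smoothedSum (valuesFrom G t) H α‖ ≤ 2 * H / D := by
  have := hwin.maxStep_pos
  calc _ ≤ 2 * Real.pi * |α - round α| * Δ * H :=
        norm_sequenceSum_sub_smoothedSum_le hwin.strictMono
          (fun s hs ↦ hwin.step_le s (by linarith)) α
    _ ≤ 2 * 7 * (1 / (7 * D * Δ)) * Δ * H := by
        gcongr
        linarith [Real.pi_le_four]
    _ = _ := by field_simp

lemma norm_smoothedSum_le {D α : ℝ} (hD : 0 < D) (hDZ : D ≤ Z)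
    (hα : 1 / (7 * D * Δ) < |α - round α|) :
    ‖smoothedSum (valuesFrom G t) H α‖ ≤ H / D := by
  have hδ := hwin.step_pos
  have := hwin.maxStep_pos
  have hmodel : ‖smoothedSum (valuesFrom G t) H α‖ * (1 / (7 * D * Δ)) ≤ 1 / (2 * δ) :=
    (mul_le_mul_of_nonneg_left hα.le (norm_nonneg _)).trans
      (norm_smoothedSum_mul_abs_sub_round_le hδ hwin.le_step hwin.monotone_step H α)
  rw [mul_one_div, div_le_div_iff₀ (by positivity) (by positivity), one_mul] at hmodel
  rw [le_div_iff₀ hD]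
  refine le_of_mul_le_mul_right ?_ (by positivity : 0 < 2 * δ)
  calc ‖smoothedSum (valuesFrom G t) H α‖ * D * (2 * δ)
      = ‖smoothedSum (valuesFrom G t) H α‖ * (2 * δ) * D := by ring
    _ ≤ 7 * D * Δ * D := by gcongr
    _ = 7 * D ^ 2 * Δ := by ring
    _ ≤ 7 * Z ^ 2 * Δ := by gcongr
    _ ≤ 2 * δ * H := hwin.sq_mul_le_step
    _ = H * (2 * δ) := by ring

lemma not_dvd_den_of_translation {α : ℝ} {r : ℚ} {p : ℕ} (hp : p.Prime)
    (htrans : ∀ (q : ℕ) (t : ℤ), (p * q : ℤ) ∣ G.eval (t + q) - G.eval t - q)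
    (hden : (r.den : ℝ) ≤ G.leadingCoeff * Z) (hr : |α - r| ≤ Z / (H : ℝ) ^ G.natDegree)
    (hlarge : H / Z ≤ ‖sequenceSum (valuesFrom G t) H α‖) : ¬ p ∣ r.den := by
  rintro ⟨q, hq⟩
  have hq0 : 0 < q := Nat.pos_of_ne_zero fun h ↦ r.den_ne_zero (by rw [hq, h, mul_zero])
  have hnum : ¬ (p : ℤ) ∣ r.num := fun h ↦ hp.not_dvd_one
    (r.reduced ▸ Nat.dvd_gcd (Int.natCast_dvd.mp h) ⟨q, hq⟩)
  have hqH : q ≤ H := by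
    have hpq : p * q ≤ H := by
      rw [← hq]
      exact_mod_cast hden.trans hwin.leadingCoeff_mul_le
    exact (Nat.le_mul_of_pos_left q hp.pos).trans hpq
  have hα : α = r.num / (p * q) + (α - r) := by
    rw [← Nat.cast_mul, ← hq, ← Rat.cast_def]
    ring
  have hbound := norm_sequenceSum_le_of_translation hwin.strictMono hp.pos hq0 hnum hα
    (fun s ↦ by simpa only [valuesFrom, Nat.cast_add, add_assoc] using htrans q (t + s))
    (H := H) (fun s hs ↦ hwin.step_le s (by omega))
  have := hwin.maxStep_pos
  have : 0 ≤ Z / (H : ℝ) ^ G.natDegree := (abs_nonneg _).trans hr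
  rw [← Nat.cast_mul, ← hq] at hbound
  have : (r.den : ℝ) + 2 * |α - r| * H * r.den * Δ ≤ G.leadingCoeff * Z +
      2 * (Z / (H : ℝ) ^ G.natDegree) * H * (G.leadingCoeff * Z) * Δ := by gcongr
  linarith [hwin.translation_bound]

end IsWindow

lemma WeylInverse.mono {k C C' : ℕ} (hC : WeylInverse k C) (hCC' : C ≤ C') : WeylInverse k C' := by
  intro g hg H D hH hD hlarge
  have : D ^ C ≤ D ^ C' := pow_le_pow_right₀ (by linarith) hCC'
  obtain ⟨q, a, hq, hqD, hqa⟩ := hC g hg H D hH hD hlarge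
  exact ⟨q, a, hq, hqD.trans this, hqa.trans this⟩

lemma WeylInverse.exists_approx_of_le_norm_sequenceSum {G : ℤ[X]} {C : ℕ}
    (hC : WeylInverse G.natDegree C) (t : ℤ) {H : ℕ} (hH : 1 ≤ H) {D α : ℝ} (hD : 2 ≤ D)
    (hlarge : H ≤ D * ‖sequenceSum (valuesFrom G t) H α‖) :
    ∃ (q : ℕ) (a : ℤ), 1 ≤ q ∧ q ≤ D ^ C ∧
      |q * (α * G.leadingCoeff) - a| * (H : ℝ) ^ G.natDegree ≤ D ^ C := by
  set g : ℝ[X] := Polynomial.C α * (taylor t G).map (Int.castRingHom ℝ) with hg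
  have hdeg : g.natDegree ≤ G.natDegree :=
    (natDegree_C_mul_le _ _).trans (natDegree_map_le.trans_eq (natDegree_taylor G t))
  have hcoeff : g.coeff G.natDegree = α * G.leadingCoeff := by
    have := leadingCoeff_taylor (r := t) (f := G)
    rw [leadingCoeff, natDegree_taylor] at this
    rw [hg, coeff_C_mul, coeff_map, this, eq_intCast]
  have hsum : weylSum g H = sequenceSum (valuesFrom G t) H α := by
    refine sum_congr rfl fun s _ ↦ ?_
    have hs : (s : ℝ) = Int.castRingHom ℝ s := by simp
    rw [hg, eval_mul, eval_C, hs, eval_map_apply, taylor_eval, valuesFrom, add_comm, eq_intCast]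
  rw [← hcoeff]
  exact hC g hdeg H D hH hD (hsum ▸ hlarge)

lemma exists_rat_den_dvd_abs_sub_le {α ε : ℝ} {q l : ℕ} {a : ℤ} (hq : 0 < q) (hl : 0 < l)
    (ha : |q * (α * l) - a| ≤ ε) : ∃ r : ℚ, r.den ∣ q * l ∧ |α - r| ≤ ε := by
  refine ⟨Rat.divInt a (q * l : ℕ), by exact_mod_cast Rat.den_dvd a (q * l : ℕ), ?_⟩
  have hq' : (1 : ℝ) ≤ q := by exact_mod_cast hq
  have hl' : (1 : ℝ) ≤ l := by exact_mod_cast hl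
  have hsplit : α - (Rat.divInt a (q * l : ℕ) : ℚ) = (q * (α * l) - a) / (q * l) := by
    rw [Rat.divInt_eq_div]
    push_cast
    field_simp
  rw [hsplit, abs_div, abs_of_pos (by positivity : (0 : ℝ) < q * l)]
  exact (div_le_self (abs_nonneg _) (one_le_mul_of_one_le_of_one_le hq' hl')).trans ha

lemma dvd_and_eq_one_or_lt_of_forall_prime_not_dvd {n q l w : ℕ} (hn : 0 < n) (hdvd : n ∣ q * l)
    (hprime : ∀ p : ℕ, p.Prime → p ≤ w ∨ p ∣ l → ¬ p ∣ n) : n ∣ q ∧ (n = 1 ∨ w < n) := by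
  have hcoprime : n.Coprime l := Nat.coprime_of_dvd fun p hp hpn hpl ↦ hprime p hp (.inr hpl) hpn
  refine ⟨hcoprime.dvd_of_dvd_mul_right hdvd, or_iff_not_imp_left.mpr fun hne ↦ ?_⟩
  by_contra! hle
  exact hprime _ (Nat.minFac_prime hne) (.inl ((Nat.minFac_le hn).trans hle)) (Nat.minFac_dvd _)

namespace IsWindow
variable {G : ℤ[X]} {Z δ Δ : ℝ} {t : ℤ} {H w C : ℕ}

lemma exists_rat_of_large (hwin : IsWindow G Z t H δ Δ) (hlead : 0 < G.leadingCoeff)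
    (htrans : TranslationAtSmallPrimes G w) (hC : WeylInverse G.natDegree C) {D α : ℝ}
    (hD : 2 ≤ D) (hDZ : D ≤ Z) (hDC : D ^ C ≤ Z)
    (hlarge : H / D ≤ ‖sequenceSum (valuesFrom G t) H α‖) :
    ∃ r : ℚ, (r.den = 1 ∨ w < r.den) ∧ r.den ≤ D ^ C ∧ |α - r| ≤ Z / (H : ℝ) ^ G.natDegree := by
  have hH : (0 : ℝ) < H := by exact_mod_cast hwin.length_pos
  obtain ⟨l, hl⟩ := Int.eq_ofNat_of_zero_le hlead.le
  have hl0 : 0 < l := by omega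
  have hlR : (G.leadingCoeff : ℝ) = l := by exact_mod_cast congrArg (Int.cast : ℤ → ℝ) hl
  obtain ⟨q, a, hq, hqD, hqa⟩ := hC.exists_approx_of_le_norm_sequenceSum t hwin.length_pos hD
    ((div_le_iff₀' (by linarith)).mp hlarge)
  rw [hlR] at hqa
  obtain ⟨r, hden, hr⟩ := exists_rat_den_dvd_abs_sub_le hq hl0
    ((le_div_iff₀ (by positivity)).mpr (hqa.trans hDC))
  have hden_le : (r.den : ℝ) ≤ G.leadingCoeff * Z := by
    calc (r.den : ℝ) ≤ (q * l : ℕ) := by exact_mod_cast Nat.le_of_dvd (by positivity) hden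
      _ = l * q := by push_cast; ring
      _ ≤ G.leadingCoeff * Z := by rw [hlR]; gcongr; exact hqD.trans hDC
  have hHZ : H / Z ≤ ‖sequenceSum (valuesFrom G t) H α‖ := le_trans (by gcongr) hlarge
  obtain ⟨hden_dvd, hden_gt⟩ := dvd_and_eq_one_or_lt_of_forall_prime_not_dvd r.den_pos hden
    fun p hp hpw ↦ hwin.not_dvd_den_of_translation hp
      (htrans p hp (hpw.imp_right fun h ↦ hl ▸ Int.natCast_dvd_natCast.mpr h)) hden_le hr hHZ
  exact ⟨r, hden_gt, le_trans (by exact_mod_cast Nat.le_of_dvd hq hden_dvd) hqD, hr⟩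

lemma norm_sub_le_or_exists_approx (hwin : IsWindow G Z t H δ Δ) (hlead : 0 < G.leadingCoeff)
    (htrans : TranslationAtSmallPrimes G w) (hC : WeylInverse G.natDegree C) {D : ℝ}
    (hD : 2 ≤ D) (hDZ : D ≤ Z) (hDC : D ^ C ≤ Z) (α : ℝ) :
    ‖sequenceSum (valuesFrom G t) H α - smoothedSum (valuesFrom G t) H α‖ ≤ 2 * H / D ∨
      ∃ (q : ℕ) (a : ℤ), w < q ∧ q ≤ D ^ C ∧ |α - a / q| ≤ Z / (H : ℝ) ^ G.natDegree := by
  have hΔ := hwin.maxStep_pos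
  rcases le_or_gt |α - round α| (1 / (7 * D * Δ)) with hnear | hfar
  · exact .inl (hwin.norm_sub_le_of_near_integer (by linarith) hnear)
  have hmodel := hwin.norm_smoothedSum_le (by linarith) hDZ hfar
  rcases le_total ‖sequenceSum (valuesFrom G t) H α‖ (H / D) with hsmall | hlarge
  · left
    linarith [norm_sub_le (sequenceSum (valuesFrom G t) H α) (smoothedSum (valuesFrom G t) H α),
      add_halves (2 * H / D), mul_div_assoc 2 (H : ℝ) D]
  obtain ⟨r, hden, hle, hr⟩ := hwin.exists_rat_of_large hlead htrans hC hD hDZ hDC hlarge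
  rw [Rat.cast_def] at hr
  refine .inr ⟨r.den, r.num, hden.resolve_left fun hone ↦ ?_, hle, hr⟩
  have hint : |α - round α| ≤ Z / (H : ℝ) ^ G.natDegree :=
    (round_le α r.num).trans (by simpa [hone] using hr)
  refine absurd (hint.trans ?_) hfar.not_ge
  rw [div_le_div_iff₀ (pow_pos (by exact_mod_cast hwin.length_pos) _) (by positivity), one_mul]
  calc Z * (7 * D * Δ) ≤ Z * (7 * Z * Δ) := by gcongr; linarith
    _ = 7 * Z ^ 2 * Δ := by ring
    _ ≤ _ := hwin.sq_mul_le_pow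

end IsWindow

/-! ### Existence of windows -/

section Growth
open Filter

lemma eventually_eval_natCast_bounds {P : ℤ[X]} {n : ℕ} (hn : P.natDegree ≤ n)
    (hpos : 0 < P.coeff n) :
    ∀ᶠ t : ℕ in atTop, P.coeff n / 2 * (t : ℝ) ^ n ≤ (P.eval (t : ℤ) : ℤ) ∧
      (P.eval (t : ℤ) : ℤ) ≤ 2 * P.coeff n * (t : ℝ) ^ n := by
  have hdeg : P.natDegree = n := le_antisymm hn (le_natDegree_of_ne_zero hpos.ne')
  have : (0 : ℝ) < P.coeff n := by exact_mod_cast hpos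
  have heval (t : ℕ) : (P.map (Int.castRingHom ℝ)).eval (t : ℝ) = (P.eval (t : ℤ) : ℤ) := by
    rw [← map_natCast (Int.castRingHom ℝ), eval_map_apply, eq_intCast]
  have hequiv := (P.map (Int.castRingHom ℝ)).isEquivalent_atTop_lead.isLittleO.def
    (by norm_num : (0 : ℝ) < 1 / 2)
  filter_upwards [tendsto_natCast_atTop_atTop.eventually hequiv] with t ht
  have : 0 ≤ P.coeff n * (t : ℝ) ^ n := by positivity
  rw [leadingCoeff, natDegree_map_eq_of_injective Int.cast_injective, hdeg, coeff_map, eq_intCast,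
    Pi.sub_apply, heval, Real.norm_eq_abs, Real.norm_of_nonneg this, abs_le] at ht
  constructor <;> linarith

/-- Half the derivative of the leading term of `G` at `t`, a lower bound for the steps of the values
of `G` from `t` on when `t` is large. -/
noncomputable def stepScale (G : ℤ[X]) (t : ℕ) : ℝ :=
  G.leadingCoeff * G.natDegree / 2 * (t : ℝ) ^ (G.natDegree - 1)

/-- From `t₁` on, `G` and its first difference are within a factor `2` of their leading terms, and
the second difference is nonnegative. -/
structure GrowsRegularlyFrom (G : ℤ[X]) (t₁ : ℕ) : Prop where
  one_le : 1 ≤ t₁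
  le_eval : ∀ t : ℕ, t₁ ≤ t → G.leadingCoeff / 2 * (t : ℝ) ^ G.natDegree ≤ (G.eval (t : ℤ) : ℤ)
  eval_le : ∀ t : ℕ, t₁ ≤ t → (G.eval (t : ℤ) : ℤ) ≤ 2 * G.leadingCoeff * (t : ℝ) ^ G.natDegree
  le_step : ∀ t : ℕ, t₁ ≤ t → stepScale G t ≤ (G.eval (t + 1 : ℤ) - G.eval (t : ℤ) : ℤ)
  step_le : ∀ t : ℕ, t₁ ≤ t → (G.eval (t + 1 : ℤ) - G.eval (t : ℤ) : ℤ) ≤ 4 * stepScale G t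
  step_le_step_succ : ∀ t : ℕ, t₁ ≤ t →
    G.eval (t + 1 : ℤ) - G.eval (t : ℤ) ≤ G.eval (t + 2 : ℤ) - G.eval (t + 1 : ℤ)

lemma exists_growsRegularlyFrom {G : ℤ[X]} (hdeg : 2 ≤ G.natDegree) (hlead : 0 < G.leadingCoeff) :
    ∃ t₁, GrowsRegularlyFrom G t₁ := by
  obtain ⟨j, hj⟩ : ∃ j, G.natDegree = j + 2 := ⟨G.natDegree - 2, by omega⟩
  have hcoeff : G.coeff (j + 2) = G.leadingCoeff := by rw [leadingCoeff, hj]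
  set G₁ := taylor 1 G - G with hG₁
  have hdeg₁ : G₁.natDegree ≤ j + 1 := natDegree_taylor_sub_self_le hj.le 1
  have hcoeff₁ : G₁.coeff (j + 1) = (j + 2) * G.leadingCoeff := by
    rw [coeff_taylor_sub_self hj.le, hcoeff]
    push_cast
    ring
  have hdeg₂ : (taylor 1 G₁ - G₁).natDegree ≤ j := natDegree_taylor_sub_self_le hdeg₁ 1
  have hcoeff₂ : (taylor 1 G₁ - G₁).coeff j = (j + 1) * ((j + 2) * G.leadingCoeff) := by
    rw [coeff_taylor_sub_self hdeg₁, hcoeff₁, mul_one]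
  have hgrowth := eventually_eval_natCast_bounds hj.le (hcoeff ▸ hlead)
  have hgrowth₁ := eventually_eval_natCast_bounds hdeg₁ (by rw [hcoeff₁]; positivity)
  have hgrowth₂ := eventually_eval_natCast_bounds hdeg₂ (by rw [hcoeff₂]; positivity)
  obtain ⟨t₁, ht₁⟩ := eventually_atTop.mp
    ((eventually_ge_atTop 1).and (hgrowth.and (hgrowth₁.and hgrowth₂)))
  simp only [hcoeff, hcoeff₁, hcoeff₂] at ht₁
  simp only [hG₁, eval_sub, taylor_eval] at ht₁
  have hscale (t : ℕ) : stepScale G t =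
      ((j + 2) * G.leadingCoeff : ℤ) / 2 * (t : ℝ) ^ (j + 1) := by
    rw [stepScale, hj, Nat.add_sub_assoc one_le_two]
    push_cast
    ring
  refine ⟨t₁, (ht₁ t₁ le_rfl).1, fun t ht ↦ ?_, fun t ht ↦ ?_, fun t ht ↦ ?_, fun t ht ↦ ?_,
    fun t ht ↦ ?_⟩
  · exact hj ▸ (ht₁ t ht).2.1.1
  · exact hj ▸ (ht₁ t ht).2.1.2
  · exact hscale t ▸ (ht₁ t ht).2.2.1.1
  · exact (ht₁ t ht).2.2.1.2.trans_eq (by rw [hscale]; ring)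
  · have hnonneg := Int.cast_nonneg_iff.mp (le_trans (by positivity) (ht₁ t ht).2.2.2.1)
    rw [add_assoc, one_add_one_eq_two] at hnonneg
    exact sub_nonneg.mp hnonneg

end Growth

lemma exists_le_lt_succ_of_strictMono {f : ℕ → ℤ} (hf : StrictMono f) {U : ℤ} (hU : f 0 ≤ U) :
    ∃ n, f n ≤ U ∧ U < f (n + 1) := by
  have hex : ∃ n, U < f n := by
    by_contra! hle
    exact hf.not_bddAbove_range_of_isSuccArchimedean ⟨U, by rintro _ ⟨n, rfl⟩; exact hle n⟩
  obtain ⟨n, hn⟩ := Nat.exists_eq_add_one_of_ne_zero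
    (n := Nat.find hex) fun h ↦ (h ▸ Nat.find_spec hex).not_ge hU
  exact ⟨n, not_lt.mp (Nat.find_min hex (hn ▸ n.lt_succ_self)), hn ▸ Nat.find_spec hex⟩

lemma isWindow_of_pow_le {G : ℤ[X]} {Z δ Δ : ℝ} {t : ℤ} {H : ℕ} (hdeg : 1 ≤ G.natDegree)
    (hδ : 0 < δ) (hle : ∀ s, δ ≤ ((valuesFrom G t (s + 1) - valuesFrom G t s : ℤ) : ℝ))
    (hmono : Monotone fun s ↦ valuesFrom G t (s + 1) - valuesFrom G t s)
    (hupper : ∀ s < 2 * H, ((valuesFrom G t (s + 1) - valuesFrom G t s : ℤ) : ℝ) ≤ Δ)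
    (hZ : 8 ≤ Z) (hlead : 8 * G.leadingCoeff ≤ Z) (hratio : 4 * Δ ≤ Z * δ)
    (hlength : Z ^ 6 ≤ H) (hpow : Z ^ 5 * Δ ≤ (H : ℝ) ^ G.natDegree) :
    IsWindow G Z t H δ Δ := by
  have hH : (0 : ℝ) < H := lt_of_lt_of_le (by positivity) hlength
  have hH1 : 0 < H := by exact_mod_cast hH
  have hΔ : 0 < Δ := hδ.trans_le ((hle 0).trans (hupper 0 (by omega)))
  have hlinear : 4 * (G.leadingCoeff * Z) ≤ Z ^ 2 := by nlinarith
  have htranslation : 2 * (Z / (H : ℝ) ^ G.natDegree) * H * (G.leadingCoeff * Z) * Δ ≤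
      H / (4 * Z) := by
    calc 2 * (Z / (H : ℝ) ^ G.natDegree) * H * (G.leadingCoeff * Z) * Δ
        = 2 * (G.leadingCoeff * Z) * (Z * Δ) * H / (H : ℝ) ^ G.natDegree := by ring
      _ ≤ Z ^ 2 * (Z * Δ) * H / (Z ^ 5 * Δ) := by gcongr; linarith [sq_nonneg Z]
      _ = H / Z ^ 2 := by field_simp
      _ ≤ H / (4 * Z) := by gcongr; nlinarith
  refine ⟨hH1, hδ, hle, hmono, hupper, ?_, ?_, ?_, ?_, ?_⟩
  · calc (G.leadingCoeff : ℝ) * Z ≤ Z ^ 2 := by nlinarith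
      _ ≤ Z ^ 6 := pow_le_pow_right₀ (by linarith) (by norm_num)
      _ ≤ H := hlength
  · calc 7 * Z ^ 2 * Δ ≤ 2 * Z ^ 2 * (4 * Δ) := by nlinarith [mul_pos (pow_pos hH 2) hΔ]
      _ ≤ 2 * Z ^ 2 * (Z * δ) := by gcongr
      _ = 2 * δ * Z ^ 3 := by ring
      _ ≤ 2 * δ * Z ^ 6 := by gcongr <;> linarith
      _ ≤ 2 * δ * H := by gcongr
  · refine le_trans ?_ hpow
    gcongr
    calc 7 * Z ^ 2 ≤ Z * Z ^ 2 := by gcongr; linarith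
      _ = Z ^ 3 := by ring
      _ ≤ Z ^ 5 := pow_le_pow_right₀ (by linarith) (by norm_num)
  · have hlinear' : G.leadingCoeff * Z ≤ H / (4 * Z) := by
      rw [le_div_iff₀ (by positivity)]
      calc G.leadingCoeff * Z * (4 * Z) = 4 * (G.leadingCoeff * Z) * Z := by ring
        _ ≤ Z ^ 2 * Z := by gcongr
        _ = Z ^ 3 := by ring
        _ ≤ Z ^ 6 := pow_le_pow_right₀ (by linarith) (by norm_num)
        _ ≤ H := hlength
    have hquarter : H / (4 * Z) = H / Z / 4 := by field_simp
    linarith [div_pos hH (by linarith : 0 < Z)]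
  · calc 2 * Z ^ 5 < Z * Z ^ 5 := by gcongr; linarith
      _ = Z ^ 6 := by ring
      _ ≤ H := hlength
      _ ≤ (H : ℝ) ^ G.natDegree := le_self_pow₀ (by exact_mod_cast hH1) (by omega)

/-- The power of `Z` to which the values of a polynomial of degree `k` are comparable in its window
at scale `Z`. It makes the window, of about `Z ^ (windowExponent k - 4)` integers, contain many
values of the polynomial. -/
def windowExponent (k : ℕ) : ℕ := k * (8 * k + 20)

lemma le_windowExponent {k : ℕ} (hk : 2 ≤ k) : 8 * k + 40 ≤ windowExponent k := by
  rw [windowExponent]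
  nlinarith

section Growth
variable {G : ℤ[X]} {t₁ t : ℕ}

lemma stepScale_pos (hdeg : 1 ≤ G.natDegree) (hlead : 0 < G.leadingCoeff) (ht : 1 ≤ t) :
    0 < stepScale G t := by
  have : (0 : ℝ) < G.leadingCoeff := by exact_mod_cast hlead
  have : (0 : ℝ) < G.natDegree := by exact_mod_cast hdeg
  have : (0 : ℝ) < t := by exact_mod_cast ht
  rw [stepScale]
  positivity

lemma stepScale_mono (hlead : 0 < G.leadingCoeff) : Monotone (stepScale G) := by
  intro s t hst
  have : (0 : ℝ) < G.leadingCoeff := by exact_mod_cast hlead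
  have : (s : ℝ) ≤ t := by exact_mod_cast hst
  rw [stepScale, stepScale]
  gcongr

lemma stepScale_le_of_le_three_mul (hlead : 0 < G.leadingCoeff) {s t : ℕ} (hst : s ≤ 3 * t) :
    stepScale G s ≤ 3 ^ G.natDegree * stepScale G t := by
  have : (0 : ℝ) < G.leadingCoeff := by exact_mod_cast hlead
  calc stepScale G s ≤ stepScale G (3 * t) := stepScale_mono hlead hst
    _ = 3 ^ (G.natDegree - 1) * stepScale G t := by
        rw [stepScale, stepScale]; push_cast; rw [mul_pow]; ring
    _ ≤ 3 ^ G.natDegree * stepScale G t := by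
        have : 0 ≤ stepScale G t := by rw [stepScale]; positivity
        gcongr <;> simp

namespace GrowsRegularlyFrom
variable (hgrow : GrowsRegularlyFrom G t₁) (ht : t₁ ≤ t)
include hgrow ht

lemma le_valuesFrom_step (hlead : 0 < G.leadingCoeff) (s : ℕ) :
    stepScale G t ≤ ((valuesFrom G t (s + 1) - valuesFrom G t s : ℤ) : ℝ) := by
  refine (stepScale_mono hlead (t.le_add_right s)).trans ?_
  simpa only [valuesFrom, Nat.cast_add, Nat.cast_one, add_assoc] using
    hgrow.le_step (t + s) (by omega)

lemma strictMono_valuesFrom (hdeg : 1 ≤ G.natDegree) (hlead : 0 < G.leadingCoeff) :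
    StrictMono (valuesFrom G t) :=
  strictMono_nat_of_lt_succ fun s ↦ sub_pos.mp (Int.cast_pos.mp
    ((stepScale_pos hdeg hlead (hgrow.one_le.trans ht)).trans_le
      (hgrow.le_valuesFrom_step ht hlead s)))

lemma monotone_valuesFrom_step : Monotone fun s ↦ valuesFrom G t (s + 1) - valuesFrom G t s :=
  monotone_nat_of_le_succ fun s ↦ by
    simpa only [valuesFrom, Nat.cast_add, Nat.cast_one, Nat.cast_ofNat, add_assoc,
      one_add_one_eq_two] using
      hgrow.step_le_step_succ (t + s) (by omega)

lemma valuesFrom_step_le (hlead : 0 < G.leadingCoeff) {s : ℕ} (hs : s ≤ 2 * t) :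
    ((valuesFrom G t (s + 1) - valuesFrom G t s : ℤ) : ℝ) ≤
      4 * 3 ^ G.natDegree * stepScale G t := by
  have hstep := hgrow.step_le (t + s) (by omega)
  have hscale := stepScale_le_of_le_three_mul hlead (by omega : t + s ≤ 3 * t)
  rw [mul_assoc]
  refine le_trans ?_ (mul_le_mul_of_nonneg_left hscale zero_le_four)
  simpa only [valuesFrom, Nat.cast_add, Nat.cast_one, add_assoc] using hstep

lemma mul_stepScale_le_valuesFrom_sub (hlead : 0 < G.leadingCoeff) (a h : ℕ) :
    h * stepScale G t ≤ ((valuesFrom G t (a + h) - valuesFrom G t a : ℤ) : ℝ) := by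
  induction h with
  | zero => simp
  | succ h ih =>
    have hstep := hgrow.le_valuesFrom_step ht hlead (a + h)
    push_cast [← add_assoc] at hstep ih ⊢
    linarith

lemma succ_mul_stepScale_le (hlead : 0 < G.leadingCoeff) {U Y : ℤ} {h : ℕ}
    (hU : U < valuesFrom G t 1) (hh : valuesFrom G t h ≤ U + 2 * Y) (hY : stepScale G t ≤ Y) :
    (h + 1) * stepScale G t ≤ 4 * Y := by
  have hnonneg : 0 ≤ stepScale G t := by rw [stepScale]; positivity
  rcases h with _ | n
  · push_cast
    linarith
  · have hsum := hgrow.mul_stepScale_le_valuesFrom_sub ht hlead 1 n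
    have hlt : ((valuesFrom G t (1 + n) - valuesFrom G t 1 : ℤ) : ℝ) ≤ 2 * Y := by
      rw [add_comm]
      exact_mod_cast (by linarith : valuesFrom G t (n + 1) - valuesFrom G t 1 ≤ 2 * Y)
    push_cast
    linarith

lemma pow_le_pow_natDegree (hlead : 0 < G.leadingCoeff) {z : ℝ} {n : ℕ} (hz : 0 < z)
    (hleadz : G.leadingCoeff * 2 ^ G.natDegree ≤ z)
    (hvalue : 2 * z ^ (n + 1) ≤ (valuesFrom G t 1 : ℤ)) : z ^ n ≤ (t : ℝ) ^ G.natDegree := by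
  have : (0 : ℝ) < G.leadingCoeff := by exact_mod_cast hlead
  have ht1 : (1 : ℝ) ≤ t := by exact_mod_cast hgrow.one_le.trans ht
  have heval := hgrow.eval_le (t + 1) (by omega)
  rw [valuesFrom, Nat.cast_one] at hvalue
  push_cast at heval
  refine le_of_mul_le_mul_right ?_ hz
  calc z ^ n * z ≤ G.leadingCoeff * (t + 1 : ℝ) ^ G.natDegree := by rw [← pow_succ]; linarith
    _ ≤ G.leadingCoeff * (2 * t : ℝ) ^ G.natDegree := by gcongr; linarith
    _ = (t : ℝ) ^ G.natDegree * (G.leadingCoeff * 2 ^ G.natDegree) := by rw [mul_pow]; ring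
    _ ≤ (t : ℝ) ^ G.natDegree * z := by gcongr

lemma pow_natDegree_le_pow (hlead : 0 < G.leadingCoeff) {z : ℝ} {n : ℕ} (hz : 4 ≤ z)
    (hvalue : (valuesFrom G t 0 : ℤ) ≤ 2 * z ^ n) : (t : ℝ) ^ G.natDegree ≤ z ^ (n + 1) := by
  have hlead1 : (1 : ℝ) ≤ G.leadingCoeff := by exact_mod_cast hlead
  have heval := hgrow.le_eval t ht
  rw [valuesFrom, Nat.cast_zero, add_zero] at hvalue
  calc (t : ℝ) ^ G.natDegree ≤ G.leadingCoeff * (t : ℝ) ^ G.natDegree :=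
        le_mul_of_one_le_left (by positivity) hlead1
    _ ≤ z ^ n * 4 := by linarith
    _ ≤ z ^ (n + 1) := by rw [pow_succ]; gcongr

end GrowsRegularlyFrom

lemma pow_le_of_pow_le_pow_windowExponent {k : ℕ} (hk : 2 ≤ k) {x z : ℝ} (hx : 0 ≤ x)
    (hz : 1 ≤ z) (h : z ^ (windowExponent k - 2) ≤ x ^ k) : z ^ (8 * k + 19) ≤ x := by
  refine le_of_pow_le_pow_left₀ (by omega) hx (le_trans ?_ h)
  rw [← pow_mul]
  have hexp : (8 * k + 19) * k + k = windowExponent k := by rw [windowExponent]; ring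
  exact pow_le_pow_right₀ hz (by omega)

lemma pow_pred_le_of_pow_le_pow_windowExponent {k : ℕ} (hk : 2 ≤ k) {x z : ℝ} (hz : 0 < z)
    (hlow : z ^ (8 * k + 19) ≤ x) (hup : x ^ k ≤ z ^ (windowExponent k + 2)) :
    x ^ (k - 1) ≤ z ^ (windowExponent k - 8 * k - 17) := by
  have hexp := le_windowExponent hk
  have : 0 < x := lt_of_lt_of_le (by positivity) hlow
  refine le_of_mul_le_mul_right ?_ (by positivity : 0 < z ^ (8 * k + 19))
  calc x ^ (k - 1) * z ^ (8 * k + 19) ≤ x ^ (k - 1) * x := by gcongr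
    _ = x ^ k := by rw [← pow_succ, Nat.sub_add_cancel (by omega)]
    _ ≤ z ^ (windowExponent k + 2) := hup
    _ = z ^ (windowExponent k - 8 * k - 17) * z ^ (8 * k + 19) := by rw [← pow_add]; congr 1; omega

lemma length_le_of_mul_stepScale_le (hdeg : 1 ≤ G.natDegree) (hlead : 0 < G.leadingCoeff)
    {y : ℝ} {H : ℕ} (ht : 1 ≤ t) (hH : H * stepScale G t ≤ 4 * y)
    (hy : 8 * y ≤ (t : ℝ) ^ G.natDegree) : H ≤ t := by
  have hlead1 : (1 : ℝ) ≤ G.leadingCoeff := by exact_mod_cast hlead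
  have hdeg1 : (1 : ℝ) ≤ G.natDegree := by exact_mod_cast hdeg
  have : (0 : ℝ) < t := by exact_mod_cast ht
  have hpow : (0 : ℝ) < (t : ℝ) ^ (G.natDegree - 1) := by positivity
  suffices h : (H : ℝ) * (t : ℝ) ^ (G.natDegree - 1) ≤ t * (t : ℝ) ^ (G.natDegree - 1) from
    Nat.cast_le.mp (le_of_mul_le_mul_right h hpow)
  calc (H : ℝ) * (t : ℝ) ^ (G.natDegree - 1)
      ≤ H * (G.leadingCoeff * G.natDegree * (t : ℝ) ^ (G.natDegree - 1)) := by
        gcongr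
        exact le_mul_of_one_le_left hpow.le (one_le_mul_of_one_le_of_one_le hlead1 hdeg1)
    _ = 2 * (H * stepScale G t) := by rw [stepScale]; ring
    _ ≤ (t : ℝ) ^ G.natDegree := by linarith
    _ = t * (t : ℝ) ^ (G.natDegree - 1) := by
        rw [← pow_succ', Nat.sub_add_cancel hdeg]

lemma four_mul_three_pow_mul_stepScale_le (hdeg : 2 ≤ G.natDegree) {z : ℝ}
    (hz1 : 1 ≤ z) (hz : 2 * 3 ^ G.natDegree * (G.leadingCoeff * G.natDegree) ≤ z)
    (hlow : z ^ (windowExponent G.natDegree - 2) ≤ (t : ℝ) ^ G.natDegree)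
    (hup : (t : ℝ) ^ G.natDegree ≤ z ^ (windowExponent G.natDegree + 2)) :
    4 * 3 ^ G.natDegree * stepScale G t ≤
      z ^ (windowExponent G.natDegree - 8 * G.natDegree - 16) := by
  have hexp := le_windowExponent hdeg
  have hpow := pow_pred_le_of_pow_le_pow_windowExponent hdeg (by positivity)
    (pow_le_of_pow_le_pow_windowExponent hdeg t.cast_nonneg hz1 hlow) hup
  calc 4 * 3 ^ G.natDegree * stepScale G t
      = 2 * 3 ^ G.natDegree * (G.leadingCoeff * G.natDegree) * (t : ℝ) ^ (G.natDegree - 1) := by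
        rw [stepScale]; ring
    _ ≤ z * z ^ (windowExponent G.natDegree - 8 * G.natDegree - 17) := by gcongr
    _ = z ^ (windowExponent G.natDegree - 8 * G.natDegree - 16) := by
        rw [← pow_succ']; congr 1; omega

lemma pow_le_length {k H : ℕ} (hk : 2 ≤ k) {z Δ : ℝ} (hz : 0 < z)
    (hΔ : Δ ≤ z ^ (windowExponent k - 8 * k - 16)) (hH : z ^ (windowExponent k - 4) ≤ H * Δ) :
    z ^ (8 * k + 12) ≤ H := by
  have hexp := le_windowExponent hk
  refine le_of_mul_le_mul_right ?_ (by positivity : 0 < z ^ (windowExponent k - 8 * k - 16))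
  calc z ^ (8 * k + 12) * z ^ (windowExponent k - 8 * k - 16) = z ^ (windowExponent k - 4) := by
        rw [← pow_add]; congr 1; omega
    _ ≤ H * Δ := hH
    _ ≤ H * z ^ (windowExponent k - 8 * k - 16) := by gcongr

lemma pow_mul_le_length_pow {k H : ℕ} (hk : 2 ≤ k) {z Δ : ℝ} (hz : 0 < z)
    (hΔ : Δ ≤ z ^ (windowExponent k - 8 * k - 16)) (hH : z ^ (8 * k + 12) ≤ H) :
    z ^ 16 * Δ ≤ (H : ℝ) ^ k := by
  have hexp := le_windowExponent hk
  calc z ^ 16 * Δ ≤ z ^ 16 * z ^ (windowExponent k - 8 * k - 16) := by gcongr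
    _ = (z ^ (8 * k + 12)) ^ k := by
        have hsplit : (8 * k + 12) * k + 8 * k = windowExponent k := by rw [windowExponent]; ring
        rw [← pow_add, ← pow_mul]
        congr 1
        omega
    _ ≤ (H : ℝ) ^ k := by gcongr

lemma le_of_hundred_mul_le {k : ℕ} {l z : ℝ} (hk : 1 ≤ k) (hl : 1 ≤ l)
    (hz : 100 * 3 ^ k * (l * k) ≤ z) : 100 ≤ z ∧ 8 * l ≤ z ∧ l * 2 ^ k ≤ z ∧ 16 * 3 ^ k ≤ z := by
  have hk1 : (1 : ℝ) ≤ k := by exact_mod_cast hk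
  have hpow : (1 : ℝ) ≤ 3 ^ k := one_le_pow₀ (by norm_num)
  have hlk : l ≤ l * k := le_mul_of_one_le_right (by linarith) hk1
  have hprod : 3 ^ k * l ≤ 3 ^ k * (l * k) := by gcongr
  have hleft : 3 ^ k ≤ 3 ^ k * l := le_mul_of_one_le_right (by positivity) hl
  have hright : l ≤ 3 ^ k * l := le_mul_of_one_le_left (by linarith) hpow
  have htwo : l * 2 ^ k ≤ 3 ^ k * l := by rw [mul_comm]; gcongr; norm_num
  refine ⟨?_, ?_, ?_, ?_⟩ <;> linarith

lemma GrowsRegularlyFrom.isWindow_of_pow_bounds (hgrow : GrowsRegularlyFrom G t₁) (ht : t₁ ≤ t)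
    (hdeg : 2 ≤ G.natDegree) (hlead : 0 < G.leadingCoeff) {Z H : ℕ}
    (hZ : 100 * 3 ^ G.natDegree * (G.leadingCoeff * G.natDegree : ℝ) ≤ Z)
    (hlow : (Z : ℝ) ^ (windowExponent G.natDegree - 2) ≤ (t : ℝ) ^ G.natDegree)
    (hΔ : 4 * 3 ^ G.natDegree * stepScale G t ≤
      (Z : ℝ) ^ (windowExponent G.natDegree - 8 * G.natDegree - 16))
    (hlength : H * stepScale G t ≤ 4 * (Z : ℝ) ^ (windowExponent G.natDegree - 4))
    (hvalues : (Z : ℝ) ^ (windowExponent G.natDegree - 4) ≤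
      (valuesFrom G t H : ℝ) - valuesFrom G t 0) :
    IsWindow G Z t H (stepScale G t) (4 * 3 ^ G.natDegree * stepScale G t) := by
  obtain ⟨hZ100, hZlead, -, hZratio⟩ :=
    le_of_hundred_mul_le (by omega) (by exact_mod_cast hlead) hZ
  have hexp := le_windowExponent hdeg
  have ht1 : 1 ≤ t := hgrow.one_le.trans ht
  have hδ : 0 < stepScale G t := stepScale_pos (by omega) hlead ht1
  have hHt : H ≤ t := length_le_of_mul_stepScale_le (by omega) hlead ht1 hlength <| by
    calc 8 * (Z : ℝ) ^ (windowExponent G.natDegree - 4)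
        ≤ (Z : ℝ) ^ 2 * (Z : ℝ) ^ (windowExponent G.natDegree - 4) := by gcongr; nlinarith
      _ = (Z : ℝ) ^ (windowExponent G.natDegree - 2) := by rw [← pow_add]; congr 1; omega
      _ ≤ (t : ℝ) ^ G.natDegree := hlow
  have hstep : ∀ s < 2 * H, ((valuesFrom G t (s + 1) - valuesFrom G t s : ℤ) : ℝ) ≤
      4 * 3 ^ G.natDegree * stepScale G t :=
    fun s hs ↦ hgrow.valuesFrom_step_le ht hlead (by omega)
  have hHpow : (Z : ℝ) ^ (8 * G.natDegree + 12) ≤ H :=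
    pow_le_length hdeg (by linarith) hΔ <| hvalues.trans <| by
      simpa only [zero_add] using sub_le_mul_of_step_le hstep (by omega : 0 + H ≤ 2 * H)
  refine isWindow_of_pow_le (by omega) hδ (hgrow.le_valuesFrom_step ht hlead)
    (hgrow.monotone_valuesFrom_step ht) hstep (by linarith) hZlead ?_ ?_ ?_
  · calc 4 * (4 * 3 ^ G.natDegree * stepScale G t) = 16 * 3 ^ G.natDegree * stepScale G t := by ring
      _ ≤ Z * stepScale G t := by gcongr
  · exact (pow_le_pow_right₀ (by linarith) (by omega)).trans hHpow
  · refine le_trans ?_ (pow_mul_le_length_pow hdeg (by linarith) hΔ hHpow)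
    gcongr
    exacts [by linarith, by norm_num]

lemma GrowsRegularlyFrom.exists_isWindow (hgrow : GrowsRegularlyFrom G t₁)
    (ht : t₁ ≤ t) (hdeg : 2 ≤ G.natDegree) (hlead : 0 < G.leadingCoeff) {Z : ℕ} {U : ℤ}
    (hZ : 100 * 3 ^ G.natDegree * (G.leadingCoeff * G.natDegree : ℝ) ≤ Z)
    (hlow : (Z : ℝ) ^ (windowExponent G.natDegree - 2) ≤ (t : ℝ) ^ G.natDegree)
    (hup : (t : ℝ) ^ G.natDegree ≤ (Z : ℝ) ^ (windowExponent G.natDegree + 2))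
    (htU : valuesFrom G t 0 ≤ U) (hUt : U < valuesFrom G t 1) :
    ∃ H δ Δ, IsWindow G Z t H δ Δ ∧
      U + 2 * (Z : ℤ) ^ (windowExponent G.natDegree - 4) ≤ valuesFrom G t H ∧
      H * Δ ≤ 16 * 3 ^ G.natDegree * (Z : ℝ) ^ (windowExponent G.natDegree - 4) := by
  have hZ100 := (le_of_hundred_mul_le (by omega) (by exact_mod_cast hlead) hZ).1
  have hexp := le_windowExponent hdeg
  have hΔ := four_mul_three_pow_mul_stepScale_le hdeg (by linarith) (by linarith) hlow hup
  have hδY : stepScale G t ≤ ((Z : ℤ) ^ (windowExponent G.natDegree - 4) : ℤ) := by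
    have hδ : 0 < stepScale G t := stepScale_pos (by omega) hlead (hgrow.one_le.trans ht)
    push_cast
    exact (le_mul_of_one_le_left hδ.le (one_le_mul_of_one_le_of_one_le (by norm_num)
      (one_le_pow₀ (by norm_num)))).trans (hΔ.trans (pow_le_pow_right₀ (by linarith) (by omega)))
  obtain ⟨h, hlast, hnext⟩ := exists_le_lt_succ_of_strictMono
    (hgrow.strictMono_valuesFrom ht (by omega) hlead)
    (U := U + 2 * (Z : ℤ) ^ (windowExponent G.natDegree - 4)) (htU.trans (by simp))
  have hlength := hgrow.succ_mul_stepScale_le ht hlead hUt hlast hδY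
  have hvalues : (Z : ℤ) ^ (windowExponent G.natDegree - 4) ≤
      valuesFrom G t (h + 1) - valuesFrom G t 0 := by
    linarith [show 0 ≤ (Z : ℤ) ^ (windowExponent G.natDegree - 4) by positivity]
  push_cast at hlength
  refine ⟨h + 1, _, _, hgrow.isWindow_of_pow_bounds ht hdeg hlead hZ hlow hΔ ?_ ?_, hnext.le, ?_⟩
  · exact_mod_cast hlength
  · exact_mod_cast hvalues
  · push_cast
    calc ((h : ℝ) + 1) * (4 * 3 ^ G.natDegree * stepScale G t)
        = 4 * 3 ^ G.natDegree * ((h + 1) * stepScale G t) := by ring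
      _ ≤ 4 * 3 ^ G.natDegree * (4 * (Z : ℝ) ^ (windowExponent G.natDegree - 4)) := by gcongr
      _ = 16 * 3 ^ G.natDegree * (Z : ℝ) ^ (windowExponent G.natDegree - 4) := by ring

open Filter in
lemma eventually_exists_isWindow (hdeg : 2 ≤ G.natDegree) (hlead : 0 < G.leadingCoeff) :
    ∀ᶠ Z : ℕ in atTop, ∀ U : ℤ, 2 * (Z : ℤ) ^ (windowExponent G.natDegree - 1) ≤ U →
      U ≤ 2 * (Z : ℤ) ^ (windowExponent G.natDegree + 1) →
      ∃ (t : ℤ) (H : ℕ) (δ Δ : ℝ), IsWindow G Z t H δ Δ ∧ valuesFrom G t 0 ≤ U ∧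
        U + 2 * (Z : ℤ) ^ (windowExponent G.natDegree - 4) ≤ valuesFrom G t H ∧
        H * Δ ≤ 16 * 3 ^ G.natDegree * (Z : ℝ) ^ (windowExponent G.natDegree - 4) := by
  obtain ⟨t₁, hgrow⟩ := exists_growsRegularlyFrom hdeg hlead
  have hexp := le_windowExponent hdeg
  filter_upwards [tendsto_natCast_atTop_atTop.eventually (eventually_ge_atTop
      (100 * 3 ^ G.natDegree * (G.leadingCoeff * G.natDegree : ℝ))),
    tendsto_natCast_atTop_atTop.eventually (eventually_ge_atTop (valuesFrom G t₁ 0))]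
    with Z hZ hZ₁ U hU hU'
  obtain ⟨hZ100, -, hZtwo, -⟩ := le_of_hundred_mul_le (by omega) (by exact_mod_cast hlead) hZ
  have hZU : (Z : ℤ) ≤ U := by
    have hself : (Z : ℤ) ≤ (Z : ℤ) ^ (windowExponent G.natDegree - 1) :=
      le_self_pow₀ (by exact_mod_cast (by linarith : (1 : ℝ) ≤ Z)) (by omega)
    linarith
  obtain ⟨n, hnU, hUn⟩ := exists_le_lt_succ_of_strictMono
    (hgrow.strictMono_valuesFrom le_rfl (by omega) hlead) (hZ₁.trans hZU)
  have ht : t₁ ≤ t₁ + n := t₁.le_add_right n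
  have htU : valuesFrom G (t₁ + n : ℕ) 0 ≤ U := by simpa [valuesFrom] using hnU
  have hUt : U < valuesFrom G (t₁ + n : ℕ) 1 := by simpa [valuesFrom, add_assoc] using hUn
  have hlow := hgrow.pow_le_pow_natDegree ht hlead (n := windowExponent G.natDegree - 2)
    (by linarith) hZtwo <| by
      rw [show windowExponent G.natDegree - 2 + 1 = windowExponent G.natDegree - 1 by omega]
      exact_mod_cast hU.trans hUt.le
  have hup := hgrow.pow_natDegree_le_pow ht hlead (n := windowExponent G.natDegree + 1)
    (by linarith : (4 : ℝ) ≤ Z) (by exact_mod_cast htU.trans hU')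
  obtain ⟨H, δ, Δ, hwin, hvalues, hlength⟩ :=
    hgrow.exists_isWindow ht hdeg hlead hZ hlow hup htU hUt
  exact ⟨_, H, δ, Δ, hwin, htU, hvalues, hlength⟩

end Growth

/-! ### Removing local obstructions -/

lemma isCoprime_of_modEq {a b n : ℤ} (h : a ≡ b [ZMOD n]) (hb : IsCoprime b n) :
    IsCoprime a n := by
  obtain ⟨k, hk⟩ := h.symm.dvd
  rw [eq_add_of_sub_eq' hk]
  exact hb.add_mul_left_left k

lemma exists_not_dvd_mul_sub {p : ℕ} (hp : p.Prime) (hp2 : p ≠ 2) (f : ℤ) :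
    ∃ c : ℤ, ¬ (p : ℤ) ∣ c * (f - c) := by
  by_cases hf : (p : ℤ) ∣ f - 1
  · refine ⟨-1, fun hdvd ↦ ?_⟩
    have htwo : (p : ℤ) ∣ 2 := by
      obtain ⟨k, hk⟩ := hf
      obtain ⟨l, hl⟩ := hdvd
      exact ⟨-(l + k), by linear_combination -hl - hk⟩
    exact hp2 ((Nat.prime_dvd_prime_iff_eq hp Nat.prime_two).mp (by exact_mod_cast htwo))
  · exact ⟨1, by simpa using hf⟩

lemma exists_modEq_of_isCoprime {a n : ℤ} (h : IsCoprime a n) (b c : ℤ) :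
    ∃ x, x ≡ b [ZMOD a] ∧ x ≡ c [ZMOD n] := by
  obtain ⟨u, v, huv⟩ := h
  refine ⟨b + (c - b) * (u * a), ?_, ?_⟩ <;> refine Int.modEq_iff_dvd.mpr ?_
  · exact ⟨-((c - b) * u), by ring⟩
  · exact ⟨(c - b) * v, by linear_combination (c - b) * huv.symm⟩

lemma exists_modEq_isCoprime_mul_sub {m : ℕ} (hm : Even m) {s f : ℤ}
    (hs : IsCoprime (s * (f - s)) m) {V : ℕ} (hV : V ≠ 0) :
    ∃ b, b ≡ s [ZMOD m] ∧ IsCoprime (b * (f - b)) V := by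
  suffices h : ∃ b, b ≡ s [ZMOD m] ∧ IsCoprime (b * (f - b)) (m * V) by
    obtain ⟨b, hb, hcop⟩ := h
    exact ⟨b, hb, hcop.of_mul_right_right⟩
  induction V using induction_on_primes with
  | zero => exact absurd rfl hV
  | one => exact ⟨s, Int.ModEq.refl s, by simpa using hs⟩
  | prime_mul p V hp ih =>
    obtain ⟨b, hb, hcop⟩ := ih (by rintro rfl; simp at hV)
    push_cast
    rw [mul_left_comm]
    by_cases hpdvd : (p : ℤ) ∣ m * V
    · exact ⟨b, hb, (hcop.of_isCoprime_of_dvd_right hpdvd).mul_right hcop⟩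
    · have hp2 : p ≠ 2 := by
        rintro rfl
        exact hpdvd ((Int.natCast_dvd_natCast.mpr hm.two_dvd).mul_right _)
      obtain ⟨c, hc⟩ := exists_not_dvd_mul_sub hp hp2 f
      have hprime := Nat.prime_iff_prime_int.mp hp
      obtain ⟨x, hxb, hxc⟩ := exists_modEq_of_isCoprime
        ((hprime.coprime_iff_not_dvd.mpr hpdvd).symm) b c
      refine ⟨x, (hxb.of_mul_right _).trans hb, IsCoprime.mul_right ?_ ?_⟩
      · exact isCoprime_of_modEq (hxc.mul (hxc.sub_left f))
          (hprime.coprime_iff_not_dvd.mpr hc).symm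
      · exact isCoprime_of_modEq (hxb.mul (hxb.sub_left f)) hcop

lemma exists_natCast_modEq_coprime {V : ℕ} (hV : 0 < V) {b : ℤ} (hb : IsCoprime b V) :
    ∃ r < V, r.Coprime V ∧ (r : ℤ) ≡ b [ZMOD V] := by
  have hV' : (0 : ℤ) < V := by exact_mod_cast hV
  obtain ⟨r, hr⟩ := Int.eq_ofNat_of_zero_le (Int.emod_nonneg b hV'.ne')
  have hmod : (r : ℤ) ≡ b [ZMOD V] := hr ▸ Int.mod_modEq b V
  exact ⟨r, by exact_mod_cast hr ▸ Int.emod_lt_of_pos b hV',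
    Nat.isCoprime_iff_coprime.mp (isCoprime_of_modEq hmod hb), hmod⟩

lemma exists_comp_add_mul_eq (F : ℤ[X]) (n₀ W : ℤ) :
    ∃ B : ℤ[X], F.comp (C n₀ + C W * X) =
      C (F.eval n₀) + C (F.derivative.eval n₀ * W) * X + C (W ^ 2) * (B * X ^ 2) := by
  obtain ⟨B, hB⟩ := (F.map C).binomExpansion (C n₀) (C W * X)
  refine ⟨B, ?_⟩
  have hcomp (P q : ℤ[X]) : (P.map C).eval q = P.comp q := by rw [eval_map, comp]
  rw [derivative_map, hcomp, hcomp, hcomp, comp_C, comp_C] at hB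
  rw [hB]
  simp only [map_mul, map_pow]
  ring

/-- Rescaling `n = n₀ + u d t` with `d = F'(n₀)` makes the linear term of `F(n)` equal to `u d² t`,
so that after division by `u d²` only the terms of degree at least `2` keep a factor `u`. -/
lemma exists_mul_add_X_eq_comp (F : ℤ[X]) (n₀ u c : ℤ) : ∃ A : ℤ[X],
    C (u * F.derivative.eval n₀ ^ 2) * (C c + X + C u * A) =
      F.comp (C n₀ + C (u * F.derivative.eval n₀) * X) -
        C (F.eval n₀ - u * F.derivative.eval n₀ ^ 2 * c) := by
  obtain ⟨B, hB⟩ := exists_comp_add_mul_eq F n₀ (u * F.derivative.eval n₀)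
  refine ⟨B * X ^ 2, ?_⟩
  rw [hB]
  simp only [map_mul, map_sub, map_pow]
  ring

lemma mul_dvd_eval_add_sub_sub {p u : ℤ} (hp : p ∣ u) (c : ℤ) (A : ℤ[X]) (q t : ℤ) :
    p * q ∣ (C c + X + C u * A).eval (t + q) - (C c + X + C u * A).eval t - q := by
  have hA : q ∣ A.eval (t + q) - A.eval t := by simpa using sub_dvd_eval_sub (t + q) t A
  have hdiff : (C c + X + C u * A).eval (t + q) - (C c + X + C u * A).eval t - q =
      u * (A.eval (t + q) - A.eval t) := by
    simp only [eval_add, eval_C, eval_X, eval_mul]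
    ring
  exact hdiff ▸ mul_dvd_mul hp hA

lemma natDegree_and_leadingCoeff_of_C_mul_eq {F G : ℤ[X]} {V W n₀ e : ℤ} (hV : V ≠ 0) (hW : W ≠ 0)
    (hdeg : 1 ≤ F.natDegree) (h : C V * G = F.comp (C n₀ + C W * X) - C e) :
    G.natDegree = F.natDegree ∧ V * G.leadingCoeff = F.leadingCoeff * W ^ F.natDegree := by
  have hL : (C n₀ + C W * X).natDegree = 1 := by rw [natDegree_C_add, natDegree_C_mul_X _ hW]
  have hlead : (C n₀ + C W * X).leadingCoeff = W := by
    rw [leadingCoeff, hL, coeff_add, coeff_C_mul, coeff_X_one, mul_one, coeff_C_succ, zero_add]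
  have hcomp : (F.comp (C n₀ + C W * X)).natDegree = F.natDegree := by
    rw [natDegree_comp, hL, mul_one]
  have hG : G.natDegree = F.natDegree := by rw [← natDegree_C_mul hV, h, natDegree_sub_C, hcomp]
  refine ⟨hG, ?_⟩
  have hcoeff := congrArg (fun P ↦ P.coeff F.natDegree) h
  simp only [coeff_C_mul, coeff_sub, coeff_C, if_neg (by omega : F.natDegree ≠ 0), sub_zero]
    at hcoeff
  rw [leadingCoeff, hG, hcoeff, ← hcomp, coeff_natDegree, leadingCoeff_comp (by rw [hL]; norm_num),
    hlead, hcomp]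

lemma prime_dvd_of_dvd_mul_mul_pow {p a d u k : ℕ} (hp : p.Prime) (ha : a ∣ u) (hd : d ∣ u)
    (h : p ∣ a * (u * d) ^ k) : p ∣ u := by
  obtain h | h := hp.dvd_mul.mp h
  · exact h.trans ha
  · exact (hp.dvd_mul.mp (hp.dvd_of_dvd_pow h)).elim id (·.trans hd)

/-- The data of the `W`-trick for the sums `p₁ + p₂ = F(n)` with `pᵢ ≡ sᵢ (mod m)`: restricting to
`pᵢ = bᵢ + V xᵢ` and to a progression of values of `n` turns the equation into `x₁ + x₂ = G(t)`,
where `G` acts as a translation modulo every prime `p ≤ w`. -/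
structure IsWTrick (m : ℕ) (s₁ s₂ : ℤ) (F : ℤ[X]) (w V b₁ b₂ : ℕ) (G : ℤ[X]) : Prop where
  lt_left : b₁ < V
  lt_right : b₂ < V
  coprime_left : b₁.Coprime V
  coprime_right : b₂.Coprime V
  modEq_left (x : ℕ) : ((b₁ + V * x : ℕ) : ℤ) ≡ s₁ [ZMOD m]
  modEq_right (x : ℕ) : ((b₂ + V * x : ℕ) : ℤ) ≡ s₂ [ZMOD m]
  natDegree_eq : G.natDegree = F.natDegree
  leadingCoeff_pos : 0 < G.leadingCoeff
  translation : TranslationAtSmallPrimes G w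
  exists_eval_eq (t : ℤ) : ∃ n, (b₁ : ℤ) + b₂ + V * G.eval t = F.eval n

/-- The modulus `u` of the `W`-trick collects the primes up to `w`, those dividing `m`, and, through
the factors `F.leadingCoeff` and `F'(n₀)`, those dividing the leading coefficient of the rescaled
polynomial. -/
lemma exists_translationAtSmallPrimes {m : ℕ} (hm : 0 < m) {F : ℤ[X]} (hdeg : 1 ≤ F.natDegree)
    (hlead : 0 < F.leadingCoeff) {n₀ : ℤ} (hderiv : 0 < F.derivative.eval n₀) (w : ℕ) :
    ∃ V : ℕ, 0 < V ∧ m ∣ V ∧ ∀ e : ℤ, e ≡ F.eval n₀ [ZMOD V] → ∃ G : ℤ[X],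
      G.natDegree = F.natDegree ∧ 0 < G.leadingCoeff ∧ TranslationAtSmallPrimes G w ∧
      ∀ t, ∃ n, e + V * G.eval t = F.eval n := by
  obtain ⟨a, ha⟩ := Int.eq_ofNat_of_zero_le hlead.le
  obtain ⟨d, hd⟩ := Int.eq_ofNat_of_zero_le hderiv.le
  have ha0 : 0 < a := by exact_mod_cast ha ▸ hlead
  have hd0 : 0 < d := by exact_mod_cast hd ▸ hderiv
  set u : ℕ := w.factorial * m * a * d with hu
  have : 0 < u := by positivity
  refine ⟨u * d ^ 2, by positivity, ⟨w.factorial * a * d * d ^ 2, by rw [hu]; ring⟩,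
    fun e he ↦ ?_⟩
  obtain ⟨c, hc⟩ := he.dvd
  obtain ⟨A, hA⟩ := exists_mul_add_X_eq_comp F n₀ u c
  have he' : F.eval n₀ - u * (d : ℤ) ^ 2 * c = e := by
    push_cast at hc
    linear_combination hc
  simp only [hd, he'] at hA
  set G := C c + X + C (u : ℤ) * A
  obtain ⟨hdegG, hleadG⟩ := natDegree_and_leadingCoeff_of_C_mul_eq (V := u * (d : ℤ) ^ 2)
    (W := u * d) (by positivity) (by positivity) hdeg hA
  rw [ha] at hleadG
  refine ⟨G, hdegG, ?_, fun p hp hpw q t ↦ mul_dvd_eval_add_sub_sub ?_ c A q t, fun t ↦ ?_⟩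
  · have : 0 < (a : ℤ) * (u * d) ^ F.natDegree := by positivity
    exact pos_of_mul_pos_right (hleadG ▸ this) (by positivity)
  · obtain hpw | hpG := hpw
    · have hfac : p ∣ w.factorial := Nat.dvd_factorial hp.pos hpw
      exact Int.natCast_dvd_natCast.mpr (hu ▸ ((hfac.mul_right m).mul_right a).mul_right d)
    · have hprod : p ∣ a * (u * d) ^ F.natDegree := by
        exact_mod_cast hleadG ▸ hpG.mul_left _
      have hau : a ∣ u := ⟨w.factorial * m * d, by rw [hu]; ring⟩
      exact Int.natCast_dvd_natCast.mpr
        (prime_dvd_of_dvd_mul_mul_pow hp hau (Dvd.intro_left _ rfl) hprod)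
  · refine ⟨n₀ + u * d * t, ?_⟩
    have heval := congrArg (eval t) hA
    simp only [eval_mul, eval_sub, eval_comp, eval_add, eval_C, eval_X] at heval
    push_cast
    linear_combination heval

theorem exists_isWTrick {m : ℕ} (hm : 0 < m) (hmeven : Even m) {s₁ s₂ : ℤ}
    (hs₁ : IsCoprime s₁ m) (hs₂ : IsCoprime s₂ m) {F : ℤ[X]} (hdeg : 1 ≤ F.natDegree)
    (hlead : 0 < F.leadingCoeff) {n₀ : ℤ} (hcong : F.eval n₀ ≡ s₁ + s₂ [ZMOD m])
    (hderiv : 0 < F.derivative.eval n₀) (w : ℕ) :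
    ∃ (V b₁ b₂ : ℕ) (G : ℤ[X]), IsWTrick m s₁ s₂ F w V b₁ b₂ G := by
  obtain ⟨V, hV, hmV, hG⟩ := exists_translationAtSmallPrimes hm hdeg hlead hderiv w
  have hsub : F.eval n₀ - s₁ ≡ s₂ [ZMOD m] := by simpa using hcong.sub_right s₁
  obtain ⟨b, hbs, hb⟩ := exists_modEq_isCoprime_mul_sub hmeven
    (hs₁.mul_left (isCoprime_of_modEq hsub hs₂)) hV.ne'
  obtain ⟨b₁, hb₁, hcop₁, hmod₁⟩ := exists_natCast_modEq_coprime hV hb.of_mul_left_left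
  obtain ⟨b₂, hb₂, hcop₂, hmod₂⟩ := exists_natCast_modEq_coprime hV hb.of_mul_left_right
  obtain ⟨G, hdegG, hleadG, htrans, heval⟩ := hG (b₁ + b₂) (by simpa using hmod₁.add hmod₂)
  have hmV' : (m : ℤ) ∣ V := Int.natCast_dvd_natCast.mpr hmV
  have hstep (b' : ℕ) {s : ℤ} (h : (b' : ℤ) ≡ s [ZMOD m]) (x : ℕ) :
      ((b' + V * x : ℕ) : ℤ) ≡ s [ZMOD m] := by
    push_cast
    simpa using h.add (Int.modEq_zero_iff_dvd.mpr (hmV'.mul_right x))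
  exact ⟨V, b₁, b₂, G, hb₁, hb₂, hcop₁, hcop₂,
    hstep b₁ ((hmod₁.of_dvd hmV').trans hbs),
    hstep b₂ ((hmod₂.of_dvd hmV').trans ((hbs.sub_left _).trans hsub)),
    hdegG, hleadG, htrans, heval⟩

/-! ### The circle method modulo `N` -/

/-- The number of representations of `y` modulo `N` as a sum of an element of `A₁` and an element
of `A₂`. -/
def repCount (A₁ A₂ : Finset ℕ) (N : ℕ) (y : ℤ) : ℕ :=
  #{x ∈ A₁ ×ˢ A₂ | (N : ℤ) ∣ x.1 + x.2 - y}

lemma sum_range_sum_Ico {M : Type*} [AddCommMonoid M] {g : ℕ → ℤ} (hg : Monotone g) (f : ℤ → M)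
    (H : ℕ) :
    ∑ s ∈ range H, ∑ y ∈ Ico (g s) (g (s + 1)), f y = ∑ y ∈ Ico (g 0) (g H), f y := by
  induction H with
  | zero => simp
  | succ H ih =>
    rw [sum_range_succ, ih, ← sum_union (Ico_disjoint_Ico_consecutive _ _ _),
      Ico_union_Ico_eq_Ico (hg H.zero_le) (hg H.le_succ)]

section CircleMethod

variable {A₁ A₂ : Finset ℕ} {N H : ℕ} {g : ℕ → ℤ}

lemma sum_expSum_mul_expSum_mul_fourierChar (hN : 0 < N) (y : ℤ) :
    ∑ r ∈ range N, expSum A₁ (r / N) * expSum A₂ (r / N) * (𝐞 (-(r / N) * y) : ℂ) =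
      N * repCount A₁ A₂ N y := by
  have hexpand (r : ℕ) :
      expSum A₁ (r / N) * expSum A₂ (r / N) * (𝐞 (-(r / N) * y) : ℂ) =
        ∑ x ∈ A₁ ×ˢ A₂, (𝐞 (r / N * ((x.1 + x.2 - y : ℤ) : ℝ)) : ℂ) := by
    rw [expSum, expSum, sum_mul_sum, ← sum_product', sum_mul]
    refine sum_congr rfl fun x _ ↦ ?_
    rw [← Circle.coe_mul, ← Circle.coe_mul, ← AddChar.map_add_eq_mul, ← AddChar.map_add_eq_mul]
    congr 2
    push_cast
    ring
  simp_rw [hexpand]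
  rw [sum_comm]
  simp_rw [sum_fourierChar_div_mul hN]
  rw [← sum_filter, sum_const, nsmul_eq_mul, mul_comm, repCount]

lemma sum_expSum_mul_expSum_mul_sequenceSum (hN : 0 < N) :
    ∑ r ∈ range N, expSum A₁ (r / N) * expSum A₂ (r / N) * sequenceSum g H (-(r / N)) =
      N * ∑ s ∈ range H, (repCount A₁ A₂ N (g s) : ℂ) := by
  simp_rw [sequenceSum, mul_sum]
  rw [sum_comm]
  exact sum_congr rfl fun s _ ↦ sum_expSum_mul_expSum_mul_fourierChar hN (g s)

lemma sum_expSum_mul_expSum_mul_smoothedSum (hN : 0 < N) :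
    ∑ r ∈ range N, expSum A₁ (r / N) * expSum A₂ (r / N) * smoothedSum g H (-(r / N)) =
      N * ∑ s ∈ range H, (((g (s + 1) - g s : ℤ) : ℝ)⁻¹ : ℂ) *
        ∑ y ∈ Ico (g s) (g (s + 1)), (repCount A₁ A₂ N y : ℂ) := by
  simp_rw [smoothedSum, mul_sum]
  rw [sum_comm]
  refine sum_congr rfl fun s _ ↦ ?_
  rw [sum_comm]
  refine sum_congr rfl fun y _ ↦ ?_
  rw [mul_left_comm, ← sum_expSum_mul_expSum_mul_fourierChar hN y, mul_sum]
  exact sum_congr rfl fun r _ ↦ by ring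

lemma card_mul_card_le_sum_repCount {u v : ℤ}
    (hA : ∀ x₁ ∈ A₁, ∀ x₂ ∈ A₂, (x₁ + x₂ : ℤ) ∈ Ico u v) :
    #A₁ * #A₂ ≤ ∑ y ∈ Ico u v, repCount A₁ A₂ N y := by
  rw [← card_product, card_eq_sum_card_fiberwise (f := fun x : ℕ × ℕ ↦ (x.1 + x.2 : ℤ))
    fun x hx ↦ hA x.1 (mem_product.mp hx).1 x.2 (mem_product.mp hx).2]
  refine sum_le_sum fun y _ ↦ card_le_card (monotone_filter_right _ fun x _ hx ↦ ?_)
  simp [hx]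

lemma card_mul_card_div_le_sum_repCount {Δ : ℝ} (hΔ : 0 < Δ) (hg : StrictMono g)
    (hstep : ∀ s < H, ((g (s + 1) - g s : ℤ) : ℝ) ≤ Δ)
    (hA : ∀ x₁ ∈ A₁, ∀ x₂ ∈ A₂, (x₁ + x₂ : ℤ) ∈ Ico (g 0) (g H)) :
    #A₁ * #A₂ / Δ ≤ ∑ s ∈ range H, ((g (s + 1) - g s : ℤ) : ℝ)⁻¹ *
      ∑ y ∈ Ico (g s) (g (s + 1)), (repCount A₁ A₂ N y : ℝ) := by
  have hcard : (#A₁ * #A₂ : ℝ) ≤ ∑ y ∈ Ico (g 0) (g H), (repCount A₁ A₂ N y : ℝ) := by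
    exact_mod_cast card_mul_card_le_sum_repCount hA
  calc (#A₁ * #A₂ / Δ : ℝ)
      ≤ (∑ y ∈ Ico (g 0) (g H), (repCount A₁ A₂ N y : ℝ)) / Δ := by gcongr
    _ = ∑ s ∈ range H, Δ⁻¹ * ∑ y ∈ Ico (g s) (g (s + 1)), (repCount A₁ A₂ N y : ℝ) := by
        rw [← mul_sum, sum_range_sum_Ico hg.monotone, div_eq_inv_mul]
    _ ≤ _ := by
        gcongr with s hs
        · exact_mod_cast sub_pos.mpr (hg s.lt_succ_self)
        · exact hstep s (mem_range.mp hs)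

/-- If no sum `x₁ + x₂` is a value `g s` modulo `N`, then the sequence sum contributes nothing, so
the main term coming from the smoothed sum has to be cancelled by the difference. -/
theorem mul_card_mul_card_div_le_sum_norm {Δ : ℝ} (hN : 0 < N) (hΔ : 0 < Δ) (hg : StrictMono g)
    (hstep : ∀ s < H, ((g (s + 1) - g s : ℤ) : ℝ) ≤ Δ)
    (hA : ∀ x₁ ∈ A₁, ∀ x₂ ∈ A₂, (x₁ + x₂ : ℤ) ∈ Ico (g 0) (g H))
    (hne : ∀ x₁ ∈ A₁, ∀ x₂ ∈ A₂, ∀ s < H, ¬ (N : ℤ) ∣ x₁ + x₂ - g s) :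
    N * (#A₁ * #A₂ / Δ) ≤ ∑ r ∈ range N, ‖expSum A₁ (r / N)‖ * ‖expSum A₂ (r / N)‖ *
      ‖sequenceSum g H (-(r / N)) - smoothedSum g H (-(r / N))‖ := by
  set R : ℝ := ∑ s ∈ range H, ((g (s + 1) - g s : ℤ) : ℝ)⁻¹ *
    ∑ y ∈ Ico (g s) (g (s + 1)), (repCount A₁ A₂ N y : ℝ) with hR
  have hzero (s : ℕ) (hs : s ∈ range H) : repCount A₁ A₂ N (g s) = 0 := by
    rw [repCount, card_eq_zero, filter_eq_empty_iff]
    rintro ⟨x₁, x₂⟩ hx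
    exact hne x₁ (mem_product.mp hx).1 x₂ (mem_product.mp hx).2 s (mem_range.mp hs)
  have hdiff : ∑ r ∈ range N, expSum A₁ (r / N) * expSum A₂ (r / N) *
      (sequenceSum g H (-(r / N)) - smoothedSum g H (-(r / N))) = -((N * R : ℝ) : ℂ) := by
    simp_rw [mul_sub]
    rw [sum_sub_distrib, sum_expSum_mul_expSum_mul_sequenceSum hN,
      sum_expSum_mul_expSum_mul_smoothedSum hN,
      sum_eq_zero fun s hs ↦ Nat.cast_eq_zero.mpr (hzero s hs), hR]
    push_cast
    ring
  calc N * (#A₁ * #A₂ / Δ) ≤ N * R := by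
        gcongr
        exact card_mul_card_div_le_sum_repCount hΔ hg hstep hA
    _ ≤ ‖-((N * R : ℝ) : ℂ)‖ := by
        rw [norm_neg, Complex.norm_real]
        exact Real.le_norm_self _
    _ ≤ _ := by
        rw [← hdiff]
        exact norm_sum_le_of_le _ fun r _ ↦ by rw [norm_mul, norm_mul]

end CircleMethod

/-! ### Mass of the prime exponential sums near rationals -/

lemma exists_forall_coprime_add_of_prime {b V l : ℕ} (hl : l ≠ 0) (hlV : l.Coprime V) :
    ∃ v, ∀ x, (b + V * x).Prime → l < b + V * x → (x + v).Coprime l := by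
  obtain ⟨v, -, hv⟩ := Nat.exists_mul_mod_eq_of_coprime b hlV.symm hl
  refine ⟨v, fun x hprime hlt ↦ ?_⟩
  have hmod : V * (x + v) ≡ b + V * x [MOD l] := by
    rw [mul_add, add_comm b]
    exact Nat.ModEq.add_left _ hv
  have hcop : (V * (x + v)).Coprime l :=
    hmod.gcd_eq.trans (Nat.coprime_of_lt_prime hl hlt hprime)
  exact hcop.coprime_mul_left

lemma le_add_sum_ite {e : ℝ} {B : ℕ → ℝ} (hB : ∀ i, 0 ≤ B i) {P : ℕ → Prop}
    [DecidablePred P] {i₀ I : ℕ} (hI : i₀ ≤ I) (he : e ≤ B i₀)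
    (h : ∀ i ∈ Ico i₀ I, e ≤ B (i + 1) ∨ P i) :
    e ≤ B I + ∑ i ∈ Ico i₀ I, if P i then B i else 0 := by
  induction I, hI using Nat.le_induction with
  | base => simpa using he
  | succ I hI ih =>
    have hsum : 0 ≤ ∑ i ∈ Ico i₀ I, if P i then B i else 0 :=
      sum_nonneg fun i _ ↦ by split_ifs <;> simp [hB]
    have hprev := ih fun i hi ↦ h i (Ico_subset_Ico_right I.le_succ hi)
    rw [sum_Ico_succ_top hI]
    obtain hle | hP := h I (mem_Ico.mpr ⟨hI, I.lt_succ_self⟩)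
    · have : 0 ≤ if P I then B I else 0 := by split_ifs <;> simp [hB]
      linarith
    · rw [if_pos hP]
      linarith [hB (I + 1)]

lemma sum_mul_add_sum_ite {ι κ : Type*} [DecidableEq ι] {s : Finset ι} {t : Finset κ}
    {M : κ → Finset ι} (hM : ∀ i, M i ⊆ s) (f : ι → ℝ) (β : ℝ) (γ : κ → ℝ) :
    ∑ r ∈ s, f r * (β + ∑ i ∈ t, if r ∈ M i then γ i else 0) =
      β * ∑ r ∈ s, f r + ∑ i ∈ t, γ i * ∑ r ∈ M i, f r := by
  simp_rw [mul_add, sum_add_distrib, mul_sum, mul_ite, mul_zero]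
  rw [sum_comm]
  refine congrArg₂ (· + ·) (sum_congr rfl fun r _ ↦ mul_comm _ _) (sum_congr rfl fun i _ ↦ ?_)
  rw [← sum_filter, filter_mem_eq_inter, inter_eq_right.mpr (hM i)]
  exact sum_congr rfl fun r _ ↦ mul_comm _ _

/-- The share of the frequencies near rationals with denominator at most `2 ^ ((i + 1) * c)`, each
weighted by `2⁻ⁱ`, in a dyadic decomposition: for `J = (i + 1) * c`, the factor `2 * J ^ 8` bounds
`totientRatio (2 ^ J)!`. -/
noncomputable def dyadicWeight (c i : ℕ) : ℝ := 2 * (((i + 1) * c : ℕ) : ℝ) ^ 8 / 2 ^ i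

lemma dyadicWeight_nonneg (c i : ℕ) : 0 ≤ dyadicWeight c i := by
  rw [dyadicWeight]
  positivity

lemma summable_dyadicWeight (c : ℕ) : Summable (dyadicWeight c) := by
  have hgeom : Summable fun n : ℕ ↦ (n : ℝ) ^ 8 * (1 / 2 : ℝ) ^ n :=
    summable_pow_mul_geometric_of_norm_lt_one 8 (by norm_num)
  refine (((summable_nat_add_iff 1).mpr hgeom).mul_left (4 * (c : ℝ) ^ 8)).congr fun i ↦ ?_
  rw [dyadicWeight, one_div, inv_pow, pow_succ]
  push_cast
  field_simp
  ring

section PrimeBlock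

variable {A : Finset ℕ} {N u V b Z : ℕ} {τ : ℝ} (hN : 0 < N) (hA : A ⊆ Ico u (u + N)) (hV : 0 < V)
  (hprime : ∀ x ∈ A, (b + V * x).Prime ∧ Z < b + V * x) (hZN : Z.factorial ∣ N)
include hN hA hV hprime hZN

lemma log_mul_sum_norm_expSum_sq_le {Q : ℕ} (hτ : 2 * τ * (Q ^ 2 * Z ^ 2) < 1) {M : Finset ℕ}
    (hM : M ⊆ range N) (hMQ : ∀ r ∈ M, NearRational Q τ (r / N)) :
    Real.log Z * ∑ r ∈ M, ‖expSum A (r / N)‖ ^ 2 ≤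
      totientRatio V * totientRatio Q.factorial * (N * #A) := by
  have hQ := Q.factorial_pos
  have hsieve : (∑ l ∈ sieveModuli Z (V * Q.factorial), (l.totient : ℝ)⁻¹) *
      ∑ r ∈ M, ‖expSum A (r / N)‖ ^ 2 ≤ N * #A := by
    refine sum_inv_totient_mul_sum_norm_expSum_sq_le hN hA hτ hM hMQ
      (fun l hl ↦ ?_) (fun l hl ↦ ?_) <;>
      obtain ⟨hlZ, hsq, hcop⟩ := mem_filter.mp hl <;> obtain ⟨hl1, hlZ⟩ := mem_Icc.mp hlZ
    · exact ⟨hlZ, (Nat.dvd_factorial hl1 hlZ).trans hZN, hcop.coprime_mul_left_right.symm⟩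
    · obtain ⟨v, hv⟩ := exists_forall_coprime_add_of_prime (b := b) (by omega)
        hcop.coprime_mul_right_right
      exact ⟨hsq, v, fun x hx ↦ hv x (hprime x hx).1 (hlZ.trans_lt (hprime x hx).2)⟩
  have hlog := log_le_totientRatio_mul_sum_inv_totient Z (D := V * Q.factorial) (by positivity)
  have := totientRatio_pos hV
  have := totientRatio_pos hQ
  calc _ ≤ totientRatio (V * Q.factorial) *
          (∑ l ∈ sieveModuli Z (V * Q.factorial), (l.totient : ℝ)⁻¹) *
            ∑ r ∈ M, ‖expSum A (r / N)‖ ^ 2 := by gcongr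
    _ ≤ totientRatio V * totientRatio Q.factorial *
          (∑ l ∈ sieveModuli Z (V * Q.factorial), (l.totient : ℝ)⁻¹) *
            ∑ r ∈ M, ‖expSum A (r / N)‖ ^ 2 := by
        gcongr
        exact totientRatio_mul_le hV hQ
    _ ≤ _ := by
        rw [mul_assoc]
        gcongr

lemma log_mul_sum_norm_expSum_sq_le_of_two_pow {J : ℕ} (hJ : 1 ≤ J) (hJZ : 2 ^ J ≤ Z)
    (hτ₀ : 0 ≤ τ) (hτ : 2 * τ * (Z ^ 2 * Z ^ 2) < 1) {M : Finset ℕ} (hM : M ⊆ range N)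
    (hMJ : ∀ r ∈ M, NearRational (2 ^ J) τ (r / N)) :
    Real.log Z * ∑ r ∈ M, ‖expSum A (r / N)‖ ^ 2 ≤
      totientRatio V * (2 * (J : ℝ) ^ 8) * (N * #A) := by
  have hJZ' : ((2 ^ J : ℕ) : ℝ) ≤ Z := by exact_mod_cast hJZ
  refine (log_mul_sum_norm_expSum_sq_le hN hA hV hprime hZN (hτ.trans_le' ?_) hM hMJ).trans ?_
  · gcongr
  · have := (totientRatio_pos hV).le
    gcongr
    exact totientRatio_factorial_two_pow_le hJ

open Classical in
/-- Dyadic decomposition of the weight `e` according to the size of the denominators of the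
rationals near `r / N`. -/
theorem log_mul_sum_norm_expSum_sq_mul_le {c i₀ I : ℕ} (hc : 1 ≤ c) (hI : i₀ ≤ I)
    (hZ : Z = 2 ^ (I * c)) (hτ₀ : 0 ≤ τ) (hτ : 2 * τ * (Z ^ 2 * Z ^ 2) < 1) {e : ℕ → ℝ} {B : ℝ}
    (hB : 0 ≤ B) (he : ∀ r < N, e r ≤ B / 2 ^ i₀)
    (hdich : ∀ r < N, ∀ i < I, e r ≤ B / 2 ^ (i + 1) ∨
      NearRational (2 ^ ((i + 1) * c)) τ (r / N)) :
    Real.log Z * ∑ r ∈ range N, ‖expSum A (r / N)‖ ^ 2 * e r ≤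
      N * #A * B * (Real.log Z / 2 ^ I +
        totientRatio V * ∑ i ∈ Ico i₀ I, dyadicWeight c i) := by
  set M : ℕ → Finset ℕ := fun i ↦
    (range N).filter fun r : ℕ ↦ NearRational (2 ^ ((i + 1) * c)) τ (r / N)
  have hpointwise (r : ℕ) (hr : r ∈ range N) :
      e r ≤ B / 2 ^ I + ∑ i ∈ Ico i₀ I, if r ∈ M i then B / 2 ^ i else 0 :=
    le_add_sum_ite (B := fun i ↦ B / 2 ^ i) (fun i ↦ by positivity) hI (he r (mem_range.mp hr))
      fun i hi ↦ (hdich r (mem_range.mp hr) i (mem_Ico.mp hi).2).imp_right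
        fun h ↦ mem_filter.mpr ⟨hr, h⟩
  have harc (i : ℕ) (hi : i ∈ Ico i₀ I) : Real.log Z * ∑ r ∈ M i, ‖expSum A (r / N)‖ ^ 2 ≤
      totientRatio V * (2 * (((i + 1) * c : ℕ) : ℝ) ^ 8) * (N * #A) := by
    refine log_mul_sum_norm_expSum_sq_le_of_two_pow hN hA hV hprime hZN (by nlinarith) ?_ hτ₀ hτ
      (filter_subset _ _) fun r hr ↦ (mem_filter.mp hr).2
    rw [hZ]
    exact Nat.pow_le_pow_right two_pos (Nat.mul_le_mul_right c (mem_Ico.mp hi).2)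
  calc Real.log Z * ∑ r ∈ range N, ‖expSum A (r / N)‖ ^ 2 * e r
      ≤ Real.log Z * ∑ r ∈ range N, ‖expSum A (r / N)‖ ^ 2 *
          (B / 2 ^ I + ∑ i ∈ Ico i₀ I, if r ∈ M i then B / 2 ^ i else 0) := by
        gcongr with r hr
        exact hpointwise r hr
    _ = B / 2 ^ I * Real.log Z * (N * #A) +
          ∑ i ∈ Ico i₀ I, B / 2 ^ i * (Real.log Z * ∑ r ∈ M i, ‖expSum A (r / N)‖ ^ 2) := by
        rw [sum_mul_add_sum_ite fun i ↦ filter_subset _ _, sum_norm_expSum_sq hN hA, mul_add,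
          mul_sum]
        simp_rw [mul_left_comm (Real.log Z)]
        ring
    _ ≤ B / 2 ^ I * Real.log Z * (N * #A) + ∑ i ∈ Ico i₀ I,
          B / 2 ^ i * (totientRatio V * (2 * (((i + 1) * c : ℕ) : ℝ) ^ 8) * (N * #A)) := by
        exact add_le_add_right
          (sum_le_sum fun i hi ↦ mul_le_mul_of_nonneg_left (harc i hi) (by positivity)) _
    _ = _ := by
        rw [mul_add, mul_sum, mul_sum]
        refine congrArg₂ (· + ·) (by ring) (sum_congr rfl fun i _ ↦ ?_)
        rw [dyadicWeight]
        ring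

end PrimeBlock

/-! ### The circle method on a window -/

namespace IsWindow
variable {G : ℤ[X]} {δ Δ : ℝ} {t : ℤ} {H Z c i₀ I : ℕ}

section UpperBound
variable (hwin : IsWindow G Z t H δ Δ) (hlead : 0 < G.leadingCoeff)
  (htrans : TranslationAtSmallPrimes G (2 ^ (i₀ * c))) (hweyl : WeylInverse G.natDegree c)
  (hc : 1 ≤ c) (hZ : Z = 2 ^ (I * c))
include hwin hlead htrans hweyl hc hZ

lemma norm_sub_le_or_nearRational {i : ℕ} (hi : 1 ≤ i) (hiI : i ≤ I) (x : ℝ) :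
    ‖sequenceSum (valuesFrom G t) H (-x) - smoothedSum (valuesFrom G t) H (-x)‖ ≤ 2 * H / 2 ^ i ∨
      i₀ < i ∧ NearRational (2 ^ (i * c)) (Z / (H : ℝ) ^ G.natDegree) x := by
  have hpow : ((2 : ℝ) ^ i) ^ c ≤ Z := by
    rw [hZ, ← pow_mul]
    exact_mod_cast Nat.pow_le_pow_right two_pos (Nat.mul_le_mul_right c hiI)
  have htwo : (2 : ℝ) ≤ 2 ^ i := le_self_pow₀ one_le_two (by omega)
  refine (hwin.norm_sub_le_or_exists_approx hlead htrans hweyl htwo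
    ((le_self_pow₀ (by linarith) (by omega)).trans hpow) hpow (-x)).imp_right ?_
  rintro ⟨q, a, hwq, hq, ha⟩
  replace hq : q ≤ 2 ^ (i * c) := by
    rw [← pow_mul] at hq
    exact_mod_cast hq
  refine ⟨lt_of_mul_lt_mul_right (a := c) ?_ c.zero_le, q, -a, hwq.pos, hq, ?_⟩
  · exact (Nat.pow_lt_pow_iff_right one_lt_two).mp (hwq.trans_le hq)
  · rw [← abs_neg] at ha
    convert ha using 2
    push_cast
    ring

lemma log_mul_sum_norm_expSum_sq_mul_norm_sub_le {A : Finset ℕ} {N u V b : ℕ} (hN : 0 < N)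
    (hA : A ⊆ Ico u (u + N)) (hV : 0 < V) (hprime : ∀ x ∈ A, (b + V * x).Prime ∧ Z < b + V * x)
    (hZN : Z.factorial ∣ N) (hi₀ : 1 ≤ i₀) (hI : i₀ ≤ I) :
    Real.log Z * ∑ r ∈ range N, ‖expSum A (r / N)‖ ^ 2 *
        ‖sequenceSum (valuesFrom G t) H (-(r / N)) - smoothedSum (valuesFrom G t) H (-(r / N))‖ ≤
      N * #A * (2 * H) * (Real.log Z / 2 ^ I +
        totientRatio V * ∑ i ∈ Ico i₀ I, dyadicWeight c i) := by
  have hH : (0 : ℝ) < (H : ℝ) ^ G.natDegree := pow_pos (by exact_mod_cast hwin.length_pos) _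
  have hτ : 2 * (Z / (H : ℝ) ^ G.natDegree) * (Z ^ 2 * Z ^ 2) < 1 := by
    rw [show 2 * (Z / (H : ℝ) ^ G.natDegree) * (Z ^ 2 * Z ^ 2) =
      2 * (Z : ℝ) ^ 5 / (H : ℝ) ^ G.natDegree by ring, div_lt_one hH]
    exact hwin.pow_five_lt
  have hdich {i : ℕ} := hwin.norm_sub_le_or_nearRational hlead htrans hweyl hc hZ (i := i)
  exact log_mul_sum_norm_expSum_sq_mul_le hN hA hV hprime hZN hc hI hZ (by positivity) hτ
    (by positivity) (fun r _ ↦ (hdich hi₀ hI _).resolve_right fun h ↦ h.1.ne rfl)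
    fun r _ i hi ↦ (hdich (by omega) hi _).imp_right And.right

end UpperBound
end IsWindow

lemma not_dvd_sub_of_mem_Ico {a b u v : ℤ} {N : ℕ} (ha : a ∈ Ico u v) (hb : b ∈ Ico u v)
    (hne : a ≠ b) (hN : v - u ≤ N) : ¬ (N : ℤ) ∣ a - b := by
  rw [mem_Ico] at ha hb
  refine fun hdvd ↦ hne (sub_eq_zero.mp (Int.eq_zero_of_abs_lt_dvd hdvd ?_))
  rw [abs_lt]
  omega

lemma sq_sum_mul_mul_le {ι : Type*} (s : Finset ι) (f g e : ι → ℝ) (he : ∀ i ∈ s, 0 ≤ e i) :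
    (∑ i ∈ s, f i * g i * e i) ^ 2 ≤ (∑ i ∈ s, f i ^ 2 * e i) * ∑ i ∈ s, g i ^ 2 * e i :=
  sum_sq_le_sum_mul_sum_of_sq_le_mul s (fun i hi ↦ mul_nonneg (sq_nonneg _) (he i hi))
    (fun i hi ↦ mul_nonneg (sq_nonneg _) (he i hi)) fun i _ ↦ by ring_nf; rfl

lemma mul_le_sq_of_mul_div_le {N a₁ a₂ Δ S S₁ S₂ L E : ℝ} (hN : 0 < N) (ha₁ : 0 < a₁)
    (ha₂ : 0 < a₂) (hΔ : 0 < Δ) (hL : 0 < L) (hE : 0 ≤ E) (hS₂ : 0 ≤ S₂)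
    (hlower : N * (a₁ * a₂ / Δ) ≤ S) (hS : S ^ 2 ≤ S₁ * S₂)
    (h₁ : L * S₁ ≤ N * a₁ * E) (h₂ : L * S₂ ≤ N * a₂ * E) :
    a₁ * L * (a₂ * L) ≤ (E * Δ) ^ 2 := by
  have hchain : (L * (N * (a₁ * a₂ / Δ))) ^ 2 ≤ N * a₁ * E * (N * a₂ * E) :=
    calc (L * (N * (a₁ * a₂ / Δ))) ^ 2 ≤ (L * S) ^ 2 := by gcongr
      _ = L ^ 2 * S ^ 2 := by ring
      _ ≤ L ^ 2 * (S₁ * S₂) := by gcongr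
      _ = L * S₁ * (L * S₂) := by ring
      _ ≤ _ := by gcongr
  refine le_of_mul_le_mul_left (a := N ^ 2 * a₁ * a₂ / Δ ^ 2) ?_ (by positivity)
  calc N ^ 2 * a₁ * a₂ / Δ ^ 2 * (a₁ * L * (a₂ * L)) = (L * (N * (a₁ * a₂ / Δ))) ^ 2 := by ring
    _ ≤ N * a₁ * E * (N * a₂ * E) := hchain
    _ = _ := by field_simp

namespace IsWindow
variable {G : ℤ[X]} {δ Δ : ℝ} {t : ℤ} {H Z c i₀ I : ℕ}

lemma mul_card_mul_card_div_le (hwin : IsWindow G Z t H δ Δ) {A₁ A₂ : Finset ℕ} {N : ℕ}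
    (hN : 0 < N) (hgN : valuesFrom G t H - valuesFrom G t 0 ≤ N)
    (hA : ∀ x₁ ∈ A₁, ∀ x₂ ∈ A₂, (x₁ + x₂ : ℤ) ∈ Ico (valuesFrom G t 0) (valuesFrom G t H))
    (hne : ∀ x₁ ∈ A₁, ∀ x₂ ∈ A₂, ∀ s, (x₁ + x₂ : ℤ) ≠ valuesFrom G t s) :
    N * (#A₁ * #A₂ / Δ) ≤
      ∑ r ∈ range N, ‖expSum A₁ (r / N)‖ * ‖expSum A₂ (r / N)‖ *
        ‖sequenceSum (valuesFrom G t) H (-(r / N)) -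
          smoothedSum (valuesFrom G t) H (-(r / N))‖ := by
  refine mul_card_mul_card_div_le_sum_norm hN hwin.maxStep_pos hwin.strictMono
    (fun s hs ↦ hwin.step_le s (by omega)) hA fun x₁ hx₁ x₂ hx₂ s hs ↦ ?_
  have hs' : valuesFrom G t s ∈ Ico (valuesFrom G t 0) (valuesFrom G t H) :=
    mem_Ico.mpr ⟨hwin.strictMono.monotone s.zero_le, hwin.strictMono hs⟩
  exact not_dvd_sub_of_mem_Ico (hA x₁ hx₁ x₂ hx₂) hs' (hne x₁ hx₁ x₂ hx₂ s) hgN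

theorem exists_add_eq_valuesFrom (hwin : IsWindow G Z t H δ Δ) (hlead : 0 < G.leadingCoeff)
    (htrans : TranslationAtSmallPrimes G (2 ^ (i₀ * c))) (hweyl : WeylInverse G.natDegree c)
    (hc : 1 ≤ c) (hZ : Z = 2 ^ (I * c)) (hi₀ : 1 ≤ i₀) (hI : i₀ ≤ I)
    {A₁ A₂ : Finset ℕ} {u₁ u₂ Y V b₁ b₂ : ℕ} (hV : 0 < V)
    (hA₁ : A₁ ⊆ Ico u₁ (u₁ + Y)) (hA₂ : A₂ ⊆ Ico u₂ (u₂ + Y))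
    (hprime₁ : ∀ x ∈ A₁, (b₁ + V * x).Prime ∧ Z < b₁ + V * x)
    (hprime₂ : ∀ x ∈ A₂, (b₂ + V * x).Prime ∧ Z < b₂ + V * x)
    (hlow : valuesFrom G t 0 ≤ u₁ + u₂) (hhigh : (u₁ + u₂ : ℤ) + 2 * Y ≤ valuesFrom G t H)
    {E : ℝ} (hE : E = 2 * H * (Real.log Z / 2 ^ I +
      totientRatio V * ∑ i ∈ Ico i₀ I, dyadicWeight c i))
    (hcard₁ : E * Δ < #A₁ * Real.log Z) (hcard₂ : E * Δ < #A₂ * Real.log Z) :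
    ∃ x₁ ∈ A₁, ∃ x₂ ∈ A₂, ∃ s, (x₁ + x₂ : ℤ) = valuesFrom G t s := by
  by_contra! hne
  set N : ℕ := Z.factorial * ((valuesFrom G t H - valuesFrom G t 0).toNat + Y + 1)
  have hN : 0 < N := by positivity
  have hNle : (valuesFrom G t H - valuesFrom G t 0).toNat + Y + 1 ≤ N :=
    Nat.le_mul_of_pos_left _ Z.factorial_pos
  have hsum (x₁) (hx₁ : x₁ ∈ A₁) (x₂) (hx₂ : x₂ ∈ A₂) :
      (x₁ + x₂ : ℤ) ∈ Ico (valuesFrom G t 0) (valuesFrom G t H) := by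
    have := mem_Ico.mp (hA₁ hx₁)
    have := mem_Ico.mp (hA₂ hx₂)
    rw [mem_Ico]
    omega
  have hupper {A : Finset ℕ} {u b : ℕ} (hA : A ⊆ Ico u (u + Y))
      (hprime : ∀ x ∈ A, (b + V * x).Prime ∧ Z < b + V * x) :=
    hwin.log_mul_sum_norm_expSum_sq_mul_norm_sub_le hlead htrans hweyl hc hZ hN
      (hA.trans (Ico_subset_Ico_right (by omega))) hV hprime (Dvd.intro _ rfl) hi₀ hI
  have hE₀ : 0 ≤ E := by
    have := (totientRatio_pos hV).le
    have : 0 ≤ ∑ i ∈ Ico i₀ I, dyadicWeight c i := sum_nonneg fun i _ ↦ dyadicWeight_nonneg c i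
    rw [hE]
    positivity
  have hEΔ : 0 ≤ E * Δ := mul_nonneg hE₀ hwin.maxStep_pos.le
  have hlog : 0 < Real.log Z :=
    (Real.log_natCast_nonneg Z).lt_of_ne' fun h ↦ by simp [h] at hcard₁; linarith
  refine absurd (mul_le_sq_of_mul_div_le (by exact_mod_cast hN)
    (pos_of_mul_pos_left (hEΔ.trans_lt hcard₁) hlog.le)
    (pos_of_mul_pos_left (hEΔ.trans_lt hcard₂) hlog.le) hwin.maxStep_pos hlog hE₀
    (sum_nonneg fun r _ ↦ by positivity)
    (hwin.mul_card_mul_card_div_le hN (by omega) hsum hne)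
    (sq_sum_mul_mul_le _ _ _ _ fun r _ ↦ norm_nonneg _)
    ((hupper hA₁ hprime₁).trans_eq ?_) ((hupper hA₂ hprime₂).trans_eq ?_)) (not_le.mpr ?_)
  · rw [hE, mul_assoc]
  · rw [hE, mul_assoc]
  · rw [sq]
    exact mul_lt_mul'' hcard₁ hcard₂ hEΔ hEΔ

end IsWindow

/-! ### Choice of the parameters -/

section Parameters
open Filter

lemma eventually_sum_Ico_le {f : ℕ → ℝ} (hf : Summable f) (hnonneg : ∀ i, 0 ≤ f i) {ε : ℝ}
    (hε : 0 < ε) : ∀ᶠ i₀ in atTop, ∀ I, ∑ i ∈ Ico i₀ I, f i ≤ ε := by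
  filter_upwards [(tendsto_sum_nat_add f).eventually_le_const hε] with i₀ hi₀ I
  rw [sum_Ico_eq_sum_range]
  simp_rw [add_comm i₀]
  exact (((summable_nat_add_iff i₀).mpr hf).sum_le_tsum _ fun i _ ↦ hnonneg _).trans hi₀

lemma eventually_log_two_pow_div_lt (c : ℕ) {ε : ℝ} (hε : 0 < ε) :
    ∀ᶠ I : ℕ in atTop, Real.log (2 ^ (I * c) : ℕ) / 2 ^ I < ε := by
  have hlim := (tendsto_self_mul_const_pow_of_lt_one (r := (1 / 2 : ℝ)) (by norm_num)
    (by norm_num)).const_mul (c * Real.log 2)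
  rw [mul_zero] at hlim
  filter_upwards [hlim.eventually_lt_const hε] with I hI
  refine hI.trans_eq' ?_
  rw [Nat.cast_pow, Real.log_pow, one_div, inv_pow]
  push_cast
  ring

lemma tendsto_two_pow_mul_atTop {c : ℕ} (hc : 1 ≤ c) :
    Tendsto (fun I : ℕ ↦ 2 ^ (I * c)) atTop atTop :=
  (tendsto_pow_atTop_atTop_of_one_lt one_lt_two).comp (tendsto_id.atTop_mul_const' hc)

lemma two_mul_mul_lt_of_div_le {H Δ K Y ρ v L n T R : ℝ} (hK : 0 < K) (hY : 0 < Y) (hL : 0 < L)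
    (hv : 1 ≤ v) (hT₀ : 0 ≤ T) (hR₀ : 0 ≤ R) (hHΔ : H * Δ ≤ K * Y) (hn : ρ * v * Y / L ≤ n)
    (hT : T < ρ / (4 * K)) (hR : R ≤ ρ / (4 * K)) :
    2 * H * (T + v * R) * Δ < n * L :=
  calc 2 * H * (T + v * R) * Δ = 2 * (T + v * R) * (H * Δ) := by ring
    _ ≤ 2 * (T + v * R) * (K * Y) := by gcongr
    _ < 2 * (v * (ρ / (4 * K)) + v * (ρ / (4 * K))) * (K * Y) := by
        have := hT.trans_le (le_mul_of_one_le_left (hT₀.trans hT.le) hv)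
        gcongr 2 * ?_ * _
        exact add_lt_add_of_lt_of_le this (by gcongr)
    _ = ρ * v * Y := by field_simp; ring
    _ ≤ n * L := (div_le_iff₀ hL).mp hn

lemma exists_eventually_isWindow_and_prime_blocks {k : ℕ} (hk : 2 ≤ k) :
    ∃ ρ : ℝ, 0 < ρ ∧ ∀ G : ℤ[X], G.natDegree = k → 0 < G.leadingCoeff →
      ∀ V b₁ b₂ : ℕ, b₁ < V → b₂ < V → b₁.Coprime V → b₂.Coprime V →
        ∀ᶠ Z : ℕ in atTop, ∃ (t : ℤ) (H : ℕ) (δ Δ : ℝ) (u₁ u₂ Y : ℕ), IsWindow G Z t H δ Δ ∧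
          0 < Y ∧ H * Δ ≤ 16 * 3 ^ k * Y ∧ Z < u₁ ∧ Z < u₂ ∧
          valuesFrom G t 0 ≤ u₁ + u₂ ∧ (u₁ + u₂ : ℤ) + 2 * Y ≤ valuesFrom G t H ∧
          ρ * totientRatio V * Y / Real.log Z ≤ #{x ∈ Ico u₁ (u₁ + Y) | (b₁ + V * x).Prime} ∧
          ρ * totientRatio V * Y / Real.log Z ≤ #{x ∈ Ico u₂ (u₂ + Y) | (b₂ + V * x).Prime} := by
  have hM := le_windowExponent hk
  obtain ⟨ρ, hρ, hblock⟩ := exists_prime_block_constant (M := windowExponent k) (by omega)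
  refine ⟨ρ, hρ, ?_⟩
  rintro G rfl hlead V b₁ b₂ hlt₁ hlt₂ hcop₁ hcop₂
  have hV := b₁.zero_le.trans_lt hlt₁
  filter_upwards [eventually_exists_isWindow hk hlead, hblock V b₁ hV hlt₁ hcop₁,
    hblock V b₂ hV hlt₂ hcop₂, eventually_gt_atTop 1] with Z hwindow
    ⟨u₁, hu₁, hu₁', hcard₁⟩ ⟨u₂, hu₂, hu₂', hcard₂⟩ hZ
  have hZpow : Z < Z ^ (windowExponent G.natDegree - 1) := lt_self_pow₀ hZ (by omega)
  obtain ⟨t, H, δ, Δ, hwin, hlow, hhigh, hHΔ⟩ := hwindow (u₁ + u₂)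
    (by exact_mod_cast (two_mul _).trans_le (add_le_add hu₁ hu₂))
    (by exact_mod_cast (add_le_add hu₁' hu₂').trans_eq (two_mul _).symm)
  refine ⟨t, H, δ, Δ, u₁, u₂, Z ^ (windowExponent G.natDegree - 4), hwin, by positivity, ?_,
    by omega, by omega, hlow, ?_, ?_, ?_⟩ <;> rw [Nat.cast_pow] <;> assumption

theorem exists_forall_translationAtSmallPrimes_exists_prime_prime {k : ℕ} (hk : 2 ≤ k) :
    ∃ w : ℕ, ∀ G : ℤ[X], G.natDegree = k → 0 < G.leadingCoeff → TranslationAtSmallPrimes G w →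
      ∀ V b₁ b₂ : ℕ, b₁ < V → b₂ < V → b₁.Coprime V → b₂.Coprime V → ∀ B : ℕ,
        ∃ x₁ x₂ : ℕ, (b₁ + V * x₁).Prime ∧ (b₂ + V * x₂).Prime ∧ B < b₁ + V * x₁ ∧
          B < b₂ + V * x₂ ∧ ∃ t, (x₁ + x₂ : ℤ) = G.eval t := by
  obtain ⟨C, hC⟩ := exists_weylInverse (k := k) (by omega)
  obtain ⟨c, hc, hweyl⟩ : ∃ c, 1 ≤ c ∧ WeylInverse k c :=
    ⟨max C 1, le_max_right _ _, hC.mono (le_max_left _ _)⟩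
  obtain ⟨ρ, hρ, hscale⟩ := exists_eventually_isWindow_and_prime_blocks hk
  have hε : 0 < ρ / (4 * (16 * 3 ^ k)) := by positivity
  obtain ⟨i₀, htail, hi₀⟩ := ((eventually_sum_Ico_le (summable_dyadicWeight c)
    (dyadicWeight_nonneg c) hε).and (eventually_ge_atTop 1)).exists
  refine ⟨2 ^ (i₀ * c), ?_⟩
  rintro G rfl hlead htrans V b₁ b₂ hlt₁ hlt₂ hcop₁ hcop₂ B
  have hV := b₁.zero_le.trans_lt hlt₁
  have hZtop := tendsto_two_pow_mul_atTop hc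
  obtain ⟨I, ⟨t, H, δ, Δ, u₁, u₂, Y, hwin, hY, hHΔ, hu₁, hu₂, hlow, hhigh, hcard₁, hcard₂⟩,
      hlog, hI, hBZ⟩ :=
    ((hZtop.eventually (hscale G rfl hlead V b₁ b₂ hlt₁ hlt₂ hcop₁ hcop₂)).and
      ((eventually_log_two_pow_div_lt c hε).and
      ((eventually_ge_atTop i₀).and (hZtop.eventually_ge_atTop (B + 2))))).exists
  have hlogpos : 0 < Real.log (2 ^ (I * c) : ℕ) := Real.log_pos (by exact_mod_cast by omega)
  have hbeats {n : ℕ} (hn : ρ * totientRatio V * Y / Real.log (2 ^ (I * c) : ℕ) ≤ n) :=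
    two_mul_mul_lt_of_div_le (by positivity) (by exact_mod_cast hY) hlogpos
      (one_le_totientRatio hV) (by positivity) (sum_nonneg fun i _ ↦ dyadicWeight_nonneg c i) hHΔ
      hn hlog (htail I)
  have hprime {b u : ℕ} (hu : 2 ^ (I * c) < u) :
      ∀ x ∈ {x ∈ Ico u (u + Y) | (b + V * x).Prime},
        (b + V * x).Prime ∧ 2 ^ (I * c) < b + V * x := fun x hx ↦
    ⟨(mem_filter.mp hx).2, (hu.trans_le (mem_Ico.mp (mem_filter.mp hx).1).1).trans_le
      (Nat.le_add_left_of_le (Nat.le_mul_of_pos_left x hV))⟩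
  obtain ⟨x₁, hx₁, x₂, hx₂, s, hs⟩ := hwin.exists_add_eq_valuesFrom hlead htrans hweyl hc rfl hi₀
    hI hV (filter_subset _ _) (filter_subset _ _) (hprime hu₁) (hprime hu₂) hlow hhigh rfl
    (hbeats hcard₁) (hbeats hcard₂)
  have hB : B < 2 ^ (I * c) := by omega
  exact ⟨x₁, x₂, (hprime hu₁ x₁ hx₁).1, (hprime hu₂ x₂ hx₂).1, hB.trans (hprime hu₁ x₁ hx₁).2,
    hB.trans (hprime hu₂ x₂ hx₂).2, t + s, hs⟩

end Parameters

/-! ### Reduction to the rescaled equation -/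

section Reduction
variable {m : ℕ} {s₁ s₂ n₀ : ℤ} {F : ℤ[X]}

theorem exists_prime_add_prime_eq_eval (hm : 0 < m) (hmeven : Even m)
    (hs₁ : IsCoprime s₁ (m : ℤ)) (hs₂ : IsCoprime s₂ (m : ℤ)) (hdeg : 2 ≤ F.natDegree)
    (hlead : 0 < F.leadingCoeff) (hcong : F.eval n₀ ≡ s₁ + s₂ [ZMOD m])
    (hderiv : 0 < F.derivative.eval n₀) (B : ℕ) :
    ∃ p₁ p₂ : ℕ, p₁.Prime ∧ p₂.Prime ∧ B < p₁ ∧ B < p₂ ∧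
      (p₁ : ℤ) ≡ s₁ [ZMOD m] ∧ (p₂ : ℤ) ≡ s₂ [ZMOD m] ∧ ∃ n : ℤ, (p₁ : ℤ) + p₂ = F.eval n := by
  obtain ⟨w, hw⟩ := exists_forall_translationAtSmallPrimes_exists_prime_prime hdeg
  obtain ⟨V, b₁, b₂, G, hG⟩ :=
    exists_isWTrick hm hmeven hs₁ hs₂ (by omega) hlead hcong hderiv w
  obtain ⟨x₁, x₂, hp₁, hp₂, hB₁, hB₂, t, ht⟩ :=
    hw G hG.natDegree_eq hG.leadingCoeff_pos hG.translation V b₁ b₂ hG.lt_left hG.lt_right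
      hG.coprime_left hG.coprime_right B
  obtain ⟨n, hn⟩ := hG.exists_eval_eq t
  refine ⟨_, _, hp₁, hp₂, hB₁, hB₂, hG.modEq_left x₁, hG.modEq_right x₂, n, ?_⟩
  rw [← hn, ← ht]
  push_cast
  ring

open Filter in
lemma exists_derivative_eval_natCast_pos (hdeg : 0 < F.natDegree) (hlead : 0 < F.leadingCoeff) :
    ∃ t : ℕ, 0 < F.derivative.eval (t : ℤ) := by
  have hcoeff : 0 < F.derivative.coeff (F.natDegree - 1) := by
    rw [coeff_derivative, Nat.sub_add_cancel hdeg]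
    exact mul_pos hlead (by positivity)
  obtain ⟨t, ⟨hle, -⟩, ht⟩ := ((eventually_eval_natCast_bounds (natDegree_derivative_le F)
    hcoeff).and (eventually_gt_atTop 0)).exists
  refine ⟨t, ?_⟩
  have : (0 : ℝ) < F.derivative.coeff (F.natDegree - 1) / 2 * (t : ℝ) ^ (F.natDegree - 1) := by
    positivity
  exact_mod_cast this.trans_le hle

lemma exists_comp_mul_sq_add (hm : 0 < m) (hdeg : 0 < F.natDegree) (hlead : 0 < F.leadingCoeff)
    (n₀ : ℤ) :
    ∃ F' : ℤ[X], 2 ≤ F'.natDegree ∧ 0 < F'.leadingCoeff ∧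
      ∀ t, F'.eval t = F.eval (m * t ^ 2 + n₀) := by
  have hm' : (m : ℤ) ≠ 0 := by exact_mod_cast hm.ne'
  have hdegQ : (C (m : ℤ) * X ^ 2 + C n₀).natDegree = 2 := by
    rw [natDegree_add_C, natDegree_C_mul_X_pow 2 _ hm']
  have hleadQ : (C (m : ℤ) * X ^ 2 + C n₀).leadingCoeff = (m : ℤ) := by
    rw [leadingCoeff, hdegQ, coeff_add, coeff_C_mul_X_pow, if_pos rfl,
      coeff_C_of_ne_zero two_ne_zero, add_zero]
  refine ⟨F.comp (C (m : ℤ) * X ^ 2 + C n₀), ?_, ?_, fun t ↦ by simp [eval_comp]⟩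
  · rw [natDegree_comp, hdegQ]
    omega
  · rw [leadingCoeff_comp (by omega), hleadQ]
    positivity

end Reduction

/-- Let `m` be an even positive integer, `s₁, s₂` integers coprime to `m`, and `F ∈ ℤ[x]` a
polynomial of positive degree with positive leading coefficient which takes some even value
congruent to `s₁ + s₂ (mod m)`. Then there are infinitely many pairs of primes `(p₁, p₂)`
with `p₁ ≡ s₁`, `p₂ ≡ s₂ (mod m)` whose sum is a value of `F`. -/
theorem infinitely_many_prime_pairs_summing_to_polynomial_value
    (m : ℕ) (hm : 0 < m) (hmeven : Even m) (s₁ s₂ : ℤ)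
    (hs₁ : IsCoprime s₁ (m : ℤ)) (hs₂ : IsCoprime s₂ (m : ℤ))
    (F : Polynomial ℤ) (hdeg : 0 < F.natDegree) (hlead : 0 < F.leadingCoeff)
    (n₀ : ℤ) (h₀even : Even (F.eval n₀)) (h₀cong : F.eval n₀ ≡ s₁ + s₂ [ZMOD (m : ℤ)]) :
    ∀ M : ℕ, ∃ p₁ p₂ : ℕ, p₁.Prime ∧ p₂.Prime ∧ M < p₁ ∧ M < p₂ ∧
      (p₁ : ℤ) ≡ s₁ [ZMOD (m : ℤ)] ∧ (p₂ : ℤ) ≡ s₂ [ZMOD (m : ℤ)] ∧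
      ∃ n : ℤ, (p₁ : ℤ) + (p₂ : ℤ) = F.eval n := by
  intro M
  obtain ⟨F', hdeg', hlead', heval⟩ := exists_comp_mul_sq_add hm hdeg hlead n₀
  obtain ⟨t, hderiv⟩ := exists_derivative_eval_natCast_pos (by omega) hlead'
  have hcong : F'.eval (t : ℤ) ≡ s₁ + s₂ [ZMOD m] := by
    rw [heval]
    have hdvd : (m : ℤ) ∣ m * (t : ℤ) ^ 2 + n₀ - n₀ := ⟨t ^ 2, by ring⟩
    exact (Int.modEq_iff_dvd.mpr (hdvd.trans (sub_dvd_eval_sub _ _ F))).symm.trans h₀cong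
  obtain ⟨p₁, p₂, hp₁, hp₂, hM₁, hM₂, hmod₁, hmod₂, n, hn⟩ :=
    exists_prime_add_prime_eq_eval hm hmeven hs₁ hs₂ hdeg' hlead' hcong hderiv M
  exact ⟨p₁, p₂, hp₁, hp₂, hM₁, hM₂, hmod₁, hmod₂, _, hn.trans (heval n)⟩
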